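/- arXiv:2602.23151 — 3 statements merged into one kernel-verified Lean document; each statement's English description precedes it below -/
import Mathlib

section
/- Fix an integer L ≥ 1. Suppose f, g : ℝ^d → ℝ satisfy parts (A1) and (A2) of Assumption A (with constants c_f, c_g ≥ 1, r₀ > 0). Then there exist constants c⁻ ≥ 1 (sufficiently large), c⁺ ∈ (0,1] (sufficiently small) and C ≥ 1, depending only on c_f, c_g and L, such that: whenever R ≥ c⁻·√(max(1, (log λ)/d)) and R√(d/λ) ≤ min(r₀, c⁺), there exist real numbers b₁, …, b_{L−1} (determined only by d and the tensors ∇^ℓ f(0), 3 ≤ ℓ ≤ 2L+1, and ∇^ℓ(log g)(0), 1 ≤ ℓ ≤ 2L−1, and not explicitly on λ) with |b_k| ≤ C·d^{k+1} for each k, such that I_in(λ) > 0 and |log I_in(λ) − Σ_{k=1}^{L−1} b_k λ^{−k}| ≤ C·(R²d)^{L+1}/λ^L. (When L = 1 the sum is empty.) -/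
open MeasureTheory Real

noncomputable section

namespace LapL

abbrev E (d : ℕ) := EuclideanSpace ℝ (Fin d)
abbrev P (d : ℕ) := MvPolynomial (Fin d) ℝ

/-- Evaluation of a polynomial at a point of Euclidean space. -/
def ev {d : ℕ} (z : E d) : P d →+* ℝ := MvPolynomial.eval (fun i => z i)

def gradIn {d : ℕ} (p q : P d) : P d :=
  ∑ i, MvPolynomial.pderiv i p * MvPolynomial.pderiv i q

def lap {d : ℕ} (p : P d) : P d := ∑ i, MvPolynomial.pderiv i (MvPolynomial.pderiv i p)

/-- Ornstein–Uhlenbeck operator `x·∇u - Δu/d`. -/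
def ou {d : ℕ} (u : P d) : P d :=
  (∑ i, MvPolynomial.X i * MvPolynomial.pderiv i u) - MvPolynomial.C (1 / (d : ℝ)) * lap u

lemma markov (m : ℕ) : ∃ K : ℝ, 0 ≤ K ∧ ∀ q : Polynomial ℝ, q.natDegree ≤ m → ∀ B : ℝ,
    (∀ t : ℝ, |t| ≤ 1 → |q.eval t| ≤ B) → |q.derivative.eval 0| ≤ K * B := by
  classical
  set v : ℕ → ℝ := fun i => (i : ℝ) / (m + 1) with hv
  set s := Finset.range (m + 1) with hs
  refine ⟨∑ i ∈ s, |(Polynomial.derivative (Lagrange.basis s v i)).eval 0|,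
    Finset.sum_nonneg fun _ _ => abs_nonneg _, ?_⟩
  intro q hq B hB
  have hinj : Set.InjOn v s := by
    intro a _ b _ hab
    simp only [hv] at hab
    have : (m : ℝ) + 1 ≠ 0 := by positivity
    field_simp at hab
    exact_mod_cast hab
  have hdeg : q.degree < s.card := by
    rw [hs, Finset.card_range]
    refine lt_of_le_of_lt Polynomial.degree_le_natDegree ?_
    exact_mod_cast Nat.lt_succ_of_le hq
  have h1 := Lagrange.eq_interpolate hinj hdeg
  have h2 : q.derivative.eval 0 =
      ∑ i ∈ s, q.eval (v i) * (Polynomial.derivative (Lagrange.basis s v i)).eval 0 := by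
    conv_lhs => rw [h1, Lagrange.interpolate_apply]
    simp [Polynomial.derivative_sum, Polynomial.eval_finsetSum]
  rw [h2, Finset.sum_mul]
  refine (Finset.abs_sum_le_sum_abs _ _).trans (Finset.sum_le_sum ?_)
  intro i hi
  rw [abs_mul, mul_comm]
  gcongr
  apply hB
  simp only [hv]
  have hi' : (i : ℝ) ≤ m + 1 := by
    have := Finset.mem_range.1 hi
    exact_mod_cast this.le
  rw [abs_of_nonneg (by positivity), div_le_one (by positivity)]
  exact hi'

/-- homogeneous of degree `m` and bounded by `C‖z‖^m`. -/
def Hom {d : ℕ} (m : ℕ) (C : ℝ) (p : P d) : Prop :=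
  p.IsHomogeneous m ∧ ∀ z : E d, |ev z p| ≤ C * ‖z‖ ^ m

def lineP {d : ℕ} (z w : E d) : P d →ₐ[ℝ] Polynomial ℝ :=
  MvPolynomial.aeval (fun i => Polynomial.C (w i) * Polynomial.X + Polynomial.C (z i))

lemma lineP_eval {d : ℕ} (z w : E d) (p : P d) (t : ℝ) :
    (lineP z w p).eval t = ev (z + t • w) p := by
  unfold lineP ev
  induction p using MvPolynomial.induction_on with
  | C a => simp
  | add p q hp hq => simp [hp, hq]
  | mul_X p i hp => 
    simp only [map_mul, Polynomial.eval_mul, hp]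
    simp; left; ring

lemma lineP_deriv {d : ℕ} (z w : E d) (p : P d) :
    (lineP z w p).derivative = ∑ i, Polynomial.C (w i) * lineP z w (MvPolynomial.pderiv i p) := by
  classical
  unfold lineP
  induction p using MvPolynomial.induction_on with
  | C a => simp
  | add p q hp hq => simp [hp, hq, mul_add, Finset.sum_add_distrib]
  | mul_X p i hp => 
    simp only [map_mul, Polynomial.derivative_mul, hp, MvPolynomial.pderiv_mul, map_add,
      mul_add, Finset.sum_add_distrib, Finset.sum_mul]
    congr 1
    · refine Finset.sum_congr rfl fun _ _ => by ring
    · simp [MvPolynomial.pderiv_X, Pi.single_apply, Finset.sum_ite_eq, apply_ite]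
      ring

lemma lineP_natDegree {d : ℕ} (z w : E d) (p : P d) (m : ℕ) (hp : p.totalDegree ≤ m) :
    (lineP z w p).natDegree ≤ m := by
  have := MvPolynomial.aeval_natDegree_le (n := 1) p hp
    (fun i => Polynomial.C (w i) * Polynomial.X + Polynomial.C (z i))
    (fun i => Polynomial.natDegree_linear_le)
  rwa [mul_one] at this

lemma ev_continuous {d : ℕ} (p : P d) : Continuous fun z : E d => ev z p := by
  unfold ev
  exact (MvPolynomial.continuous_eval p).comp (by fun_prop)

/-- gradient bound, directional form -/
lemma dir_bound (m : ℕ) : ∃ K : ℝ, 0 ≤ K ∧ ∀ (d : ℕ) (C : ℝ) (p : P d), Hom (m + 1) C p →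
    ∀ z w : E d, |∑ i, w i * ev z (MvPolynomial.pderiv i p)| ≤ K * C * ‖z‖ ^ m * ‖w‖ := by
  obtain ⟨K, hK, hM⟩ := markov (m + 1)
  refine ⟨K * 2 ^ (m + 1), by positivity, ?_⟩
  intro d C p hp z w
  -- nonzero z, norm ≤ 1 
  have key : ∀ z : E d, z ≠ 0 → ∀ w : E d, ‖w‖ = 1 →
      |∑ i, w i * ev z (MvPolynomial.pderiv i p)| ≤ K * 2 ^ (m + 1) * C * ‖z‖ ^ m := by
    intro z hz w hw
    have hz' : 0 < ‖z‖ := norm_pos_iff.2 hz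
    have hC : 0 ≤ C := by
      have := (abs_nonneg _).trans (hp.2 z)
      exact nonneg_of_mul_nonneg_left this (by positivity)
    have h1 := hM (lineP z (‖z‖ • w) p) (lineP_natDegree _ _ _ _ hp.1.totalDegree_le)
      (C * (2 * ‖z‖) ^ (m + 1)) (by
        intro t ht
        rw [lineP_eval]
        refine (hp.2 _).trans ?_
        gcongr
        refine (norm_add_le _ _).trans ?_
        rw [norm_smul, norm_smul, hw]
        simp only [Real.norm_eq_abs, abs_norm]
        nlinarith)
    rw [lineP_deriv] at h1
    simp only [Polynomial.eval_finsetSum, Polynomial.eval_mul, Polynomial.eval_C, lineP_eval,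
      zero_smul, add_zero, PiLp.smul_apply, smul_eq_mul, mul_assoc] at h1
    rw [← Finset.mul_sum, abs_mul, abs_of_pos hz'] at h1
    have h2 : K * (C * (2 * ‖z‖) ^ (m + 1)) = ‖z‖ * (K * 2 ^ (m + 1) * C * ‖z‖ ^ m) := by
      rw [mul_pow, pow_succ ‖z‖]; ring
    rw [h2] at h1
    exact le_of_mul_le_mul_left h1 hz'
  rcases eq_or_ne w 0 with rfl | hw
  · simp
  have hw' : 0 < ‖w‖ := norm_pos_iff.2 hw
  have key2 : ∀ z : E d, z ≠ 0 → 
      |∑ i, w i * ev z (MvPolynomial.pderiv i p)| ≤ K * 2 ^ (m + 1) * C * ‖z‖ ^ m * ‖w‖ := by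
    intro z hz
    have := key z hz (‖w‖⁻¹ • w) (by rw [norm_smul, norm_inv, norm_norm]; field_simp)
    simp only [PiLp.smul_apply, smul_eq_mul, mul_assoc] at this
    rw [← Finset.mul_sum, abs_mul, abs_of_pos (inv_pos.2 hw'), inv_mul_le_iff₀ hw'] at this
    refine this.trans (le_of_eq (by ring))
  rcases eq_or_ne z 0 with rfl | hz
  · -- closure
    have : Nontrivial (E d) := ⟨⟨w, 0, hw⟩⟩
    have hcl : (0 : E d) ∈ closure ({0}ᶜ : Set (E d)) := by
      rw [closure_compl_singleton]; trivial
    have hclosed : IsClosed {z : E d | |∑ i, w i * ev z (MvPolynomial.pderiv i p)| ≤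
        K * 2 ^ (m + 1) * C * ‖z‖ ^ m * ‖w‖} := by
      apply isClosed_le
      · exact (continuous_finsetSum _ fun i _ => continuous_const.mul (ev_continuous _)).abs
      · fun_prop
    exact hclosed.closure_subset_iff.2 (fun z hz => key2 z hz) hcl
  · exact key2 z hz

lemma Hom.mono {d m : ℕ} {C C' : ℝ} {p : P d} (h : Hom m C p) (hC : C ≤ C') : Hom m C' p :=
  ⟨h.1, fun z => (h.2 z).trans (by gcongr)⟩

lemma Hom.add {d m : ℕ} {C C' : ℝ} {p q : P d} (h : Hom m C p) (h' : Hom m C' q) :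
    Hom m (C + C') (p + q) :=
  ⟨h.1.add h'.1, fun z => by
    rw [map_add, add_mul]; exact (abs_add_le _ _).trans (add_le_add (h.2 z) (h'.2 z))⟩

lemma ev_C {d : ℕ} (z : E d) (a : ℝ) : ev z (MvPolynomial.C a) = a := by simp [ev]

lemma ev_X {d : ℕ} (z : E d) (i : Fin d) : ev z (MvPolynomial.X i) = z i := by simp [ev]

lemma Hom.smul {d m : ℕ} {C : ℝ} {p : P d} (h : Hom m C p) (a : ℝ) :
    Hom m (|a| * C) (MvPolynomial.C a * p) :=
  ⟨by simpa using (MvPolynomial.isHomogeneous_C _ a).mul h.1, fun z => by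
    rw [map_mul, ev_C, abs_mul, mul_assoc]; exact mul_le_mul_of_nonneg_left (h.2 z) (abs_nonneg _)⟩

lemma Hom.zero {d m : ℕ} {C : ℝ} (hC : 0 ≤ C) : Hom m C (0 : P d) :=
  ⟨MvPolynomial.isHomogeneous_zero _ _ _, fun z => by rw [map_zero, abs_zero]; positivity⟩

lemma Hom.pderiv {m : ℕ} (C : ℝ) : ∃ K : ℝ, 0 ≤ K ∧ ∀ (d : ℕ) (p : P d), Hom (m + 1) C p →
    ∀ i, Hom m K (MvPolynomial.pderiv i p) := by
  obtain ⟨K, hK, h⟩ := dir_bound m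
  refine ⟨K * |C|, by positivity, fun d p hp i => ⟨by simpa using hp.1.pderiv (i := i), fun z => ?_⟩⟩
  have := h d _ p (hp.mono (le_abs_self C)) z (EuclideanSpace.single i 1)
  simpa [PiLp.single_apply] using this

lemma grad_norm_bound {m : ℕ} (C : ℝ) : ∃ K : ℝ, 0 ≤ K ∧ ∀ (d : ℕ) (p : P d), Hom (m + 1) C p →
    ∀ z, √(∑ i, (ev z (MvPolynomial.pderiv i p)) ^ 2) ≤ K * ‖z‖ ^ m := by
  obtain ⟨K, hK, h⟩ := dir_bound m
  refine ⟨K * |C|, by positivity, fun d p hp z => ?_⟩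
  have := h d _ p (hp.mono (le_abs_self C)) z (WithLp.toLp 2 fun i => ev z (MvPolynomial.pderiv i p))
  rw [EuclideanSpace.norm_eq (WithLp.toLp 2 fun i => ev z (MvPolynomial.pderiv i p))] at this
  simp only [Real.norm_eq_abs, sq_abs, ← sq] at this
  set S := ∑ i, (ev z (MvPolynomial.pderiv i p)) ^ 2 with hS
  have hS0 : 0 ≤ S := Finset.sum_nonneg fun _ _ => sq_nonneg _
  rw [abs_of_nonneg hS0] at this
  rcases hS0.eq_or_lt with h0 | h0
  · rw [← h0, Real.sqrt_zero]; positivity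
  · have h1 : 0 < √S := Real.sqrt_pos.2 h0
    have h2 : √S * √S = S := Real.mul_self_sqrt hS0
    refine le_of_mul_le_mul_right ?_ h1
    rw [h2]; exact this

lemma Hom.gradIn {a b : ℕ} (C C' : ℝ) : ∃ K : ℝ, 0 ≤ K ∧ ∀ (d : ℕ) (p q : P d),
    Hom (a + 1) C p → Hom (b + 1) C' q → Hom (a + b) K (gradIn p q) := by
  obtain ⟨K, hK, h⟩ := grad_norm_bound (m := a) C
  obtain ⟨K', hK', h'⟩ := grad_norm_bound (m := b) C'
  refine ⟨K * K', by positivity, fun d p q hp hq => ⟨?_, fun z => ?_⟩⟩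
  · refine MvPolynomial.IsHomogeneous.sum _ _ _ fun i _ => ?_
    have h1 := (hp.1.pderiv (i := i)).mul (hq.1.pderiv (i := i))
    simpa using h1
  · unfold LapL.gradIn
    rw [map_sum]
    simp only [map_mul]
    have h1 := h d p hp z
    have h2 := h' d q hq z
    have h3 : |∑ i, ev z (MvPolynomial.pderiv i p) * ev z (MvPolynomial.pderiv i q)| ≤
        √(∑ i, (ev z (MvPolynomial.pderiv i p)) ^ 2) * √(∑ i, (ev z (MvPolynomial.pderiv i q)) ^ 2) := by
      rw [← Real.sqrt_mul (Finset.sum_nonneg fun _ _ => sq_nonneg _)]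
      apply Real.abs_le_sqrt
      exact Finset.sum_mul_sq_le_sq_mul_sq _ _ _
    refine h3.trans ((mul_le_mul h1 h2 (Real.sqrt_nonneg _) (by positivity)).trans (le_of_eq ?_))
    rw [pow_add]; ring

lemma Hom.lap {m : ℕ} (C : ℝ) : ∃ K : ℝ, 0 ≤ K ∧ ∀ (d : ℕ), 0 < d → ∀ (p : P d),
    Hom (m + 2) C p → Hom m K (MvPolynomial.C (1 / (d : ℝ)) * lap p) := by
  obtain ⟨K, hK, h⟩ := Hom.pderiv (m := m + 1) C
  obtain ⟨K', hK', h'⟩ := Hom.pderiv (m := m) K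
  refine ⟨K', hK', fun d hd p hp => ⟨?_, fun z => ?_⟩⟩
  · have : (LapL.lap p).IsHomogeneous m :=
      MvPolynomial.IsHomogeneous.sum _ _ _ fun i _ => (h' d _ (h d p hp i) i).1
    simpa using (MvPolynomial.isHomogeneous_C _ (1 / (d : ℝ))).mul this
  · rw [map_mul, ev_C, LapL.lap, map_sum, abs_mul]
    have h1 : |∑ i, ev z (MvPolynomial.pderiv i (MvPolynomial.pderiv i p))| ≤
        d * (K' * ‖z‖ ^ m) := by
      refine (Finset.abs_sum_le_sum_abs _ _).trans ?_
      refine (Finset.sum_le_sum fun i _ => (h' d _ (h d p hp i) i).2 z).trans ?_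
      simp
    have hd' : (0 : ℝ) < d := by exact_mod_cast hd
    rw [abs_of_pos (by positivity), one_div, inv_mul_le_iff₀ hd']
    exact h1

end LapL

namespace LapL

/-- polynomials of degree at most `M`, parity of `M`, with bounded homogeneous parts -/
def Nice {d : ℕ} (M : ℕ) (C : ℝ) (p : P d) : Prop :=
  ∃ q : ℕ → P d, (∀ m, Hom m C (q m)) ∧ (∀ m, q m ≠ 0 → m ≤ M ∧ Even (m + M)) ∧
    p = ∑ m ∈ Finset.range (M + 1), q m

lemma Nice.mono {d M : ℕ} {C C' : ℝ} {p : P d} (h : Nice M C p) (hC : C ≤ C') : Nice M C' p := by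
  obtain ⟨q, h1, h2, h3⟩ := h
  exact ⟨q, fun m => (h1 m).mono hC, h2, h3⟩

lemma Nice.up {d M N : ℕ} {C : ℝ} {p : P d} (h : Nice M C p) (hN : M ≤ N) (hp : Even (M + N)) :
    Nice N C p := by
  obtain ⟨q, h1, h2, h3⟩ := h
  refine ⟨q, h1, fun m hm => ⟨(h2 m hm).1.trans hN, ?_⟩, ?_⟩
  · have := (h2 m hm).2
    rw [Nat.even_iff] at *; omega
  · rw [h3]
    refine Finset.sum_subset (by intro x; simp; omega) ?_
    intro m _ hm
    by_contra h
    have := (h2 m h).1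
    simp at hm; omega

lemma Hom.nice {d M : ℕ} {C : ℝ} {p : P d} (hC : 0 ≤ C) (h : Hom M C p) : Nice M C p := by
  classical
  refine ⟨fun m => if m = M then p else 0, fun m => ?_, fun m hm => ?_, ?_⟩
  · by_cases hm : m = M
    · subst hm; simpa using h
    · simpa [hm] using Hom.zero hC
  · by_cases hm' : m = M
    · subst hm'; simp
    · simp [hm'] at hm
  · simp

lemma Nice.zero {d M : ℕ} {C : ℝ} (hC : 0 ≤ C) : Nice M C (0 : P d) :=
  ⟨fun _ => 0, fun _ => Hom.zero hC, fun m h => by simp at h, by simp⟩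

lemma Nice.add {d M : ℕ} {C C' : ℝ} {p p' : P d} (h : Nice M C p) (h' : Nice M C' p') :
    Nice M (C + C') (p + p') := by
  obtain ⟨q, h1, h2, h3⟩ := h
  obtain ⟨q', h1', h2', h3'⟩ := h'
  refine ⟨fun m => q m + q' m, fun m => (h1 m).add (h1' m), fun m hm => ?_, ?_⟩
  · by_contra hc
    have a := not_imp_comm.1 (h2 m) hc
    have b := not_imp_comm.1 (h2' m) hc
    exact hm (by simp [a, b])
  · rw [h3, h3', Finset.sum_add_distrib]

lemma Nice.smul {d M : ℕ} {C : ℝ} {p : P d} (h : Nice M C p) (a : ℝ) :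
    Nice M (|a| * C) (MvPolynomial.C a * p) := by
  obtain ⟨q, h1, h2, h3⟩ := h
  refine ⟨fun m => MvPolynomial.C a * q m, fun m => (h1 m).smul a, fun m hm => h2 m ?_, ?_⟩
  · exact right_ne_zero_of_mul hm
  · rw [h3, Finset.mul_sum]

lemma Nice.sum {d M : ℕ} {ι : Type*} (s : Finset ι) {C : ι → ℝ} {p : ι → P d}
    (h : ∀ i ∈ s, Nice M (C i) (p i)) : Nice M (∑ i ∈ s, C i) (∑ i ∈ s, p i) := by
  classical
  induction s using Finset.induction_on with
  | empty => simpa using Nice.zero le_rfl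
  | insert a s ha ih =>
    rw [Finset.sum_insert ha, Finset.sum_insert ha]
    exact (h a (Finset.mem_insert_self _ _)).add
      (ih fun i hi => h i (Finset.mem_insert_of_mem hi))

lemma gradIn_sum {d : ℕ} {ι κ : Type*} (s : Finset ι) (t : Finset κ) (p : ι → P d) (q : κ → P d) :
    gradIn (∑ i ∈ s, p i) (∑ j ∈ t, q j) = ∑ i ∈ s, ∑ j ∈ t, gradIn (p i) (q j) := by
  unfold gradIn
  simp only [map_sum, Finset.sum_mul_sum]
  rw [Finset.sum_comm]
  refine Finset.sum_congr rfl fun i _ => ?_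
  rw [Finset.sum_comm]

lemma gradIn_hom_zero_left {d : ℕ} {C : ℝ} (p q : P d) (hp : Hom 0 C p) : gradIn p q = 0 := by
  have : p = MvPolynomial.C (MvPolynomial.coeff 0 p) := by
    have := hp.1
    rwa [← MvPolynomial.totalDegree_zero_iff_isHomogeneous, 
      MvPolynomial.totalDegree_eq_zero_iff_eq_C] at this
  rw [this]; simp [gradIn]

lemma gradIn_comm {d : ℕ} (p q : P d) : gradIn p q = gradIn q p := by
  unfold gradIn; exact Finset.sum_congr rfl fun _ _ => mul_comm _ _

lemma gradIn_zero {d : ℕ} (p : P d) : gradIn p 0 = 0 := by simp [gradIn]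

lemma Nice.gradIn (A B : ℕ) (C C' : ℝ) : ∃ K : ℝ, 0 ≤ K ∧ ∀ (d : ℕ) (p q : P d),
    Nice (A + 1) C p → Nice (B + 1) C' q → Nice (A + B) K (gradIn p q) := by
  have h : ∀ a b : ℕ, ∃ K : ℝ, 0 ≤ K ∧ ∀ (d : ℕ) (p q : P d),
    Hom (a + 1) C p → Hom (b + 1) C' q → Hom (a + b) K (LapL.gradIn p q) :=
      fun a b => Hom.gradIn C C'
  choose K hK hh using h
  refine ⟨∑ a ∈ Finset.range (A + 1 + 1), ∑ b ∈ Finset.range (B + 1 + 1), K (a - 1) (b - 1),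
    Finset.sum_nonneg fun _ _ => Finset.sum_nonneg fun _ _ => hK _ _, ?_⟩
  intro d p q hp hq
  obtain ⟨p', h1, h2, h3⟩ := hp
  obtain ⟨q', h1', h2', h3'⟩ := hq
  rw [h3, h3', gradIn_sum]
  refine Nice.sum _ fun a ha => Nice.sum _ fun b hb => ?_
  rcases Nat.eq_zero_or_pos a with rfl | ha0
  · rw [gradIn_hom_zero_left _ _ (h1 0)]; exact Nice.zero (hK _ _)
  rcases Nat.eq_zero_or_pos b with rfl | hb0
  · rw [gradIn_comm, gradIn_hom_zero_left _ _ (h1' 0)]; exact Nice.zero (hK _ _)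
  by_cases hpa : p' a = 0
  · rw [hpa, gradIn_comm, gradIn_zero]; exact Nice.zero (hK _ _)
  by_cases hqb : q' b = 0
  · rw [hqb, gradIn_zero]; exact Nice.zero (hK _ _)
  obtain ⟨a, rfl⟩ : ∃ a', a = a' + 1 := ⟨a - 1, by omega⟩
  obtain ⟨b, rfl⟩ : ∃ a', b = a' + 1 := ⟨b - 1, by omega⟩
  have e1 := h2 _ hpa
  have e2 := h2' _ hqb
  refine (Hom.nice (hK _ _) (hh a b d _ _ (h1 _) (h1' _))).up ?_ ?_
  · omega
  · have := e1.2; have := e2.2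
    rw [Nat.even_iff] at *; omega

lemma lap_C_mul {d : ℕ} (a : ℝ) (p : P d) : lap (MvPolynomial.C a * p) = MvPolynomial.C a * lap p := by
  simp [lap, Finset.mul_sum]

lemma lap_add {d : ℕ} (p q : P d) : lap (p + q) = lap p + lap q := by
  simp [lap, Finset.sum_add_distrib]

lemma ou_add {d : ℕ} (p q : P d) : ou (p + q) = ou p + ou q := by
  simp [ou, lap_add, mul_add, Finset.sum_add_distrib]; ring

lemma ou_zero {d : ℕ} : ou (0 : P d) = 0 := by
  simp [ou, lap]

lemma ou_sum {d : ℕ} {ι : Type*} (s : Finset ι) (p : ι → P d) :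
    ou (∑ i ∈ s, p i) = ∑ i ∈ s, ou (p i) := by
  classical
  induction s using Finset.induction_on with
  | empty => simp [ou_zero]
  | insert a s ha ih => rw [Finset.sum_insert ha, Finset.sum_insert ha, ou_add, ih]

lemma ou_C_mul {d : ℕ} (a : ℝ) (p : P d) : ou (MvPolynomial.C a * p) = MvPolynomial.C a * ou p := by
  unfold ou
  rw [lap_C_mul, mul_sub, Finset.mul_sum]
  congr 1
  · refine Finset.sum_congr rfl fun i _ => ?_
    rw [MvPolynomial.pderiv_C_mul]; ring
  · ring

lemma ou_hom {d m : ℕ} {p : P d} (hp : p.IsHomogeneous m) :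
    ou p = MvPolynomial.C (m : ℝ) * p - MvPolynomial.C (1 / (d : ℝ)) * lap p := by
  unfold ou
  rw [hp.sum_X_mul_pderiv, nsmul_eq_mul]; simp

/-- solving the OU equation for homogeneous right-hand sides -/
lemma solve_hom (m : ℕ) : ∀ C : ℝ, ∃ K : ℝ, 0 ≤ K ∧ ∀ (d : ℕ), 0 < d → ∀ (p : P d),
    Hom m C p → ∃ (u : P d) (c : ℝ), Nice m K u ∧ |c| ≤ K ∧ (Odd m → c = 0) ∧
      ou u = p - MvPolynomial.C c := by
  induction m using Nat.twoStepInduction with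
  | zero =>
    intro C
    refine ⟨|C|, abs_nonneg _, fun d hd p hp => ⟨0, ev 0 p, Nice.zero (abs_nonneg _), ?_, by simp, ?_⟩⟩
    · simpa using (hp.mono (le_abs_self C)).2 0
    · have : p = MvPolynomial.C (MvPolynomial.coeff 0 p) := by
        have := hp.1
        rwa [← MvPolynomial.totalDegree_zero_iff_isHomogeneous, 
          MvPolynomial.totalDegree_eq_zero_iff_eq_C] at this
      rw [this, ev_C, sub_self, ou_zero]
  | one =>
    intro C
    refine ⟨|C|, abs_nonneg _, fun d hd p hp => ⟨p, 0, (hp.mono (le_abs_self C)).nice (abs_nonneg _),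
      by simp, by simp, ?_⟩⟩
    rw [ou_hom hp.1]
    have : lap p = 0 := by
      unfold lap
      refine Finset.sum_eq_zero fun i _ => ?_
      have h0 := hp.1.pderiv (i := i)
      simp only [Nat.sub_self] at h0
      rw [← MvPolynomial.totalDegree_zero_iff_isHomogeneous, 
          MvPolynomial.totalDegree_eq_zero_iff_eq_C] at h0
      rw [h0, MvPolynomial.pderiv_C]
    simp [this]
  | more m ih _ =>
    intro C
    obtain ⟨K1, hK1, h1⟩ := Hom.lap (m := m) C
    obtain ⟨K2, hK2, h2⟩ := ih (|1 / ((m : ℝ) + 2)| * K1)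
    refine ⟨|1 / ((m : ℝ) + 2)| * |C| + K2, by positivity, fun d hd p hp => ?_⟩
    obtain ⟨u, c, hu, hc, hodd, hou⟩ := h2 d hd _ ((h1 d hd p hp).smul (1 / ((m : ℝ) + 2)))
    refine ⟨MvPolynomial.C (1 / ((m : ℝ) + 2)) * p + u, c, ?_, ?_, ?_, ?_⟩
    · refine Nice.add ?_ (hu.up (by omega) (by rw [Nat.even_iff]; omega))
      exact ((hp.mono (le_abs_self C)).nice (abs_nonneg _)).smul _
    · refine hc.trans (by simp; positivity)
    · intro h; apply hodd; rw [Nat.odd_iff] at *; omega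
    · rw [ou_add, ou_C_mul, hou, ou_hom hp.1, mul_sub, ← mul_assoc, ← MvPolynomial.C_mul]
      have : 1 / ((m : ℝ) + 2) * ((m + 2 : ℕ) : ℝ) = 1 := by push_cast; field_simp
      rw [this]; simp only [map_one]; ring

lemma solve (M : ℕ) (C : ℝ) : ∃ K : ℝ, 0 ≤ K ∧ ∀ (d : ℕ), 0 < d → ∀ (p : P d),
    Nice M C p → ∃ (u : P d) (c : ℝ), Nice M K u ∧ |c| ≤ K ∧ (Odd M → c = 0) ∧
      ou u = p - MvPolynomial.C c := by
  choose K hK h using fun m => solve_hom m C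
  refine ⟨∑ m ∈ Finset.range (M + 1), K m, Finset.sum_nonneg fun _ _ => hK _, ?_⟩
  intro d hd p hp
  obtain ⟨q, h1, h2, h3⟩ := hp
  have : ∀ m, ∃ (u : P d) (c : ℝ), Nice M (K m) u ∧ |c| ≤ K m ∧ (Odd M → c = 0) ∧
      ou u = q m - MvPolynomial.C c := by
    intro m
    by_cases hm : q m = 0
    · exact ⟨0, 0, Nice.zero (hK m), by simpa using hK m, by simp, by simp [hm, ou_zero]⟩
    · obtain ⟨u, c, e1, e2, e3, e4⟩ := h m d hd _ (h1 m)
      have := h2 m hm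
      refine ⟨u, c, e1.up this.1 this.2, e2, fun ho => e3 ?_, e4⟩
      have := this.2
      rw [Nat.odd_iff] at *; rw [Nat.even_iff] at *; omega
  choose u c e1 e2 e3 e4 using this
  refine ⟨∑ m ∈ Finset.range (M + 1), u m, ∑ m ∈ Finset.range (M + 1), c m,
    Nice.sum _ fun m _ => e1 m, ?_, ?_, ?_⟩
  · exact (Finset.abs_sum_le_sum_abs _ _).trans (Finset.sum_le_sum fun m _ => e2 m)
  · intro ho; exact Finset.sum_eq_zero fun m _ => e3 m ho
  · rw [ou_sum, h3, map_sum, ← Finset.sum_sub_distrib]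
    exact Finset.sum_congr rfl fun m _ => e4 m

/-- The recursive system. -/
lemma recursion (C : ℝ) (n : ℕ) : ∃ K : ℝ, 0 ≤ K ∧ ∀ (d : ℕ), 0 < d → ∀ (w : ℕ → P d),
    (∀ j, Nice (j + 3) C (w j)) → ∃ (u : ℕ → P d) (c : ℕ → ℝ), ∀ j < n,
      Nice (j + 3) K (u j) ∧ |c j| ≤ K ∧ (Even j → c j = 0) ∧
      ou (u j) = MvPolynomial.C ((j : ℝ) + 1) * w j
        - (∑ i ∈ Finset.range j, gradIn (w (j - 1 - i)) (u i)) - MvPolynomial.C (c j) := by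
  classical
  induction n with
  | zero => exact ⟨0, le_rfl, fun d _ w _ => ⟨fun _ => 0, fun _ => 0, by simp⟩⟩
  | succ n ih =>
    obtain ⟨K, hK, h⟩ := ih
    choose Kg hKg hg using fun i => Nice.gradIn (n - i + 1) (i + 2) C K
    obtain ⟨K', hK', hs⟩ := solve (n + 3) (|(n : ℝ) + 1| * C + |(-1 : ℝ)| * ∑ i ∈ Finset.range n, Kg i)
    refine ⟨K + K', by positivity, fun d hd w hw => ?_⟩
    obtain ⟨u, c, huc⟩ := h d hd w hw
    have hH : Nice (n + 3) (|(n : ℝ) + 1| * C + |(-1 : ℝ)| * ∑ i ∈ Finset.range n, Kg i)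
        (MvPolynomial.C ((n : ℝ) + 1) * w n + MvPolynomial.C (-1) * 
        (∑ i ∈ Finset.range n, gradIn (w (n - 1 - i)) (u i))) := by
      refine ((hw n).smul _).add ((Nice.sum _ fun i hi => ?_).smul _)
      have hi := Finset.mem_range.1 hi
      have a := hw (n - 1 - i)
      have b := (huc i hi).1
      rw [show n - 1 - i + 3 = n - i + 1 + 1 by omega] at a
      have := hg i d _ _ a b
      rwa [show n - i + 1 + (i + 2) = n + 3 by omega] at this
    obtain ⟨u', c', e1, e2, e3, e4⟩ := hs d hd _ hH
    refine ⟨Function.update u n u', Function.update c n c', fun j hj => ?_⟩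
    have hsum : ∀ j ≤ n, ∑ i ∈ Finset.range j, gradIn (w (j - 1 - i)) (Function.update u n u' i)
        = ∑ i ∈ Finset.range j, gradIn (w (j - 1 - i)) (u i) := by
      intro j hj
      refine Finset.sum_congr rfl fun i hi => ?_
      have hi := Finset.mem_range.1 hi
      rw [Function.update_of_ne (by omega)]
    rw [hsum j (by omega)]
    rcases Nat.lt_succ_iff_lt_or_eq.1 hj with hj | rfl
    · rw [Function.update_of_ne (by omega), Function.update_of_ne (by omega)]
      obtain ⟨a1, a2, a3, a4⟩ := huc j hj
      exact ⟨a1.mono (by linarith), a2.trans (by linarith), a3, a4⟩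
    · rw [Function.update_self, Function.update_self]
      refine ⟨e1.mono (by linarith), e2.trans (by linarith), fun h => e3 ?_, ?_⟩
      · rw [Nat.even_iff] at h; rw [Nat.odd_iff]; omega
      · rw [e4]; simp; ring

end LapL

namespace LapL

lemma Nice.ev_bound {d M : ℕ} {C : ℝ} {p : P d} (hC : 0 ≤ C) (h : Nice M C p) {R : ℝ} (hR : 1 ≤ R)
    {z : E d} (hz : ‖z‖ ≤ R) : |ev z p| ≤ (M + 1) * C * R ^ M := by
  obtain ⟨q, h1, h2, rfl⟩ := h
  rw [map_sum]
  refine (Finset.abs_sum_le_sum_abs _ _).trans ?_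
  have : ∀ m ∈ Finset.range (M + 1), |ev z (q m)| ≤ C * R ^ M := by
    intro m hm
    have hm := Finset.mem_range.1 hm
    refine ((h1 m).2 z).trans ?_
    gcongr
    calc ‖z‖ ^ m ≤ R ^ m := by gcongr
      _ ≤ R ^ M := pow_le_pow_right₀ hR (by omega)
  refine (Finset.sum_le_sum this).trans (le_of_eq ?_)
  simp; ring

/-- polynomial attached to a multilinear map -/
lemma exists_poly {d k : ℕ} (T : MultilinearMap ℝ (fun _ : Fin k => E d) ℝ) (hk : 1 ≤ k) {C : ℝ}
    (hC : 0 ≤ C) (hT : ∀ u : E d, ‖u‖ = 1 → |T fun _ => u| ≤ C) :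
    ∃ p : P d, Hom k C p ∧ ∀ z, ev z p = T fun _ => z := by
  classical
  refine ⟨∑ φ : Fin k → Fin d, MvPolynomial.C (T fun j => EuclideanSpace.single (φ j) (1 : ℝ)) *
    ∏ j, MvPolynomial.X (φ j), ?_⟩
  have hev : ∀ z, ev z (∑ φ : Fin k → Fin d,
      MvPolynomial.C (T fun j => EuclideanSpace.single (φ j) (1 : ℝ)) *
      ∏ j, MvPolynomial.X (φ j)) = T fun _ => z := by
    intro z
    have hz : z = ∑ i, z i • EuclideanSpace.single i (1 : ℝ) := by
      ext j; simp [Pi.single_apply, Finset.sum_apply]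
    conv_rhs => rw [hz]
    rw [MultilinearMap.map_sum]
    simp only [map_sum, map_mul, map_prod, ev_C, ev_X]
    refine Finset.sum_congr rfl fun φ _ => ?_
    rw [MultilinearMap.map_smul_univ (m := fun j => EuclideanSpace.single (φ j) (1 : ℝ))]
    simp [mul_comm]
  refine ⟨⟨?_, fun z => ?_⟩, hev⟩
  · refine MvPolynomial.IsHomogeneous.sum _ _ _ fun φ _ => ?_
    have h1 : (∏ j : Fin k, (MvPolynomial.X (φ j) : P d)).IsHomogeneous (∑ j : Fin k, 1) :=
      MvPolynomial.IsHomogeneous.prod _ _ _ fun j _ => MvPolynomial.isHomogeneous_X _ _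
    simpa using (MvPolynomial.isHomogeneous_C _ _).mul h1
  · rw [hev]
    rcases eq_or_ne z 0 with rfl | hz
    · rw [T.map_coord_zero (i := ⟨0, hk⟩) rfl]; simp; positivity
    · have hz' : 0 < ‖z‖ := norm_pos_iff.2 hz
      have h1 : (fun _ : Fin k => z) = fun _ => ‖z‖ • (‖z‖⁻¹ • z) := by
        funext _; rw [smul_smul, mul_inv_cancel₀ hz'.ne', one_smul]
      rw [h1, MultilinearMap.map_smul_univ (c := fun _ => ‖z‖) (m := fun _ => ‖z‖⁻¹ • z)]
      simp only [Finset.prod_const, Finset.card_univ, Fintype.card_fin, smul_eq_mul, abs_mul,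
        abs_pow, abs_norm]
      rw [mul_comm]
      gcongr
      apply hT
      rw [norm_smul, norm_inv, norm_norm]; field_simp

/-- half squared norm -/
def rr (d : ℕ) : P d := MvPolynomial.C (1 / 2) * ∑ i, MvPolynomial.X i ^ 2

lemma ev_rr {d : ℕ} (z : E d) : ev z (rr d) = ‖z‖ ^ 2 / 2 := by
  unfold rr
  rw [map_mul, ev_C, map_sum, EuclideanSpace.norm_sq_eq]
  simp [ev_X]; ring

lemma gradIn_rr {d : ℕ} (u : P d) : gradIn (rr d) u = ∑ i, MvPolynomial.X i * MvPolynomial.pderiv i u := by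
  classical
  unfold gradIn rr
  refine Finset.sum_congr rfl fun i _ => ?_
  congr 1
  rw [MvPolynomial.pderiv_C_mul, map_sum]
  rw [Finset.sum_eq_single i]
  · rw [MvPolynomial.pderiv_pow, MvPolynomial.pderiv_X_self, ← mul_assoc, ← mul_assoc]
    rw [show ((2 : ℕ) : P d) = MvPolynomial.C ((2 : ℕ) : ℝ) from (map_natCast _ _).symm,
      ← MvPolynomial.C_mul]
    norm_num
  · intro j _ hj
    rw [MvPolynomial.pderiv_pow, MvPolynomial.pderiv_X_of_ne hj, mul_zero]
  · simp

lemma nice_rr (d : ℕ) : Nice 2 1 (rr d) := by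
  refine Hom.nice zero_le_one ⟨?_, fun z => ?_⟩
  · unfold rr
    have : (∑ i, (MvPolynomial.X i : P d) ^ 2).IsHomogeneous 2 :=
      MvPolynomial.IsHomogeneous.sum _ _ _ fun i _ => by
        simpa using (MvPolynomial.isHomogeneous_X ℝ i).pow 2
    simpa using (MvPolynomial.isHomogeneous_C _ _).mul this
  · rw [ev_rr, abs_of_nonneg (by positivity)]
    nlinarith [sq_nonneg ‖z‖]

def Vp {d : ℕ} (N : ℕ) (w : ℕ → P d) (s : ℝ) : P d :=
  rr d + ∑ j ∈ Finset.range N, MvPolynomial.C (s ^ (j + 1)) * w j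

def Up {d : ℕ} (N : ℕ) (u : ℕ → P d) (s : ℝ) : P d :=
  ∑ j ∈ Finset.range N, MvPolynomial.C (s ^ j) * u j

def Dp {d : ℕ} (N : ℕ) (w : ℕ → P d) (s : ℝ) : P d :=
  ∑ j ∈ Finset.range N, MvPolynomial.C (s ^ j) * (MvPolynomial.C ((j : ℝ) + 1) * w j)

def Rem {d : ℕ} (N : ℕ) (w u : ℕ → P d) (s : ℝ) : P d :=
  ∑ k ∈ Finset.range N, ∑ j ∈ Finset.range N,
    if N ≤ k + 1 + j then MvPolynomial.C (s ^ (k + 1 + j)) * gradIn (w k) (u j) else 0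

lemma double_sum {A : Type*} [AddCommGroup A] (N : ℕ) (F : ℕ → ℕ → A) :
    ∑ j ∈ Finset.range N, ∑ i ∈ Finset.range j, F (j - 1 - i) i =
    ∑ k ∈ Finset.range N, ∑ i ∈ Finset.range N, if k + 1 + i < N then F k i else 0 := by
  rw [Finset.sum_sigma', ← Finset.sum_product', ← Finset.sum_filter]
  refine Finset.sum_bij' (fun x _ => (x.1 - 1 - x.2, x.2)) (fun y _ => ⟨y.1 + 1 + y.2, y.2⟩)
    ?_ ?_ ?_ ?_ ?_
  · rintro ⟨a, b⟩ h; simp at h ⊢; omega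
  · rintro ⟨a, b⟩ h; simp at h ⊢; omega
  · rintro ⟨a, b⟩ h
    simp only [Finset.mem_sigma, Finset.mem_range] at h
    simp only [Sigma.mk.injEq, heq_eq_eq, and_true]; omega
  · rintro ⟨a, b⟩ h
    simp only [Prod.mk.injEq, and_true]; omega
  · rintro ⟨a, b⟩ h; rfl

lemma gradIn_add_left {d : ℕ} (p p' q : P d) : gradIn (p + p') q = gradIn p q + gradIn p' q := by
  simp [gradIn, add_mul, Finset.sum_add_distrib]

lemma gradIn_C_mul {d : ℕ} (a b : ℝ) (p q : P d) :
    gradIn (MvPolynomial.C a * p) (MvPolynomial.C b * q) = MvPolynomial.C (a * b) * gradIn p q := by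
  unfold gradIn
  rw [Finset.mul_sum]
  refine Finset.sum_congr rfl fun i _ => ?_
  rw [MvPolynomial.pderiv_C_mul, MvPolynomial.pderiv_C_mul, MvPolynomial.C_mul]; ring

lemma main_identity {d N : ℕ} (w u : ℕ → P d) (c : ℕ → ℝ) (s : ℝ)
    (h : ∀ j < N, ou (u j) = MvPolynomial.C ((j : ℝ) + 1) * w j
        - (∑ i ∈ Finset.range j, gradIn (w (j - 1 - i)) (u i)) - MvPolynomial.C (c j)) :
    gradIn (Vp N w s) (Up N u s) - MvPolynomial.C (1 / (d : ℝ)) * lap (Up N u s) =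
      Dp N w s - MvPolynomial.C (∑ j ∈ Finset.range N, s ^ j * c j) + Rem N w u s := by
  have e1 : gradIn (Vp N w s) (Up N u s) - MvPolynomial.C (1 / (d : ℝ)) * lap (Up N u s) =
      ou (Up N u s) + ∑ k ∈ Finset.range N, ∑ j ∈ Finset.range N,
        MvPolynomial.C (s ^ (k + 1 + j)) * gradIn (w k) (u j) := by
    unfold Vp
    rw [gradIn_add_left, gradIn_rr]
    conv_lhs => enter [1, 2]; unfold Up; rw [gradIn_sum]
    simp only [gradIn_C_mul, ← pow_add]
    unfold ou
    ring
  have e2 : ou (Up N u s) = Dp N w s - MvPolynomial.C (∑ j ∈ Finset.range N, s ^ j * c j) -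
      ∑ j ∈ Finset.range N, ∑ i ∈ Finset.range j,
        MvPolynomial.C (s ^ (j - 1 - i + 1 + i)) * gradIn (w (j - 1 - i)) (u i) := by
    unfold Up Dp
    rw [ou_sum, map_sum, ← Finset.sum_sub_distrib, ← Finset.sum_sub_distrib]
    refine Finset.sum_congr rfl fun j hj => ?_
    have hj := Finset.mem_range.1 hj
    rw [ou_C_mul, h j hj]
    have : ∑ i ∈ Finset.range j,
        MvPolynomial.C (s ^ (j - 1 - i + 1 + i)) * gradIn (w (j - 1 - i)) (u i) =
        MvPolynomial.C (s ^ j) * ∑ i ∈ Finset.range j, gradIn (w (j - 1 - i)) (u i) := by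
      rw [Finset.mul_sum]
      refine Finset.sum_congr rfl fun i hi => ?_
      have hi := Finset.mem_range.1 hi
      rw [show j - 1 - i + 1 + i = j by omega]
    rw [this, MvPolynomial.C_mul]; ring
  rw [e1, e2, double_sum N (fun k i => MvPolynomial.C (s ^ (k + 1 + i)) * gradIn (w k) (u i))]
  have e3 : ∑ k ∈ Finset.range N, ∑ j ∈ Finset.range N,
        MvPolynomial.C (s ^ (k + 1 + j)) * gradIn (w k) (u j) = 
      (∑ k ∈ Finset.range N, ∑ i ∈ Finset.range N, if k + 1 + i < N then
        MvPolynomial.C (s ^ (k + 1 + i)) * gradIn (w k) (u i) else 0) + Rem N w u s := by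
    unfold Rem
    rw [← Finset.sum_add_distrib]
    refine Finset.sum_congr rfl fun k _ => ?_
    rw [← Finset.sum_add_distrib]
    refine Finset.sum_congr rfl fun i _ => ?_
    by_cases hh : k + 1 + i < N
    · rw [if_pos hh, if_neg (by omega), add_zero]
    · rw [if_neg hh, if_pos (by omega), zero_add]
  rw [e3]; ring

/-- All uniform bounds on the ball. -/
lemma bounds (C K : ℝ) (hC : 0 ≤ C) (N : ℕ) : ∃ B : ℝ, 1 ≤ B ∧ ∀ (d : ℕ) (w u : ℕ → P d),
    (∀ j, Nice (j + 3) C (w j)) → (∀ j < N, Nice (j + 3) K (u j)) →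
    ∀ s R : ℝ, 0 ≤ s → 1 ≤ R → s * R ≤ 1 → ∀ z : E d, ‖z‖ ≤ R →
      |ev z (Rem N w u s)| ≤ B * (s ^ N * R ^ (N + 3)) ∧
      |ev z (Dp N w s)| ≤ B * R ^ 3 ∧
      |ev z (gradIn (rr d) (Up N u s))| ≤ B * R ^ 3 := by
  choose Kg hKg hg using fun k j => Nice.gradIn (k + 2) (j + 2) C K
  choose Kr hKr hr using fun j => Nice.gradIn 1 (j + 2) 1 K
  set B1 := ∑ k ∈ Finset.range N, ∑ j ∈ Finset.range N, ((k + 2 + (j + 2) : ℕ) + 1) * Kg k j with hB1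
  set B2 := ∑ j ∈ Finset.range N, ((j : ℝ) + 1) * (((j + 3 : ℕ) + 1) * C) with hB2
  set B3 := ∑ j ∈ Finset.range N, (((1 + (j + 2) : ℕ) + 1) * Kr j) with hB3
  have hB1' : 0 ≤ B1 := Finset.sum_nonneg fun k _ => Finset.sum_nonneg fun j _ =>
    mul_nonneg (by positivity) (hKg k j)
  have hB2' : 0 ≤ B2 := Finset.sum_nonneg fun k _ => by positivity
  have hB3' : 0 ≤ B3 := Finset.sum_nonneg fun k _ => mul_nonneg (by positivity) (hKr k)
  refine ⟨B1 + B2 + B3 + 1, by linarith, ?_⟩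
  intro d w u hw hu s R hs hR hsR z hz
  have hR0 : 0 ≤ R := by linarith
  have hpow : ∀ j a, s ^ j * R ^ (j + a) ≤ R ^ a := by
    intro j a
    rw [pow_add, ← mul_assoc, ← mul_pow]
    exact mul_le_of_le_one_left (by positivity) (pow_le_one₀ (by positivity) hsR)
  refine ⟨?_, ?_, ?_⟩
  · have : |ev z (Rem N w u s)| ≤ B1 * (s ^ N * R ^ (N + 3)) := by
      unfold Rem
      rw [map_sum, hB1, Finset.sum_mul]
      refine (Finset.abs_sum_le_sum_abs _ _).trans (Finset.sum_le_sum fun k _ => ?_)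
      rw [map_sum, Finset.sum_mul]
      refine (Finset.abs_sum_le_sum_abs _ _).trans (Finset.sum_le_sum fun j hj => ?_)
      have hKg' := hKg k j
      split_ifs with hN
      · rw [map_mul, ev_C, abs_mul, abs_of_nonneg (by positivity)]
        have h1 := (hg k j d _ _ (hw k) (hu j (Finset.mem_range.1 hj))).ev_bound (hKg k j) hR hz
        have h2 : s ^ (k + 1 + j) * R ^ (k + 2 + (j + 2)) ≤ s ^ N * R ^ (N + 3) := by
          obtain ⟨e, he⟩ := Nat.exists_eq_add_of_le hN
          rw [he, show k + 2 + (j + 2) = e + (N + 3) by omega, pow_add, mul_assoc]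
          gcongr
          exact hpow e (N + 3)
        calc s ^ (k + 1 + j) * |ev z (gradIn (w k) (u j))| 
            ≤ s ^ (k + 1 + j) * (((k + 2 + (j + 2) : ℕ) + 1) * Kg k j * R ^ (k + 2 + (j + 2))) := by
              gcongr
          _ = ((k + 2 + (j + 2) : ℕ) + 1) * Kg k j * (s ^ (k + 1 + j) * R ^ (k + 2 + (j + 2))) := by ring
          _ ≤ _ := by gcongr
      · rw [map_zero, abs_zero]; positivity
    refine this.trans ?_
    gcongr; linarith
  · have : |ev z (Dp N w s)| ≤ B2 * R ^ 3 := by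
      unfold Dp
      rw [map_sum, hB2, Finset.sum_mul]
      refine (Finset.abs_sum_le_sum_abs _ _).trans (Finset.sum_le_sum fun j _ => ?_)
      rw [map_mul, map_mul, ev_C, ev_C, abs_mul, abs_mul, abs_of_nonneg (by positivity),
        abs_of_nonneg (by positivity : (0 : ℝ) ≤ (j : ℝ) + 1)]
      have h1 := (hw j).ev_bound hC hR hz
      calc s ^ j * (((j : ℝ) + 1) * |ev z (w j)|) ≤ s ^ j * (((j : ℝ) + 1) *
            (((j + 3 : ℕ) + 1) * C * R ^ (j + 3))) := by gcongr
        _ = ((j : ℝ) + 1) * (((j + 3 : ℕ) + 1) * C) * (s ^ j * R ^ (j + 3)) := by ring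
        _ ≤ _ := by gcongr; exact hpow j 3
    refine this.trans ?_
    gcongr; linarith
  · have : |ev z (gradIn (rr d) (Up N u s))| ≤ B3 * R ^ 3 := by
      have e : gradIn (rr d) (Up N u s) = ∑ j ∈ Finset.range N, MvPolynomial.C (s ^ j) * gradIn (rr d) (u j) := by
        have := gradIn_sum {()} (Finset.range N) (fun _ => rr d) (fun j => MvPolynomial.C (s ^ j) * u j)
        simp only [Finset.sum_singleton] at this
        unfold Up
        rw [this]
        refine Finset.sum_congr rfl fun j _ => ?_
        have := gradIn_C_mul 1 (s ^ j) (rr d) (u j)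
        simpa using this
      rw [e, map_sum, hB3, Finset.sum_mul]
      refine (Finset.abs_sum_le_sum_abs _ _).trans (Finset.sum_le_sum fun j hj => ?_)
      have hKr' := hKr j
      rw [map_mul, ev_C, abs_mul, abs_of_nonneg (by positivity)]
      have h1 := (hr j d _ _ (nice_rr d) (hu j (Finset.mem_range.1 hj))).ev_bound (hKr j) hR hz
      calc s ^ j * |ev z (gradIn (rr d) (u j))| ≤ s ^ j *
            (((1 + (j + 2) : ℕ) + 1) * Kr j * R ^ (1 + (j + 2))) := by gcongr
        _ = (((1 + (j + 2) : ℕ) + 1) * Kr j) * (s ^ j * R ^ (j + 3)) := by ring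
        _ ≤ _ := by gcongr; exact hpow j 3
    refine this.trans ?_
    gcongr; linarith

end LapL

namespace LapL

/-- derivative of a polynomial -/
def Dev {d : ℕ} (p : P d) (z : E d) : E d →L[ℝ] ℝ :=
  ∑ i, ev z (MvPolynomial.pderiv i p) • (EuclideanSpace.proj i : E d →L[ℝ] ℝ)

lemma hasFDerivAt_ev {d : ℕ} (p : P d) (z : E d) : HasFDerivAt (fun z => ev z p) (Dev p z) z := by
  classical
  unfold Dev
  induction p using MvPolynomial.induction_on with
  | C a => simpa [ev_C] using hasFDerivAt_const a z
  | add p q hp hq =>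
    simp only [map_add, add_smul, Finset.sum_add_distrib]
    exact hp.add hq
  | mul_X p i hp =>
    have h1 : HasFDerivAt (fun z : E d => z i) (EuclideanSpace.proj i : E d →L[ℝ] ℝ) z :=
      (EuclideanSpace.proj i : E d →L[ℝ] ℝ).hasFDerivAt
    have h2 := hp.mul h1
    have e : (fun z => ev z (p * MvPolynomial.X i)) = fun z => ev z p * z i := by
      funext z; rw [map_mul, ev_X]
    rw [e]
    refine h2.congr_fderiv ?_
    ext v
    simp only [MvPolynomial.pderiv_mul, map_add, map_mul, ev_X, add_smul, Finset.sum_add_distrib,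
      MvPolynomial.pderiv_X, ContinuousLinearMap.add_apply, ContinuousLinearMap.smul_apply,
      ContinuousLinearMap.sum_apply, smul_eq_mul, PiLp.proj_apply]
    rw [Finset.mul_sum, add_comm]
    congr 1
    · refine Finset.sum_congr rfl fun j _ => by ring
    · rw [Finset.sum_eq_single i]
      · simp
      · intro j _ hj; simp [Pi.single_apply, hj.symm]
      · simp

lemma Dev_single {d : ℕ} (p : P d) (z : E d) (i : Fin d) :
    Dev p z (EuclideanSpace.single i 1) = ev z (MvPolynomial.pderiv i p) := by
  classical
  unfold Dev
  simp [Pi.single_apply]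

lemma transition_deriv_bound : ∃ B : ℝ, 0 ≤ B ∧ ∀ t, |deriv Real.smoothTransition t| ≤ B := by
  have hc : Continuous (deriv Real.smoothTransition) :=
    (Real.smoothTransition.contDiff (n := 1)).continuous_deriv (by simp)
  have h0 : ∀ t < (0 : ℝ), deriv Real.smoothTransition t = 0 := by
    intro t ht
    have : Real.smoothTransition =ᶠ[nhds t] fun _ => 0 := by
      filter_upwards [Iio_mem_nhds ht] with x hx
      exact Real.smoothTransition.zero_of_nonpos (le_of_lt hx)
    rw [this.deriv_eq]; simp
  have h1 : ∀ t > (1 : ℝ), deriv Real.smoothTransition t = 0 := by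
    intro t ht
    have : Real.smoothTransition =ᶠ[nhds t] fun _ => 1 := by
      filter_upwards [Ioi_mem_nhds ht] with x hx
      exact Real.smoothTransition.one_of_one_le (le_of_lt hx)
    rw [this.deriv_eq]; simp
  obtain ⟨B, hB⟩ := (isCompact_Icc (a := (0 : ℝ)) (b := 1)).exists_bound_of_continuousOn hc.continuousOn
  refine ⟨max B 0, le_max_right _ _, fun t => ?_⟩
  by_cases h : t ∈ Set.Icc (0 : ℝ) 1
  · exact (hB t h).trans (le_max_left _ _)
  · have : t < 0 ∨ 1 < t := by
      by_contra hc; push Not at hc; exact h ⟨hc.1, hc.2⟩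
    rcases this with h | h
    · rw [h0 t h]; simp
    · rw [h1 t h]; simp

lemma transition_deriv_zero (t : ℝ) (h : t < 0 ∨ 1 < t) : deriv Real.smoothTransition t = 0 := by
  rcases h with ht | ht
  · have : Real.smoothTransition =ᶠ[nhds t] fun _ => 0 := by
      filter_upwards [Iio_mem_nhds ht] with x hx
      exact Real.smoothTransition.zero_of_nonpos (le_of_lt hx)
    rw [this.deriv_eq]; simp
  · have : Real.smoothTransition =ᶠ[nhds t] fun _ => 1 := by
      filter_upwards [Ioi_mem_nhds ht] with x hx
      exact Real.smoothTransition.one_of_one_le (le_of_lt hx)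
    rw [this.deriv_eq]; simp

def aa {d : ℕ} (R : ℝ) (z : E d) : ℝ := 4 / 3 - (8 / 3) / R ^ 2 * ev z (rr d)

lemma aa_eq {d : ℕ} {R : ℝ} (hR : 0 < R) (z : E d) : aa R z = 4 / 3 * (1 - ‖z‖ ^ 2 / R ^ 2) := by
  unfold aa; rw [ev_rr]; ring

def chi {d : ℕ} (R : ℝ) (z : E d) : ℝ := Real.smoothTransition (aa R z)

lemma aa_continuous {d : ℕ} (R : ℝ) : Continuous (aa R : E d → ℝ) := by
  unfold aa; have := ev_continuous (rr d); fun_prop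

lemma chi_continuous {d : ℕ} (R : ℝ) : Continuous (chi R : E d → ℝ) :=
  Real.smoothTransition.continuous.comp (aa_continuous R)

lemma chi_hasFDerivAt {d : ℕ} (R : ℝ) (z : E d) :
    HasFDerivAt (chi R) ((deriv Real.smoothTransition (aa R z) * (-((8 / 3) / R ^ 2))) • Dev (rr d) z) z := by
  have h1 : HasFDerivAt (aa R) (-(((8 / 3) / R ^ 2) • Dev (rr d) z)) z := by
    have := ((hasFDerivAt_ev (rr d) z).const_mul ((8 / 3) / R ^ 2)).const_sub (4 / 3)
    exact this
  have h2 : HasDerivAt Real.smoothTransition (deriv Real.smoothTransition (aa R z)) (aa R z) :=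
    ((Real.smoothTransition.contDiff (n := 1)).differentiable (by simp) _).hasDerivAt
  refine (h2.comp_hasFDerivAt z h1).congr_fderiv ?_
  ext v; simp; ring

lemma chi_one {d : ℕ} {R : ℝ} (hR : 0 < R) {z : E d} (hz : ‖z‖ ≤ R / 2) : chi R z = 1 := by
  apply Real.smoothTransition.one_of_one_le
  rw [aa_eq hR]
  have : ‖z‖ ^ 2 / R ^ 2 ≤ 1 / 4 := by
    rw [div_le_iff₀ (by positivity)]; nlinarith [norm_nonneg z]
  linarith

lemma chi_zero {d : ℕ} {R : ℝ} (hR : 0 < R) {z : E d} (hz : R ≤ ‖z‖) : chi R z = 0 := by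
  apply Real.smoothTransition.zero_of_nonpos
  rw [aa_eq hR]
  have : 1 ≤ ‖z‖ ^ 2 / R ^ 2 := by
    rw [le_div_iff₀ (by positivity)]; nlinarith [norm_nonneg z]
  linarith

lemma chi_support {d : ℕ} {R : ℝ} (hR : 0 < R) : HasCompactSupport (chi R : E d → ℝ) := by
  refine HasCompactSupport.intro (isCompact_closedBall 0 R) fun z hz => chi_zero hR ?_
  simp at hz; exact hz.le

lemma dchi_zero {d : ℕ} {R : ℝ} (hR : 0 < R) {z : E d} (hz : ‖z‖ < R / 2 ∨ R < ‖z‖) :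
    deriv Real.smoothTransition (aa R z) = 0 := by
  apply transition_deriv_zero
  rw [aa_eq hR]
  rcases hz with hz | hz
  · right
    have : ‖z‖ ^ 2 / R ^ 2 < 1 / 4 := by
      rw [div_lt_iff₀ (by positivity)]; nlinarith [norm_nonneg z]
    linarith
  · left
    have : 1 < ‖z‖ ^ 2 / R ^ 2 := by
      rw [lt_div_iff₀ (by positivity)]; nlinarith [norm_nonneg z]
    linarith

lemma dtrans_continuous : Continuous (deriv Real.smoothTransition) :=
  (Real.smoothTransition.contDiff (n := 1)).continuous_deriv (by simp)

lemma ibp {d : ℕ} (V U : P d) {R : ℝ} (hR : 0 < R) :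
    (∫ z : E d, chi R z * ((ev z (lap U) - d * ev z (gradIn V U)) * exp (-(d * ev z V)))) =
    - ∫ z : E d, (deriv Real.smoothTransition (aa R z) * (-((8 / 3) / R ^ 2))) *
        ev z (gradIn (rr d) U) * exp (-(d * ev z V)) := by
  classical
  have hVc := ev_continuous V
  have hcs : HasCompactSupport (fun z : E d => deriv Real.smoothTransition (aa R z)) := by
    refine HasCompactSupport.intro (isCompact_closedBall 0 R) fun z hz => dchi_zero hR ?_
    simp at hz; exact Or.inr hz
  have hdc : Continuous (fun z : E d => deriv Real.smoothTransition (aa R z)) :=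
    dtrans_continuous.comp (aa_continuous R)
  have hcc := chi_continuous (d := d) R
  -- per coordinate
  have hint1 : ∀ i : Fin d, Integrable (fun z : E d => chi R z *
        ((ev z (MvPolynomial.pderiv i (MvPolynomial.pderiv i U)) -
          d * (ev z (MvPolynomial.pderiv i V) * ev z (MvPolynomial.pderiv i U))) *
          exp (-(d * ev z V)))) := by
    intro i
    refine Continuous.integrable_of_hasCompactSupport ?_ ((chi_support hR).mul_right)
    have h1 := ev_continuous (MvPolynomial.pderiv i (MvPolynomial.pderiv i U))
    have h2 := ev_continuous (MvPolynomial.pderiv i V)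
    have h3 := ev_continuous (MvPolynomial.pderiv i U)
    fun_prop
  have hint2 : ∀ i : Fin d, Integrable (fun z : E d => 
      ((deriv Real.smoothTransition (aa R z) * (-((8 / 3) / R ^ 2))) * ev z (MvPolynomial.pderiv i (rr d)))
        * (ev z (MvPolynomial.pderiv i U) * exp (-(d * ev z V)))) := by
    intro i
    refine Continuous.integrable_of_hasCompactSupport ?_ (((hcs.mul_right).mul_right).mul_right)
    have h2 := ev_continuous (MvPolynomial.pderiv i (rr d))
    have h3 := ev_continuous (MvPolynomial.pderiv i U)
    fun_prop
  have key : ∀ i : Fin d, (∫ z : E d, chi R z *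
        ((ev z (MvPolynomial.pderiv i (MvPolynomial.pderiv i U)) -
          d * (ev z (MvPolynomial.pderiv i V) * ev z (MvPolynomial.pderiv i U))) *
          exp (-(d * ev z V)))) =
      - ∫ z : E d, ((deriv Real.smoothTransition (aa R z) * (-((8 / 3) / R ^ 2))) * ev z (MvPolynomial.pderiv i (rr d)))
        * (ev z (MvPolynomial.pderiv i U) * exp (-(d * ev z V))) := by
    intro i
    set g : E d → ℝ := fun z => ev z (MvPolynomial.pderiv i U) * exp (-(d * ev z V)) with hg
    set g' : E d → E d →L[ℝ] ℝ := fun z =>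
      ev z (MvPolynomial.pderiv i U) • (exp (-(d * ev z V)) • (-((d : ℝ) • Dev V z))) +
        exp (-(d * ev z V)) • Dev (MvPolynomial.pderiv i U) z with hg'
    have hgd : ∀ z, HasFDerivAt g (g' z) z := by
      intro z
      exact (hasFDerivAt_ev _ z).mul (((hasFDerivAt_ev V z).const_mul (d : ℝ)).neg.exp)
    have e1 : ∀ z, g' z (EuclideanSpace.single i 1) =
        (ev z (MvPolynomial.pderiv i (MvPolynomial.pderiv i U)) -
          d * (ev z (MvPolynomial.pderiv i V) * ev z (MvPolynomial.pderiv i U))) *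
          exp (-(d * ev z V)) := by
      intro z
      simp only [hg', ContinuousLinearMap.add_apply, ContinuousLinearMap.smul_apply,
        ContinuousLinearMap.neg_apply, smul_eq_mul, Dev_single]
      ring
    have e2 : ∀ z, ((deriv Real.smoothTransition (aa R z) * (-((8 / 3) / R ^ 2))) • Dev (rr d) z)
        (EuclideanSpace.single i 1) = (deriv Real.smoothTransition (aa R z) * (-((8 / 3) / R ^ 2))) *
          ev z (MvPolynomial.pderiv i (rr d)) := by
      intro z
      simp only [ContinuousLinearMap.smul_apply, smul_eq_mul, Dev_single]
    have := integral_bilinear_hasFDerivAt_right_eq_neg_left_of_integrable (μ := (volume : Measure (E d)))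
      (f := chi R) (f' := fun z => (deriv Real.smoothTransition (aa R z) * (-((8 / 3) / R ^ 2))) • Dev (rr d) z)
      (g := g) (g' := g') (v := EuclideanSpace.single i 1) (B := ContinuousLinearMap.mul ℝ ℝ)
      (by simp only [ContinuousLinearMap.mul_apply', e2]; exact hint2 i)
      (by simp only [ContinuousLinearMap.mul_apply', e1]; exact hint1 i)
      (by 
        simp only [ContinuousLinearMap.mul_apply']
        refine Continuous.integrable_of_hasCompactSupport ?_ ((chi_support hR).mul_right)
        have h3 := ev_continuous (MvPolynomial.pderiv i U)
        rw [hg]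
        fun_prop)
      (fun z _ => chi_hasFDerivAt R z) (fun z _ => hgd z)
    simpa only [ContinuousLinearMap.mul_apply', e1, e2] using this
  have l1 : ∀ z : E d, chi R z * ((ev z (lap U) - d * ev z (gradIn V U)) * exp (-(d * ev z V))) =
      ∑ i, chi R z *
        ((ev z (MvPolynomial.pderiv i (MvPolynomial.pderiv i U)) -
          d * (ev z (MvPolynomial.pderiv i V) * ev z (MvPolynomial.pderiv i U))) *
          exp (-(d * ev z V))) := by
    intro z
    rw [← Finset.mul_sum, ← Finset.sum_mul, Finset.sum_sub_distrib, ← Finset.mul_sum]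
    simp [lap, gradIn]
  have l2 : ∀ z : E d, (deriv Real.smoothTransition (aa R z) * (-((8 / 3) / R ^ 2))) *
        ev z (gradIn (rr d) U) * exp (-(d * ev z V)) = 
      ∑ i, ((deriv Real.smoothTransition (aa R z) * (-((8 / 3) / R ^ 2))) * ev z (MvPolynomial.pderiv i (rr d)))
        * (ev z (MvPolynomial.pderiv i U) * exp (-(d * ev z V))) := by
    intro z
    unfold gradIn
    rw [map_sum, Finset.mul_sum, Finset.sum_mul]
    refine Finset.sum_congr rfl fun i _ => ?_
    rw [map_mul]; ring
  simp only [l1, l2]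
  rw [integral_finsetSum _ (fun i _ => hint1 i), integral_finsetSum _ (fun i _ => hint2 i),
    ← Finset.sum_neg_distrib]
  exact Finset.sum_congr rfl fun i _ => key i

lemma ibp_shell : ∃ A : ℝ, 1 ≤ A ∧ ∀ (d : ℕ) (V U : P d) (R M : ℝ), 0 < R → 0 ≤ M →
    (∀ z : E d, ‖z‖ ≤ R → |ev z (lap U) - d * ev z (gradIn V U)| ≤ M ∧
      |ev z (gradIn (rr d) U)| ≤ M * R ^ 2) →
    |∫ z in Metric.closedBall (0 : E d) R,
      (ev z (lap U) - d * ev z (gradIn V U)) * exp (-(d * ev z V))| ≤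
      A * M * ∫ z in Metric.closedBall (0 : E d) R \ Metric.ball 0 (R / 2), exp (-(d * ev z V)) := by
  obtain ⟨B, hB, hBt⟩ := transition_deriv_bound
  refine ⟨1 + 3 * B, by linarith, ?_⟩
  intro d V U R M hR hM h
  have hVc := ev_continuous V
  have hLc := ev_continuous (lap U)
  have hGc := ev_continuous (gradIn V U)
  have hrc := ev_continuous (gradIn (rr d) U)
  set F : E d → ℝ := fun z => (ev z (lap U) - d * ev z (gradIn V U)) * exp (-(d * ev z V)) with hF
  have hFc : Continuous F := by rw [hF]; fun_prop
  have hcc := chi_continuous (d := d) R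
  have hdc : Continuous (fun z : E d => deriv Real.smoothTransition (aa R z)) :=
    dtrans_continuous.comp (aa_continuous R)
  have hcs : HasCompactSupport (fun z : E d => deriv Real.smoothTransition (aa R z)) := by
    refine HasCompactSupport.intro (isCompact_closedBall 0 R) fun z hz => dchi_zero hR ?_
    simp at hz; exact Or.inr hz
  set B1 := Metric.closedBall (0 : E d) R with hB1
  set G : E d → ℝ := fun z => (deriv Real.smoothTransition (aa R z) * (-((8 / 3) / R ^ 2))) *
        ev z (gradIn (rr d) U) * exp (-(d * ev z V)) with hG
  have hGi : Integrable G := by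
    refine Continuous.integrable_of_hasCompactSupport ?_ (((hcs.mul_right).mul_right).mul_right)
    fun_prop
  have hFi : Integrable (fun z => chi R z * F z) :=
    Continuous.integrable_of_hasCompactSupport (by fun_prop) ((chi_support hR).mul_right)
  have hmB : MeasurableSet B1 := measurableSet_closedBall
  have hFB : Integrable (B1.indicator F) := by
    rw [integrable_indicator_iff hmB]
    exact hFc.continuousOn.integrableOn_compact (isCompact_closedBall _ _)
  have e1 : ∫ z in B1, F z = ∫ z, ((B1.indicator F z - chi R z * F z) - G z) := by
    have hsub : Integrable (fun z => B1.indicator F z - chi R z * F z) := hFB.sub hFi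
    rw [integral_sub hsub hGi, integral_sub hFB hFi, integral_indicator hmB]
    have := ibp V U hR
    rw [hF, hG, this]; ring
  rw [e1, ← integral_const_mul, ← Real.norm_eq_abs]
  have hmS : MeasurableSet (B1 \ Metric.ball 0 (R / 2)) := hmB.diff measurableSet_ball
  rw [← integral_indicator hmS]
  refine norm_integral_le_of_norm_le ?_ (Filter.Eventually.of_forall fun z => ?_)
  · rw [integrable_indicator_iff hmS]
    refine IntegrableOn.mono_set ?_ Set.sdiff_subset
    exact ContinuousOn.integrableOn_compact (isCompact_closedBall _ _) (by fun_prop)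
  · by_cases hz : z ∈ B1 \ Metric.ball 0 (R / 2)
    · rw [Set.indicator_of_mem hz, Set.indicator_of_mem hz.1]
      have hzR : ‖z‖ ≤ R := by simpa [hB1] using hz.1
      obtain ⟨h1, h2⟩ := h z hzR
      have hx0 : 0 ≤ chi R z := Real.smoothTransition.nonneg _
      have hx1 : chi R z ≤ 1 := Real.smoothTransition.le_one _
      have hE := exp_pos (-(d * ev z V))
      have n1 : |F z - chi R z * F z| ≤ M * exp (-(d * ev z V)) := by
        rw [show F z - chi R z * F z = (1 - chi R z) * F z by ring, abs_mul, hF, abs_mul, abs_of_pos hE,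
          abs_of_nonneg (by linarith)]
        calc (1 - chi R z) * (_ * exp (-(d * ev z V))) ≤ 1 * (M * exp (-(d * ev z V))) := by
              gcongr; linarith
          _ = _ := one_mul _
      have n2 : |G z| ≤ 3 * B * M * exp (-(d * ev z V)) := by
        rw [hG]
        simp only [abs_mul, abs_neg, abs_of_pos hE]
        refine mul_le_mul_of_nonneg_right ?_ hE.le
        rw [abs_of_pos (by positivity : 0 < 8 / 3 / R ^ 2)]
        calc |deriv smoothTransition (aa R z)| * (8 / 3 / R ^ 2) * |ev z (gradIn (rr d) U)| 
            ≤ B * (8 / 3 / R ^ 2) * (M * R ^ 2) := by gcongr; exact hBt _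
          _ = 8 / 3 * (B * M) := by field_simp
          _ ≤ 3 * B * M := by nlinarith [mul_nonneg hB hM]
      rw [Real.norm_eq_abs]
      refine (abs_sub _ _).trans ?_
      calc _ ≤ M * exp (-(d * ev z V)) + 3 * B * M * exp (-(d * ev z V)) := add_le_add n1 n2
        _ = _ := by ring
    · rw [Set.indicator_of_notMem hz]
      by_cases hz1 : z ∈ B1
      · have hz2 : ‖z‖ < R / 2 := by
          by_contra hc
          exact hz ⟨hz1, by simpa using hc⟩
        rw [Set.indicator_of_mem hz1, chi_one hR hz2.le]
        simp only [hG, dchi_zero hR (Or.inl hz2)]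
        simp
      · have hz2 : R < ‖z‖ := by simpa [hB1] using hz1
        rw [Set.indicator_of_notMem hz1, chi_zero hR hz2.le]
        simp only [hG, dchi_zero hR (Or.inr hz2)]
        simp

end LapL

namespace LapL

lemma gauss_int {d : ℕ} {b : ℝ} (hb : 0 < b) :
    ∫ z : E d, exp (-b * ‖z‖ ^ 2) = (π / b) ^ ((d : ℝ) / 2) := by
  have := GaussianFourier.integral_rexp_neg_mul_sq_norm (V := E d) hb
  simpa using this

lemma gauss_integrable {d : ℕ} {b : ℝ} (hb : 0 < b) :
    Integrable (fun z : E d => exp (-b * ‖z‖ ^ 2)) := by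
  by_contra h
  have h1 := gauss_int (d := d) hb
  rw [integral_undef h] at h1
  have : 0 < (π / b) ^ ((d : ℝ) / 2) := by have := pi_pos; positivity
  linarith

lemma two_pow_le {d : ℕ} : (2 : ℝ) ^ ((d : ℝ) / 2) ≤ exp ((d : ℝ) / 2) := by
  rw [Real.rpow_def_of_pos (by norm_num)]
  apply exp_le_exp.2
  have := Real.log_two_lt_d9
  have h : (0 : ℝ) ≤ d / 2 := by positivity
  nlinarith

lemma gauss_lower {d : ℕ} {a R : ℝ} (hd : 0 < d) (ha : (d : ℝ) / 2 ≤ a) (hR : 8 ≤ R) :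
    (π / a) ^ ((d : ℝ) / 2) * (1 - exp (-(d * R ^ 2 / 8))) ≤
      ∫ z in Metric.closedBall (0 : E d) R, exp (-a * ‖z‖ ^ 2) := by
  have hd' : (0 : ℝ) < d := by exact_mod_cast hd
  have ha0 : 0 < a := by linarith
  have hpi := pi_pos
  have hi := gauss_integrable (d := d) ha0
  have hi2 := gauss_integrable (d := d) (half_pos ha0)
  have hm : MeasurableSet (Metric.closedBall (0 : E d) R) := measurableSet_closedBall
  have h1 := integral_add_compl hm hi
  rw [gauss_int ha0] at h1
  have h2 : ∫ z in (Metric.closedBall (0 : E d) R)ᶜ, exp (-a * ‖z‖ ^ 2) ≤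
      exp (-(a / 2 * R ^ 2)) * (π / (a / 2)) ^ ((d : ℝ) / 2) := by
    rw [← gauss_int (half_pos ha0), ← integral_const_mul, ← integral_indicator hm.compl]
    refine integral_mono (hi.indicator hm.compl) (hi2.const_mul _) fun z => ?_
    by_cases hz : z ∈ (Metric.closedBall (0 : E d) R)ᶜ
    · rw [Set.indicator_of_mem hz]
      have hz' : R < ‖z‖ := by simpa using hz
      simp only
      rw [← exp_add]
      apply exp_le_exp.2
      have : R ^ 2 ≤ ‖z‖ ^ 2 := by gcongr
      nlinarith
    · rw [Set.indicator_of_notMem hz]; positivity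
  have h3 : exp (-(a / 2 * R ^ 2)) * (π / (a / 2)) ^ ((d : ℝ) / 2) ≤
      (π / a) ^ ((d : ℝ) / 2) * exp (-(d * R ^ 2 / 8)) := by
    rw [show π / (a / 2) = (π / a) * 2 by field_simp, Real.mul_rpow (by positivity) (by norm_num)]
    have : exp (-(a / 2 * R ^ 2)) * (2 : ℝ) ^ ((d : ℝ) / 2) ≤ exp (-(d * R ^ 2 / 8)) := by
      calc _ ≤ exp (-(a / 2 * R ^ 2)) * exp ((d : ℝ) / 2) := by gcongr; exact two_pow_le
        _ ≤ _ := by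
          rw [← exp_add]
          apply exp_le_exp.2
          have h64 : 64 ≤ R ^ 2 := by nlinarith
          nlinarith
    have hp : 0 ≤ (π / a) ^ ((d : ℝ) / 2) := by positivity
    nlinarith
  linarith

lemma exp_neg_half {d : ℕ} {R : ℝ} (hd : 0 < d) (hR : 8 ≤ R) : exp (-(d * R ^ 2 / 8)) ≤ 1 / 2 := by
  have hd' : (1 : ℝ) ≤ d := by exact_mod_cast hd
  have h64 : 64 ≤ R ^ 2 := by nlinarith
  have h1 : (1 : ℝ) ≤ d * R ^ 2 / 8 := by nlinarith
  have : exp (-(d * R ^ 2 / 8)) ≤ exp (-1) := exp_le_exp.2 (by linarith)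
  have h2 : exp (-1) ≤ 1 / 2 := by
    rw [exp_neg, one_div]
    apply inv_anti₀ (by norm_num)
    have := add_one_le_exp (1 : ℝ)
    linarith
  linarith

/-- shell estimate -/
lemma shell {d : ℕ} {A R : ℝ} (hd : 0 < d) (hR : 8 ≤ R) (Q : E d → ℝ) (hQ : Continuous Q)
    (h : ∀ z : E d, ‖z‖ ≤ R → |Q z - ‖z‖ ^ 2 / 2| ≤ ‖z‖ ^ 2 / 8 + A / d) :
    0 < ∫ z in Metric.closedBall (0 : E d) R, exp (-(d * Q z)) ∧
    ∫ z in Metric.closedBall (0 : E d) R \ Metric.ball 0 (R / 2), exp (-(d * Q z)) ≤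
      2 * exp (2 * A) * exp (-(d * R ^ 2 / 64)) *
        ∫ z in Metric.closedBall (0 : E d) R, exp (-(d * Q z)) := by
  have hd' : (0 : ℝ) < d := by exact_mod_cast hd
  have hpi := pi_pos
  have hmB : MeasurableSet (Metric.closedBall (0 : E d) R) := measurableSet_closedBall
  have hmS : MeasurableSet (Metric.closedBall (0 : E d) R \ Metric.ball 0 (R / 2)) :=
    hmB.diff measurableSet_ball
  have hb1 : ∀ z : E d, ‖z‖ ≤ R → d * Q z ≤ 5 * d / 8 * ‖z‖ ^ 2 + A := by
    intro z hz
    have h1 := (abs_le.1 (h z hz)).2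
    have h2 : d * (Q z - ‖z‖ ^ 2 / 2) ≤ d * (‖z‖ ^ 2 / 8 + A / d) := by gcongr
    have h3 : d * (A / d) = A := by field_simp
    linarith
  have hb2 : ∀ z : E d, ‖z‖ ≤ R → 3 * d / 8 * ‖z‖ ^ 2 - A ≤ d * Q z := by
    intro z hz
    have h1 := (abs_le.1 (h z hz)).1
    have h2 : d * (-(‖z‖ ^ 2 / 8 + A / d)) ≤ d * (Q z - ‖z‖ ^ 2 / 2) := by gcongr
    have h3 : d * (A / d) = A := by field_simp
    linarith
  have hiB : IntegrableOn (fun z => exp (-(d * Q z))) (Metric.closedBall (0 : E d) R) :=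
    ContinuousOn.integrableOn_compact (isCompact_closedBall _ _) (by fun_prop)
  have low : exp (-A) * ((π / (5 * d / 8)) ^ ((d : ℝ) / 2) * (1 / 2)) ≤
      ∫ z in Metric.closedBall (0 : E d) R, exp (-(d * Q z)) := by
    have g := gauss_lower (d := d) (a := 5 * d / 8) hd (by linarith) hR
    have e := exp_neg_half hd hR
    have hp : 0 ≤ (π / (5 * d / 8)) ^ ((d : ℝ) / 2) := by positivity
    calc exp (-A) * ((π / (5 * d / 8)) ^ ((d : ℝ) / 2) * (1 / 2)) ≤
        exp (-A) * ∫ z in Metric.closedBall (0 : E d) R, exp (-(5 * d / 8) * ‖z‖ ^ 2) := by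
          refine mul_le_mul_of_nonneg_left (le_trans ?_ g) (exp_pos _).le
          gcongr; linarith
      _ ≤ _ := by
        rw [← integral_const_mul]
        refine setIntegral_mono_on ?_ hiB hmB fun z hz => ?_
        · exact ((gauss_integrable (d := d) (by positivity)).const_mul _).integrableOn
        · rw [← exp_add]
          apply exp_le_exp.2
          have := hb1 z (by simpa using hz)
          linarith
  have up : ∫ z in Metric.closedBall (0 : E d) R \ Metric.ball 0 (R / 2), exp (-(d * Q z)) ≤
      exp (A - d * R ^ 2 / 32) * (π / (d / 4)) ^ ((d : ℝ) / 2) := by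
    have hi := gauss_integrable (d := d) (b := d / 4) (by positivity)
    rw [← gauss_int (by positivity), ← integral_const_mul, ← integral_indicator hmS]
    refine integral_mono ?_ (hi.const_mul _) fun z => ?_
    · rw [integrable_indicator_iff hmS]
      exact hiB.mono_set Set.sdiff_subset
    · by_cases hz : z ∈ Metric.closedBall (0 : E d) R \ Metric.ball 0 (R / 2)
      · rw [Set.indicator_of_mem hz]
        have hz1 : ‖z‖ ≤ R := by simpa using hz.1
        have hz2 : R / 2 ≤ ‖z‖ := by simpa using hz.2
        simp only
        rw [← exp_add]
        apply exp_le_exp.2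
        have h1 : (R / 2) ^ 2 ≤ ‖z‖ ^ 2 := by gcongr
        have := hb2 z hz1
        nlinarith
      · rw [Set.indicator_of_notMem hz]; positivity
  have pos : 0 < exp (-A) * ((π / (5 * d / 8)) ^ ((d : ℝ) / 2) * (1 / 2)) := by positivity
  refine ⟨lt_of_lt_of_le pos low, ?_⟩
  refine up.trans (le_trans ?_ (mul_le_mul_of_nonneg_left low (by positivity)))
  have hr : π / (d / 4) = (π / (5 * d / 8)) * (5 / 2) := by field_simp; norm_num
  rw [hr, Real.mul_rpow (by positivity) (by norm_num)]
  have h52 : (5 / 2 : ℝ) ^ ((d : ℝ) / 2) ≤ exp (d * R ^ 2 / 64) := by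
    rw [Real.rpow_def_of_pos (by norm_num)]
    apply exp_le_exp.2
    have hl : Real.log (5 / 2) ≤ 2 := by
      have := Real.log_le_sub_one_of_pos (show (0 : ℝ) < 5 / 2 by norm_num)
      linarith
    have h64 : 64 ≤ R ^ 2 := by nlinarith
    nlinarith
  have e1 : 2 * exp (2 * A) * exp (-(d * R ^ 2 / 64)) * 
     (exp (-A) * ((π / (5 * d / 8)) ^ ((d : ℝ) / 2) * (1 / 2))) =
     exp (A - d * R ^ 2 / 32) * ((π / (5 * d / 8)) ^ ((d : ℝ) / 2) * exp (d * R ^ 2 / 64)) := by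
    have : exp (2 * A) * exp (-(d * R ^ 2 / 64)) * exp (-A) = exp (A - d * R ^ 2 / 32) * exp (d * R ^ 2 / 64) := by
      rw [← exp_add, ← exp_add, ← exp_add]; congr 1; ring
    linear_combination ((π / (5 * d / 8)) ^ ((d : ℝ) / 2)) * this
  rw [e1]
  gcongr

/-- normalised Gaussian on the ball -/
lemma gauss_log {d : ℕ} {R : ℝ} (hd : 0 < d) (hR : 8 ≤ R) :
    |Real.log (((d : ℝ) / (2 * π)) ^ ((d : ℝ) / 2) *
      ∫ z in Metric.closedBall (0 : E d) R, exp (-(d * (‖z‖ ^ 2 / 2))))| ≤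
      2 * exp (-(d * R ^ 2 / 8)) := by
  have hd' : (0 : ℝ) < d := by exact_mod_cast hd
  have hpi := pi_pos
  have e := exp_neg_half hd hR
  have e0 := exp_pos (-(d * R ^ 2 / 8))
  have g := gauss_lower (d := d) (a := d / 2) hd le_rfl hR
  have hi := gauss_integrable (d := d) (b := d / 2) (by positivity)
  have g2 : ∫ z in Metric.closedBall (0 : E d) R, exp (-(d / 2 : ℝ) * ‖z‖ ^ 2) ≤
      (π / (d / 2)) ^ ((d : ℝ) / 2) := by
    rw [← gauss_int (by positivity)]
    exact setIntegral_le_integral hi (Filter.Eventually.of_forall fun z => (exp_pos _).le)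
  have e2 : ∀ z : E d, exp (-(d * (‖z‖ ^ 2 / 2))) = exp (-(d / 2 : ℝ) * ‖z‖ ^ 2) := by
    intro z; congr 1; ring
  simp only [e2]
  set I := ∫ z in Metric.closedBall (0 : E d) R, exp (-(d / 2 : ℝ) * ‖z‖ ^ 2)
  have hone : ((d : ℝ) / (2 * π)) ^ ((d : ℝ) / 2) * (π / (d / 2)) ^ ((d : ℝ) / 2) = 1 := by
    rw [← Real.mul_rpow (by positivity) (by positivity)]
    rw [show (d : ℝ) / (2 * π) * (π / (d / 2)) = 1 by field_simp]
    simp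
  set c := ((d : ℝ) / (2 * π)) ^ ((d : ℝ) / 2) with hc
  have hcp : 0 < c := by positivity
  have u1 : c * I ≤ 1 := by rw [← hone]; gcongr
  have l1 : 1 - exp (-(d * R ^ 2 / 8)) ≤ c * I := by
    calc _ = c * ((π / (d / 2)) ^ ((d : ℝ) / 2) * (1 - exp (-(d * R ^ 2 / 8)))) := by
          rw [← mul_assoc, hone, one_mul]
      _ ≤ _ := by gcongr
  have hpos : 0 < c * I := by linarith
  rw [abs_le]
  constructor
  · have := Real.one_sub_inv_le_log_of_pos hpos
    have h3 : (c * I)⁻¹ ≤ 1 + 2 * exp (-(d * R ^ 2 / 8)) := by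
      rw [inv_le_iff_one_le_mul₀ hpos]
      nlinarith
    linarith
  · have := Real.log_nonpos hpos.le u1
    linarith

end LapL

namespace LapL

lemma ev_Vp {d : ℕ} (N : ℕ) (w : ℕ → P d) (s : ℝ) (z : E d) :
    ev z (Vp N w s) = ‖z‖ ^ 2 / 2 + ∑ j ∈ Finset.range N, s ^ (j + 1) * ev z (w j) := by
  unfold Vp
  simp only [map_add, map_sum, map_mul, ev_C, ev_rr]

lemma ev_Dp {d : ℕ} (N : ℕ) (w : ℕ → P d) (s : ℝ) (z : E d) :
    ev z (Dp N w s) = ∑ j ∈ Finset.range N, s ^ j * (((j : ℝ) + 1) * ev z (w j)) := by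
  unfold Dp
  simp only [map_sum, map_mul, ev_C]

def ZZ {d : ℕ} (N : ℕ) (w : ℕ → P d) (R s : ℝ) : ℝ :=
  ∫ z in Metric.closedBall (0 : E d) R, exp (-(d * ev z (Vp N w s)))

lemma ZZ_deriv {d : ℕ} (N : ℕ) (w : ℕ → P d) (R s : ℝ) :
    HasDerivAt (ZZ N w R)
      (∫ z in Metric.closedBall (0 : E d) R,
        -(d * ev z (Dp N w s)) * exp (-(d * ev z (Vp N w s)))) s := by
  have hwc : ∀ j, Continuous fun z : E d => ev z (w j) := fun j => ev_continuous (w j)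
  have hVc : Continuous fun q : ℝ × E d => ev q.2 (Vp N w q.1) := by
    simp only [ev_Vp]
    have : ∀ j, Continuous fun q : ℝ × E d => ev q.2 (w j) := fun j => (hwc j).comp continuous_snd
    fun_prop
  have hDc : Continuous fun q : ℝ × E d => ev q.2 (Dp N w q.1) := by
    simp only [ev_Dp]
    have : ∀ j, Continuous fun q : ℝ × E d => ev q.2 (w j) := fun j => (hwc j).comp continuous_snd
    fun_prop
  have hFc : Continuous fun q : ℝ × E d =>
      -(d * ev q.2 (Dp N w q.1)) * exp (-(d * ev q.2 (Vp N w q.1))) := by fun_prop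
  obtain ⟨M, hM⟩ := ((isCompact_Icc (a := s - 1) (b := s + 1)).prod
    (isCompact_closedBall (0 : E d) R)).exists_bound_of_continuousOn hFc.continuousOn
  have hm : MeasurableSet (Metric.closedBall (0 : E d) R) := measurableSet_closedBall
  refine (hasDerivAt_integral_of_dominated_loc_of_deriv_le
    (μ := volume.restrict (Metric.closedBall (0 : E d) R))
    (F := fun s z => exp (-(d * ev z (Vp N w s))))
    (F' := fun s z => -(d * ev z (Dp N w s)) * exp (-(d * ev z (Vp N w s))))
    (s := Set.Icc (s - 1) (s + 1)) (bound := fun _ => M)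
    (Icc_mem_nhds (by linarith) (by linarith)) ?_ ?_ ?_ ?_ ?_ ?_).2
  · refine Filter.Eventually.of_forall fun s => ?_
    have := ev_continuous (Vp N w s)
    exact Continuous.aestronglyMeasurable (by fun_prop)
  · have := ev_continuous (Vp N w s)
    exact ContinuousOn.integrableOn_compact (isCompact_closedBall _ _) (by fun_prop)
  · have := ev_continuous (Vp N w s)
    have := ev_continuous (Dp N w s)
    exact Continuous.aestronglyMeasurable (by fun_prop)
  · filter_upwards [ae_restrict_mem hm] with z hz t ht
    exact hM (t, z) ⟨ht, hz⟩
  · exact integrableOn_const (isCompact_closedBall (0 : E d) R).measure_lt_top.ne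
  · refine Filter.Eventually.of_forall fun z t _ => ?_
    have h1 : HasDerivAt (fun t => ev z (Vp N w t)) (ev z (Dp N w t)) t := by
      simp only [ev_Vp, ev_Dp]
      refine HasDerivAt.const_add _ (HasDerivAt.fun_sum fun j _ => ?_)
      have := (hasDerivAt_pow (j + 1) t).mul_const (ev z (w j))
      refine this.congr_deriv ?_
      push_cast
      try simp only [Nat.add_sub_cancel]
      ring
    have h2 := ((h1.const_mul (d : ℝ)).neg).exp
    refine h2.congr_deriv ?_
    simp only [Pi.neg_apply]
    ring

lemma core (C K A : ℝ) (hC : 0 ≤ C) (hK : 0 ≤ K) (N : ℕ) : ∃ C1 : ℝ, 1 ≤ C1 ∧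
    ∀ (d : ℕ), 0 < d → ∀ (w u : ℕ → P d) (c : ℕ → ℝ), (∀ j, Nice (j + 3) C (w j)) →
    (∀ j < N, Nice (j + 3) K (u j)) → (∀ j < N, |c j| ≤ K) →
    (∀ j < N, ou (u j) = MvPolynomial.C ((j : ℝ) + 1) * w j
        - (∑ i ∈ Finset.range j, gradIn (w (j - 1 - i)) (u i)) - MvPolynomial.C (c j)) →
    ∀ S R : ℝ, 0 ≤ S → 8 ≤ R → S * R ≤ 1 →
    (∀ s, 0 ≤ s → s ≤ S → ∀ z : E d, ‖z‖ ≤ R →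
      |ev z (Vp N w s) - ‖z‖ ^ 2 / 2| ≤ ‖z‖ ^ 2 / 8 + A / d) →
    0 < ZZ N w R S ∧ 0 < ZZ N w R 0 ∧
    |Real.log (ZZ N w R S) - Real.log (ZZ N w R 0) +
      d * ∑ j ∈ Finset.range N, c j * S ^ (j + 1) / ((j : ℝ) + 1)| ≤
      C1 * (S * (d * R ^ 3 * exp (-(d * R ^ 2 / 64))) + d * (S ^ (N + 1) * R ^ (N + 3))) := by
  obtain ⟨B, hB, hb⟩ := bounds C K hC N
  obtain ⟨A', hA', hs⟩ := ibp_shell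
  refine ⟨A' * (2 * B + N * K) * (2 * exp (2 * A)) + B, ?_, ?_⟩
  · have : 0 ≤ A' * (2 * B + N * K) * (2 * exp (2 * A)) := by positivity
    linarith
  intro d hd w u c hw hu hc hrec S R hS hR hSR hV
  have hd' : (0 : ℝ) < d := by exact_mod_cast hd
  have hpos : ∀ s, 0 ≤ s → s ≤ S → 0 < ZZ N w R s := fun s h1 h2 =>
    (shell hd hR (fun z => ev z (Vp N w s)) (ev_continuous _) (hV s h1 h2)).1
  refine ⟨hpos S hS le_rfl, hpos 0 le_rfl hS, ?_⟩
  set Z' : ℝ → ℝ := fun s => ∫ z in Metric.closedBall (0 : E d) R,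
        -(d * ev z (Dp N w s)) * exp (-(d * ev z (Vp N w s))) with hZ'
  set φ : ℝ → ℝ := fun s => Real.log (ZZ N w R s) +
    d * ∑ j ∈ Finset.range N, c j * s ^ (j + 1) / ((j : ℝ) + 1) with hφ
  set φ' : ℝ → ℝ := fun s => Z' s / ZZ N w R s + d * ∑ j ∈ Finset.range N, s ^ j * c j with hφ'
  set Bd := A' * (d * (2 * B + N * K) * R ^ 3) * (2 * exp (2 * A) * exp (-(d * R ^ 2 / 64))) +
     d * (B * (S ^ N * R ^ (N + 3))) with hBd
  have hder : ∀ s ∈ Set.Icc 0 S, HasDerivWithinAt φ (φ' s) (Set.Icc 0 S) s := by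
    intro s hs
    have h1 := (ZZ_deriv N w R s).log (hpos s hs.1 hs.2).ne'
    have h2 : HasDerivAt (fun s : ℝ => ∑ j ∈ Finset.range N, c j * s ^ (j + 1) / ((j : ℝ) + 1))
        (∑ j ∈ Finset.range N, s ^ j * c j) s := by
      refine HasDerivAt.fun_sum fun j _ => ?_
      refine (((hasDerivAt_pow (j + 1) s).const_mul (c j)).div_const ((j : ℝ) + 1)).congr_deriv ?_
      have : (j : ℝ) + 1 ≠ 0 := by positivity
      push_cast
      try simp only [Nat.add_sub_cancel]
      field_simp
    exact (h1.add (h2.const_mul (d : ℝ))).hasDerivWithinAt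
  have hbd : ∀ s ∈ Set.Ico 0 S, ‖φ' s‖ ≤ Bd := by
    intro s hs'
    have hs0 := hs'.1
    have hsS := hs'.2.le
    have hZ := hpos s hs0 hsS
    have hsR : s * R ≤ 1 := le_trans (by gcongr) hSR
    have hs1 : s ≤ 1 := by nlinarith
    have hbz := hb d w u hw hu s R hs0 (by linarith) hsR
    have hid := main_identity (N := N) w u c s hrec
    set cs := ∑ j ∈ Finset.range N, s ^ j * c j with hcs
    have hcsb : |cs| ≤ N * K := by
      calc |cs| ≤ ∑ j ∈ Finset.range N, |s ^ j * c j| := Finset.abs_sum_le_sum_abs _ _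
        _ ≤ ∑ j ∈ Finset.range N, K := by
          refine Finset.sum_le_sum fun j hj => ?_
          rw [abs_mul, abs_of_nonneg (by positivity)]
          have h1 : s ^ j ≤ 1 := pow_le_one₀ hs0 hs1
          have h2 := hc j (Finset.mem_range.1 hj)
          have h3 := abs_nonneg (c j)
          nlinarith
        _ = N * K := by simp
    have hide : ∀ z : E d, ev z (lap (Up N u s)) - d * ev z (gradIn (Vp N w s) (Up N u s)) =
        -(d * (ev z (Dp N w s) - cs + ev z (Rem N w u s))) := by
      intro z
      have := congrArg (ev z) hid
      simp only [map_sub, map_add, map_mul, ev_C] at this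
      rw [← this]
      field_simp
      ring
    have hRN : s ^ N * R ^ (N + 3) ≤ R ^ 3 := by
      rw [pow_add, ← mul_assoc, ← mul_pow]
      have : (s * R) ^ N ≤ 1 := pow_le_one₀ (by positivity) hsR
      have : 0 ≤ R ^ 3 := by positivity
      nlinarith
    have hR3 : 1 ≤ R ^ 3 := one_le_pow₀ (by linarith)
    have hNK : 0 ≤ N * K := by positivity
    have hM := hs d (Vp N w s) (Up N u s) R (d * (2 * B + N * K) * R ^ 3) (by linarith)
      (by positivity) (by
        intro z hz
        obtain ⟨b1, b2, b3⟩ := hbz z hz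
        constructor
        · rw [hide, abs_neg, abs_mul, abs_of_pos hd', mul_assoc]
          refine mul_le_mul_of_nonneg_left ?_ hd'.le
          calc |ev z (Dp N w s) - cs + ev z (Rem N w u s)| 
              ≤ |ev z (Dp N w s)| + |cs| + |ev z (Rem N w u s)| :=
                (abs_add_le _ _).trans (by gcongr; exact abs_sub _ _)
            _ ≤ B * R ^ 3 + N * K + B * R ^ 3 := by
              gcongr
              refine b1.trans ?_
              gcongr
            _ ≤ _ := by nlinarith
        · refine b3.trans ?_
          have hd1 : (1 : ℝ) ≤ d := by exact_mod_cast hd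
          have h1 : B ≤ d * (2 * B + N * K) := by nlinarith
          have hR2 : 1 ≤ R ^ 2 := one_le_pow₀ (by linarith)
          calc B * R ^ 3 ≤ d * (2 * B + N * K) * R ^ 3 * 1 := by rw [mul_one]; gcongr
            _ ≤ _ := by gcongr)
    have hsh := (shell hd hR (fun z => ev z (Vp N w s)) (ev_continuous _) (hV s hs0 hsS)).2
    have cV := ev_continuous (Vp N w s)
    have cD := ev_continuous (Dp N w s)
    have cR := ev_continuous (Rem N w u s)
    have cL := ev_continuous (lap (Up N u s))
    have cG := ev_continuous (gradIn (Vp N w s) (Up N u s))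
    have i1 : IntegrableOn (fun z => (ev z (lap (Up N u s)) -
        d * ev z (gradIn (Vp N w s) (Up N u s))) * exp (-(d * ev z (Vp N w s))))
        (Metric.closedBall (0 : E d) R) :=
      ContinuousOn.integrableOn_compact (isCompact_closedBall _ _) (by fun_prop)
    have i2 : IntegrableOn (fun z => d * cs * exp (-(d * ev z (Vp N w s))))
        (Metric.closedBall (0 : E d) R) :=
      ContinuousOn.integrableOn_compact (isCompact_closedBall _ _) (by fun_prop)
    have i3 : IntegrableOn (fun z => d * ev z (Rem N w u s) * exp (-(d * ev z (Vp N w s))))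
        (Metric.closedBall (0 : E d) R) :=
      ContinuousOn.integrableOn_compact (isCompact_closedBall _ _) (by fun_prop)
    have i4 : IntegrableOn (fun z => d * (B * (S ^ N * R ^ (N + 3))) * exp (-(d * ev z (Vp N w s))))
        (Metric.closedBall (0 : E d) R) :=
      ContinuousOn.integrableOn_compact (isCompact_closedBall _ _) (by fun_prop)
    have hm : MeasurableSet (Metric.closedBall (0 : E d) R) := measurableSet_closedBall
    have eZ : Z' s = (∫ z in Metric.closedBall (0 : E d) R, (ev z (lap (Up N u s)) -
        d * ev z (gradIn (Vp N w s) (Up N u s))) * exp (-(d * ev z (Vp N w s)))) - d * cs * ZZ N w R s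
        + ∫ z in Metric.closedBall (0 : E d) R, d * ev z (Rem N w u s) * exp (-(d * ev z (Vp N w s))) := by
      unfold ZZ
      have i12 : IntegrableOn (fun z => (ev z (lap (Up N u s)) -
        d * ev z (gradIn (Vp N w s) (Up N u s))) * exp (-(d * ev z (Vp N w s))) -
        d * cs * exp (-(d * ev z (Vp N w s)))) (Metric.closedBall (0 : E d) R) := i1.sub i2
      rw [← integral_const_mul, ← integral_sub i1 i2, ← integral_add i12 i3]
      refine integral_congr_ae (Filter.Eventually.of_forall fun z => ?_)
      simp only [Pi.sub_apply, hide]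
      ring
    have bR : |∫ z in Metric.closedBall (0 : E d) R, d * ev z (Rem N w u s) * exp (-(d * ev z (Vp N w s)))|
        ≤ d * (B * (S ^ N * R ^ (N + 3))) * ZZ N w R s := by
      unfold ZZ
      rw [← integral_const_mul, ← Real.norm_eq_abs]
      refine norm_integral_le_of_norm_le i4 ?_
      filter_upwards [ae_restrict_mem hm] with z hz
      obtain ⟨b1, -, -⟩ := hbz z (by simpa using hz)
      rw [Real.norm_eq_abs, abs_mul, abs_mul, abs_of_pos hd', abs_of_pos (exp_pos _)]
      have : |ev z (Rem N w u s)| ≤ B * (S ^ N * R ^ (N + 3)) := by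
        refine b1.trans ?_
        have hR0 : 0 ≤ R := by linarith
        gcongr
      gcongr
    have eφ : φ' s = ((∫ z in Metric.closedBall (0 : E d) R, (ev z (lap (Up N u s)) -
        d * ev z (gradIn (Vp N w s) (Up N u s))) * exp (-(d * ev z (Vp N w s))))
        + ∫ z in Metric.closedBall (0 : E d) R, d * ev z (Rem N w u s) * exp (-(d * ev z (Vp N w s))))
          / ZZ N w R s := by
      simp only [hφ']
      rw [eZ]
      field_simp
      ring
    rw [eφ, Real.norm_eq_abs, abs_div, abs_of_pos hZ, div_le_iff₀ hZ]
    refine (abs_add_le _ _).trans ?_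
    rw [hBd, add_mul]
    refine add_le_add (hM.trans ?_) bR
    rw [mul_assoc (A' * (d * (2 * B + N * K) * R ^ 3))]
    exact mul_le_mul_of_nonneg_left hsh (by positivity)
  have hmv := norm_image_sub_le_of_norm_deriv_le_segment' hder hbd S ⟨hS, le_rfl⟩
  have e0 : φ S - φ 0 = Real.log (ZZ N w R S) - Real.log (ZZ N w R 0) +
      d * ∑ j ∈ Finset.range N, c j * S ^ (j + 1) / ((j : ℝ) + 1) := by
    simp only [hφ]
    simp
    ring
  rw [← e0, ← Real.norm_eq_abs]
  refine hmv.trans ?_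
  rw [hBd]
  have hR0 : 0 ≤ R := by linarith
  have p1 : 0 ≤ S * (d * R ^ 3 * exp (-(d * R ^ 2 / 64))) := by positivity
  have p2 : 0 ≤ d * (S ^ (N + 1) * R ^ (N + 3)) := by positivity
  have p3 : 0 ≤ A' * (2 * B + N * K) * (2 * exp (2 * A)) := by positivity
  have : (A' * (d * (2 * B + N * K) * R ^ 3) * (2 * exp (2 * A) * exp (-(d * R ^ 2 / 64))) +
     d * (B * (S ^ N * R ^ (N + 3)))) * (S - 0) = A' * (2 * B + N * K) * (2 * exp (2 * A)) *
      (S * (d * R ^ 3 * exp (-(d * R ^ 2 / 64)))) + B * (d * (S ^ (N + 1) * R ^ (N + 3))) := by ring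
  rw [this]
  nlinarith [mul_nonneg p3 p2, mul_nonneg (by linarith : 0 ≤ B) p1]

end LapL

namespace LapL

lemma multilin_scale {d k : ℕ} (T : MultilinearMap ℝ (fun _ : Fin k => E d) ℝ) (S : ℝ) (z : E d) :
    (T fun _ => S • z) = S ^ k * T fun _ => z := by
  have := T.map_smul_univ (fun _ => S) (fun _ => z)
  simpa using this

lemma sum_Icc_shift (a n : ℕ) (F : ℕ → ℝ) (b : ℕ) (hb : b + 1 = a + n) :
    ∑ k ∈ Finset.Icc a b, F k = ∑ j ∈ Finset.range n, F (j + a) := by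
  have : Finset.Icc a b = Finset.Ico a (b + 1) := by
    ext x; simp only [Finset.mem_Icc, Finset.mem_Ico]; omega
  rw [this, Finset.sum_Ico_eq_sum_range, show b + 1 - a = n by omega]
  exact Finset.sum_congr rfl fun j _ => by rw [add_comm]

lemma exists_w (L : ℕ) (hL : 1 ≤ L) (cf cg : ℝ) (hcf : 1 ≤ cf) (hcg : 1 ≤ cg) {d : ℕ} (hd : 0 < d)
    (T G : (k : ℕ) → MultilinearMap ℝ (fun _ : Fin k => E d) ℝ)
    (hT : ∀ k, 3 ≤ k → k ≤ 2 * L + 1 → ∀ u : E d, ‖u‖ = 1 → |T k fun _ => u| ≤ cf)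
    (hG : ∀ k, 1 ≤ k → k ≤ 2 * L - 1 → ∀ u : E d, ‖u‖ = 1 → |G k fun _ => u| ≤ cg) :
    ∃ w : ℕ → P d, (∀ j, Nice (j + 3) (cf + cg) (w j)) ∧
      (∀ s : ℝ, ∀ z : E d, 0 ≤ s → s * ‖z‖ ≤ 1 → ((2 * L - 1 : ℕ) : ℝ) * cf * (s * ‖z‖) ≤ 1 / 8 →
        |ev z (Vp (2 * L - 1) w s) - ‖z‖ ^ 2 / 2| ≤ ‖z‖ ^ 2 / 8 + ((2 * L - 1 : ℕ) : ℝ) * cg / d) ∧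
      (∀ lam S : ℝ, lam * S ^ 2 = d → ∀ z : E d,
        d * ev z (Vp (2 * L - 1) w S) =
          lam * (‖S • z‖ ^ 2 / 2 + ∑ k ∈ Finset.Icc 3 (2 * L + 1),
              (1 / (Nat.factorial k) : ℝ) * T k fun _ => S • z) -
          ∑ k ∈ Finset.Icc 1 (2 * L - 1), (1 / (Nat.factorial k) : ℝ) * G k fun _ => S • z) := by
  have hd' : (0 : ℝ) < d := by exact_mod_cast hd
  have hd1 : (1 : ℝ) ≤ d := by exact_mod_cast hd
  have ET : ∀ j, ∃ p : P d, j < 2 * L - 1 → Hom (j + 3) cf p ∧ ∀ z, ev z p = T (j + 3) fun _ => z := by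
    intro j
    by_cases hj : j < 2 * L - 1
    · obtain ⟨p, hp⟩ := exists_poly (T (j + 3)) (by omega) (by linarith : 0 ≤ cf)
        (hT (j + 3) (by omega) (by omega))
      exact ⟨p, fun _ => hp⟩
    · exact ⟨0, fun h => absurd h hj⟩
  have EG : ∀ j, ∃ p : P d, j < 2 * L - 1 → Hom (j + 1) cg p ∧ ∀ z, ev z p = G (j + 1) fun _ => z := by
    intro j
    by_cases hj : j < 2 * L - 1
    · obtain ⟨p, hp⟩ := exists_poly (G (j + 1)) (by omega) (by linarith : 0 ≤ cg)
        (hG (j + 1) (by omega) (by omega))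
      exact ⟨p, fun _ => hp⟩
    · exact ⟨0, fun h => absurd h hj⟩
  choose pT hpT using ET
  choose pG hpG using EG
  set N := 2 * L - 1 with hN
  have hfac : ∀ k : ℕ, (1 : ℝ) / (Nat.factorial k) ≤ 1 := by
    intro k
    rw [div_le_one (by positivity)]
    exact_mod_cast Nat.factorial_pos k
  have hfac0 : ∀ k : ℕ, (0 : ℝ) ≤ 1 / (Nat.factorial k) := fun k => by positivity
  set w : ℕ → P d := fun j => if j < N then
    MvPolynomial.C (1 / (Nat.factorial (j + 3)) : ℝ) * pT j +
      MvPolynomial.C (-(1 / d * (1 / (Nat.factorial (j + 1)))) : ℝ) * pG j else 0 with hw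
  have hev : ∀ j < N, ∀ z, ev z (w j) = 1 / (Nat.factorial (j + 3)) * (T (j + 3) fun _ => z) -
      1 / d * (1 / (Nat.factorial (j + 1)) * (G (j + 1) fun _ => z)) := by
    intro j hj z
    simp only [hw, if_pos hj, map_add, map_mul, ev_C, (hpT j hj).2, (hpG j hj).2]
    ring
  refine ⟨w, ?_, ?_, ?_⟩
  · intro j
    by_cases hj : j < N
    · simp only [hw, if_pos hj]
      refine Nice.add ?_ ?_
      · refine (((hpT j hj).1.nice (by linarith)).smul _).mono ?_
        rw [abs_of_nonneg (hfac0 _)]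
        have := hfac (j + 3)
        nlinarith
      · refine ((((hpG j hj).1.nice (by linarith)).up (by omega) ⟨j + 2, by ring⟩).smul _).mono ?_
        rw [abs_neg, abs_of_nonneg (by positivity)]
        have h1 := hfac (j + 1)
        have h2 : 1 / (d : ℝ) ≤ 1 := by rw [div_le_one hd']; exact hd1
        have h3 : 1 / (d : ℝ) * (1 / (Nat.factorial (j + 1))) ≤ 1 := mul_le_one₀ h2 (hfac0 _) h1
        nlinarith
    · simp only [hw, if_neg hj]
      exact Nice.zero (by linarith)
  · intro s z hs hsz hsm
    rw [ev_Vp, add_sub_cancel_left]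
    have hterm : ∀ j ∈ Finset.range N, |s ^ (j + 1) * ev z (w j)| ≤
        cf * (s * ‖z‖) * ‖z‖ ^ 2 + cg / d := by
      intro j hj
      have hj := Finset.mem_range.1 hj
      rw [hev j hj, ← (hpT j hj).2, ← (hpG j hj).2]
      have b1 := (hpT j hj).1.2 z
      have b2 := (hpG j hj).1.2 z
      rw [abs_mul, abs_of_nonneg (by positivity)]
      have hq : 0 ≤ s * ‖z‖ := by positivity
      have c1 : |(1 : ℝ) / (Nat.factorial (j + 3)) * ev z (pT j)| ≤ cf * ‖z‖ ^ (j + 3) := by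
        rw [abs_mul, abs_of_nonneg (hfac0 _)]
        calc _ ≤ 1 * |ev z (pT j)| := by gcongr; exact hfac _
          _ ≤ _ := by rw [one_mul]; exact b1
      have c2 : |(1 : ℝ) / d * (1 / (Nat.factorial (j + 1)) * ev z (pG j))| ≤ 1 / d * (cg * ‖z‖ ^ (j + 1)) := by
        rw [abs_mul, abs_mul, abs_of_nonneg (hfac0 _), abs_of_nonneg (by positivity)]
        refine mul_le_mul_of_nonneg_left ?_ (by positivity)
        calc _ ≤ 1 * |ev z (pG j)| := by gcongr; exact hfac _
          _ ≤ _ := by rw [one_mul]; exact b2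
      calc s ^ (j + 1) * |1 / (Nat.factorial (j + 3)) * ev z (pT j) -
            1 / d * (1 / (Nat.factorial (j + 1)) * ev z (pG j))|
          ≤ s ^ (j + 1) * (cf * ‖z‖ ^ (j + 3) + 1 / d * (cg * ‖z‖ ^ (j + 1))) := by
            gcongr
            exact (abs_sub _ _).trans (add_le_add c1 c2)
        _ = cf * ((s * ‖z‖) ^ j * (s * ‖z‖)) * ‖z‖ ^ 2 + cg / d * (s * ‖z‖) ^ (j + 1) := by ring
        _ ≤ cf * (1 * (s * ‖z‖)) * ‖z‖ ^ 2 + cg / d * 1 := by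
            gcongr
            · exact pow_le_one₀ hq hsz
            · exact pow_le_one₀ hq hsz
        _ = _ := by ring
    calc |∑ j ∈ Finset.range N, s ^ (j + 1) * ev z (w j)| ≤ _ := Finset.abs_sum_le_sum_abs _ _
      _ ≤ ∑ j ∈ Finset.range N, (cf * (s * ‖z‖) * ‖z‖ ^ 2 + cg / d) := Finset.sum_le_sum hterm
      _ = (N * cf * (s * ‖z‖)) * ‖z‖ ^ 2 + N * cg / d := by simp; ring
      _ ≤ 1 / 8 * ‖z‖ ^ 2 + N * cg / d := by gcongr
      _ = _ := by ring
  · intro lam S hlS z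
    rw [ev_Vp, sum_Icc_shift 3 N _ (2 * L + 1) (by omega), sum_Icc_shift 1 N _ N (by omega)]
    have e1 : ∑ j ∈ Finset.range N, S ^ (j + 1) * ev z (w j) =
        ∑ j ∈ Finset.range N, (S ^ (j + 1) * (1 / (Nat.factorial (j + 3)) * (T (j + 3) fun _ => z) -
      1 / d * (1 / (Nat.factorial (j + 1)) * (G (j + 1) fun _ => z)))) :=
      Finset.sum_congr rfl fun j hj => by rw [hev j (Finset.mem_range.1 hj)]
    rw [e1, mul_add, mul_add, Finset.mul_sum, Finset.mul_sum, add_sub_assoc, ← Finset.sum_sub_distrib,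
      norm_smul, mul_pow, Real.norm_eq_abs, sq_abs]
    congr 1
    · rw [← hlS]; ring
    · refine Finset.sum_congr rfl fun j _ => ?_
      rw [multilin_scale, multilin_scale]
      have : (d : ℝ) * (1 / d) = 1 := by field_simp
      rw [mul_left_comm _ (S ^ (j + 3)), mul_left_comm (1 / (Nat.factorial (j + 1)) : ℝ) (S ^ (j + 1))]
      generalize (1 : ℝ) / (Nat.factorial (j + 3)) * (T (j + 3) fun _ => z) = tt
      generalize (1 : ℝ) / (Nat.factorial (j + 1)) * (G (j + 1) fun _ => z) = gg
      generalize (1 : ℝ) / d = dd at this ⊢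
      linear_combination (-S ^ (j + 1) * gg) * this - (S ^ (j + 1) * tt) * hlS

end LapL

namespace LapL

lemma odd_sum (h : ℕ → ℝ) (m : ℕ) (h0 : ∀ j < 2 * m + 1, Even j → h j = 0) :
    ∑ j ∈ Finset.range (2 * m + 1), h j = ∑ k ∈ Finset.Icc 1 m, h (2 * k - 1) := by
  induction m with
  | zero => simpa using h0 0 (by omega) (by simp)
  | succ m ih =>
    rw [show 2 * (m + 1) + 1 = 2 * m + 1 + 1 + 1 by ring, Finset.sum_range_succ,
      Finset.sum_range_succ, ih (fun j hj => h0 j (by omega)), Finset.sum_Icc_succ_top (by omega),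
      h0 (2 * m + 1 + 1) (by omega) ⟨m + 1, by ring⟩]
    rw [show 2 * (m + 1) - 1 = 2 * m + 1 by omega, add_zero]

lemma zero_dim_volume (F : E 0 → ℝ) (r : ℝ) (hr : 0 ≤ r) :
    ∫ x in Metric.closedBall (0 : E 0) r, F x = F 0 := by
  have h1 := gauss_int (d := 0) (b := 1) one_pos
  have e : ∀ z : E 0, z = 0 := fun z => Subsingleton.elim _ _
  have hu : Metric.closedBall (0 : E 0) r = Set.univ := by
    ext z; simp [e z, hr]
  have e2 : (fun z : E 0 => exp (-1 * ‖z‖ ^ 2)) = fun _ => 1 := by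
    funext z; simp [e z]
  rw [e2] at h1
  have e3 : F = fun _ => F 0 := by funext z; rw [e z]
  rw [hu, setIntegral_univ, e3]
  simp only [integral_const, smul_eq_mul] at h1 ⊢
  rw [mul_one] at h1
  rw [h1]; simp

/-- comparison of the original integral with the rescaled model integral -/
lemma compare {d : ℕ} {S R lam E1 r₀ : ℝ} (hS : 0 < S) (hR : 0 ≤ R) (hr : R * S ≤ r₀)
    (f g : E d → ℝ) (hf : ContinuousOn f (Metric.closedBall 0 r₀))
    (hg : ContinuousOn g (Metric.closedBall 0 r₀)) (hgp : ∀ x : E d, ‖x‖ ≤ r₀ → 0 < g x)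
    (Q : E d → ℝ) (hQ : Continuous Q)
    (hc : ∀ z : E d, ‖z‖ ≤ R → |Real.log (g (S • z)) - lam * f (S • z) + d * Q z| ≤ E1)
    (hpos : 0 < ∫ z in Metric.closedBall (0 : E d) R, exp (-(d * Q z))) :
    ∃ J : ℝ, 0 < J ∧ ∫ x in Metric.closedBall (0 : E d) (R * S), g x * exp (-(lam * f x)) = S ^ d * J ∧
      |Real.log J - Real.log (∫ z in Metric.closedBall (0 : E d) R, exp (-(d * Q z)))| ≤ E1 := by
  have hm : MeasurableSet (Metric.closedBall (0 : E d) R) := measurableSet_closedBall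
  have hmaps : ∀ z : E d, ‖z‖ ≤ R → ‖S • z‖ ≤ r₀ := by
    intro z hz
    rw [norm_smul, Real.norm_eq_abs, abs_of_pos hS]
    calc S * ‖z‖ ≤ S * R := by gcongr
      _ ≤ r₀ := by linarith
  have hmt : Set.MapsTo (fun z : E d => S • z) (Metric.closedBall 0 R) (Metric.closedBall 0 r₀) := by
    intro z hz
    simpa using hmaps z (by simpa using hz)
  have hsc : ContinuousOn (fun z : E d => S • z) (Metric.closedBall 0 R) := by fun_prop
  have hi1 : IntegrableOn (fun z => g (S • z) * exp (-(lam * f (S • z)))) (Metric.closedBall (0 : E d) R) := by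
    refine ContinuousOn.integrableOn_compact (isCompact_closedBall _ _) ?_
    have a1 : ContinuousOn (fun z : E d => g (S • z)) (Metric.closedBall 0 R) := hg.comp hsc hmt
    have a2 : ContinuousOn (fun z : E d => f (S • z)) (Metric.closedBall 0 R) := hf.comp hsc hmt
    exact a1.mul ((a2.const_mul lam).neg.rexp)
  have hi2 : IntegrableOn (fun z => exp (-(d * Q z))) (Metric.closedBall (0 : E d) R) :=
    ContinuousOn.integrableOn_compact (isCompact_closedBall _ _) (by fun_prop)
  have hF : ∀ z : E d, ‖z‖ ≤ R → g (S • z) * exp (-(lam * f (S • z))) =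
      exp (Real.log (g (S • z)) - lam * f (S • z)) := by
    intro z hz
    rw [sub_eq_add_neg, exp_add, Real.exp_log (hgp _ (hmaps z hz))]
  set Z := ∫ z in Metric.closedBall (0 : E d) R, exp (-(d * Q z)) with hZ
  set J := ∫ z in Metric.closedBall (0 : E d) R, g (S • z) * exp (-(lam * f (S • z))) with hJ
  have up : J ≤ exp E1 * Z := by
    rw [hZ, ← integral_const_mul]
    refine setIntegral_mono_on hi1 (hi2.const_mul _) hm fun z hz => ?_
    have hz : ‖z‖ ≤ R := by simpa using hz
    rw [hF z hz, ← exp_add]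
    apply exp_le_exp.2
    have := (abs_le.1 (hc z hz)).2
    linarith
  have low : exp (-E1) * Z ≤ J := by
    rw [hZ, ← integral_const_mul]
    refine setIntegral_mono_on (hi2.const_mul _) hi1 hm fun z hz => ?_
    have hz : ‖z‖ ≤ R := by simpa using hz
    rw [hF z hz, ← exp_add]
    apply exp_le_exp.2
    have := (abs_le.1 (hc z hz)).1
    linarith
  have hJp : 0 < J := lt_of_lt_of_le (by positivity) low
  refine ⟨J, hJp, ?_, ?_⟩
  · have := Measure.setIntegral_comp_smul_of_pos (volume : Measure (E d))
      (fun x => g x * exp (-(lam * f x))) (Metric.closedBall (0 : E d) R) hS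
    rw [smul_closedBall _ _ hR, smul_zero, Real.norm_eq_abs, abs_of_pos hS, mul_comm S R] at this
    simp only [finrank_euclideanSpace, Fintype.card_fin, smul_eq_mul] at this
    rw [hJ, this]
    field_simp
  · have l1 := Real.log_le_log hJp up
    have l2 := Real.log_le_log (by positivity) low
    rw [Real.log_mul (exp_pos _).ne' hpos.ne', Real.log_exp] at l1 l2
    rw [abs_le]; constructor <;> linarith

lemma shell_small {L d : ℕ} {lam R S : ℝ} (hd : 0 < d) (hlam : 0 < lam) (hR : 8 ≤ R) (hSR : S * R ≤ 1)
    (hlog : 128 * L * Real.log lam ≤ d * R ^ 2) :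
    exp (-(d * R ^ 2 / 128)) ≤ (R ^ 2 * d) ^ (L + 1) / lam ^ L ∧
    S * (d * R ^ 3 * exp (-(d * R ^ 2 / 64))) ≤ 128 * ((R ^ 2 * d) ^ (L + 1) / lam ^ L) := by
  have hd1 : (1 : ℝ) ≤ d := by exact_mod_cast hd
  have hRd : 1 ≤ R ^ 2 * d := by nlinarith
  have h1 : exp (-(d * R ^ 2 / 128)) ≤ (R ^ 2 * d) ^ (L + 1) / lam ^ L := by
    have e : exp (-(L * Real.log lam)) = 1 / lam ^ L := by
      rw [exp_neg, mul_comm, ← Real.rpow_def_of_pos hlam, Real.rpow_natCast, one_div]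
    calc exp (-(d * R ^ 2 / 128)) ≤ exp (-(L * Real.log lam)) := exp_le_exp.2 (by linarith)
      _ = 1 / lam ^ L := e
      _ ≤ _ := by
        gcongr
        exact one_le_pow₀ hRd
  refine ⟨h1, ?_⟩
  have h2 : d * R ^ 2 ≤ 128 * exp (d * R ^ 2 / 128) := by
    have := add_one_le_exp (d * R ^ 2 / 128)
    linarith
  calc S * (d * R ^ 3 * exp (-(d * R ^ 2 / 64))) = (S * R) * (d * R ^ 2 * exp (-(d * R ^ 2 / 64))) := by ring
    _ ≤ 1 * (128 * exp (d * R ^ 2 / 128) * exp (-(d * R ^ 2 / 64))) := by gcongr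
    _ = 128 * exp (-(d * R ^ 2 / 128)) := by
      rw [one_mul, mul_assoc, ← exp_add]; congr 2; ring
    _ ≤ _ := by gcongr

end LapL

set_option maxHeartbeats 1000000

/-- **Expansion of the local Laplace integral `I_in(λ)`.** Under parts (A1)–(A2) of
Assumption A — where `T k` plays the role of `∇^k f(0)` and `G k` that of
`∇^k (log g)(0)` — there exist constants `c⁻ ≥ 1`, `c⁺ ∈ (0,1]`, `C ≥ 1` depending only on
`c_f, c_g, L` such that, whenever `R ≥ c⁻ √(max(1, log λ / d))` and
`R√(d/λ) ≤ min(r₀, c⁺)`, there are coefficients `b₁, …, b_{L−1}` (independent of `λ` and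
`R`, with `|b_k| ≤ C d^{k+1}`) such that `I_in(λ) > 0` and
`|log I_in(λ) − Σ_{k=1}^{L−1} b_k λ^{−k}| ≤ C (R²d)^{L+1} / λ^L`. -/
theorem laplace_local_expansion (L : ℕ) (hL : 1 ≤ L) (cf cg : ℝ)
    (hcf : 1 ≤ cf) (hcg : 1 ≤ cg) :
    ∃ cm cp C : ℝ, 1 ≤ cm ∧ 0 < cp ∧ cp ≤ 1 ∧ 1 ≤ C ∧
      ∀ (d : ℕ) (r₀ : ℝ), 0 < r₀ →
      ∀ (f g : EuclideanSpace ℝ (Fin d) → ℝ)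
        (T G : (k : ℕ) → MultilinearMap ℝ (fun _ : Fin k => EuclideanSpace ℝ (Fin d)) ℝ),
        -- smoothness
        ContDiffOn ℝ ((2 * L + 2 : ℕ) : ℕ∞) f (Metric.closedBall 0 r₀) →
        ContDiffOn ℝ ((2 * L : ℕ) : ℕ∞) g (Metric.closedBall 0 r₀) →
        -- (A1): Taylor expansion of f at 0 with symmetric bounded tensors
        (∀ k, 3 ≤ k → k ≤ 2 * L + 1 →
          ∀ (σ : Equiv.Perm (Fin k)) (m : Fin k → EuclideanSpace ℝ (Fin d)),
            T k (m ∘ σ) = T k m) →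
        (∀ k, 3 ≤ k → k ≤ 2 * L + 1 → ∀ u : EuclideanSpace ℝ (Fin d), ‖u‖ = 1 →
          |T k fun _ => u| ≤ cf) →
        (∀ x : EuclideanSpace ℝ (Fin d), ‖x‖ ≤ r₀ →
          |f x - (‖x‖ ^ 2 / 2 + ∑ k ∈ Finset.Icc 3 (2 * L + 1),
              (1 / (Nat.factorial k) : ℝ) * T k fun _ => x)| ≤
            cf * ‖x‖ ^ (2 * (L + 1))) →
        -- (A2): Taylor expansion of log g at 0 with symmetric bounded tensors
        g 0 = 1 →
        (∀ x : EuclideanSpace ℝ (Fin d), ‖x‖ ≤ r₀ → 0 < g x) →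
        (∀ k, 1 ≤ k → k ≤ 2 * L - 1 →
          ∀ (σ : Equiv.Perm (Fin k)) (m : Fin k → EuclideanSpace ℝ (Fin d)),
            G k (m ∘ σ) = G k m) →
        (∀ k, 1 ≤ k → k ≤ 2 * L - 1 → ∀ u : EuclideanSpace ℝ (Fin d), ‖u‖ = 1 →
          |G k fun _ => u| ≤ cg) →
        (∀ x : EuclideanSpace ℝ (Fin d), ‖x‖ ≤ r₀ →
          |Real.log (g x) - ∑ k ∈ Finset.Icc 1 (2 * L - 1),
              (1 / (Nat.factorial k) : ℝ) * G k fun _ => x| ≤ cg * ‖x‖ ^ (2 * L)) →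
        -- the coefficients (depending only on d and the tensors, not on λ or R)
        ∃ b : ℕ → ℝ,
          (∀ k, 1 ≤ k → k ≤ L - 1 → |b k| ≤ C * (d : ℝ) ^ (k + 1)) ∧
          ∀ lam R : ℝ, 0 < lam →
            cm * Real.sqrt (max 1 (Real.log lam / d)) ≤ R →
            R * Real.sqrt ((d : ℝ) / lam) ≤ min r₀ cp →
            0 < (lam / (2 * π)) ^ ((d : ℝ) / 2) *
                ∫ x in Metric.closedBall (0 : EuclideanSpace ℝ (Fin d))
                    (R * Real.sqrt ((d : ℝ) / lam)),
                  g x * Real.exp (-(lam * f x)) ∧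
            |Real.log ((lam / (2 * π)) ^ ((d : ℝ) / 2) *
                  ∫ x in Metric.closedBall (0 : EuclideanSpace ℝ (Fin d))
                      (R * Real.sqrt ((d : ℝ) / lam)),
                    g x * Real.exp (-(lam * f x))) -
                ∑ k ∈ Finset.Icc 1 (L - 1), b k / lam ^ k| ≤
              C * (R ^ 2 * d) ^ (L + 1) / lam ^ L := by
  obtain ⟨K, hK, hrec⟩ := LapL.recursion (cf + cg) (2 * L - 1)
  obtain ⟨C1, hC1, hcore⟩ := LapL.core (cf + cg) K (((2 * L - 1 : ℕ) : ℝ) * cg) (by linarith) hK (2 * L - 1)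
  have hL1 : (1 : ℝ) ≤ L := by exact_mod_cast hL
  have hNL : ((2 * L - 1 : ℕ) : ℝ) ≤ 2 * L := by
    have : 2 * L - 1 ≤ 2 * L := by omega
    exact_mod_cast this
  refine ⟨8 + 128 * L, 1 / (16 * L * cf), 129 * C1 + 2 + cf + cg + K, by linarith, by positivity, ?_, by linarith, ?_⟩
  · rw [div_le_one (by positivity)]; nlinarith
  intro d r₀ hr₀ f g T G hf hg _ hT hfT hg0 hgp _ hG hgG
  rcases Nat.eq_zero_or_pos d with hd | hd
  · subst hd
    refine ⟨fun _ => 0, fun k _ _ => by simp, fun lam R hlam _ _ => ?_⟩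
    have hf0 : f 0 = 0 := by
      have h := hfT 0 (by simpa using hr₀.le)
      have hs : ∑ k ∈ Finset.Icc 3 (2 * L + 1),
          (1 / (Nat.factorial k) : ℝ) * (T k fun _ => (0 : EuclideanSpace ℝ (Fin 0))) = 0 := by
        refine Finset.sum_eq_zero fun k hk => ?_
        have hk := (Finset.mem_Icc.1 hk).1
        rw [(T k).map_coord_zero ⟨0, by omega⟩ rfl, mul_zero]
      rw [hs] at h
      simpa using h
    rw [LapL.zero_dim_volume _ _ (by simp)]
    simp [hf0, hg0]
  have hd' : (0 : ℝ) < d := by exact_mod_cast hd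
  have hd1 : (1 : ℝ) ≤ d := by exact_mod_cast hd
  obtain ⟨w, hw, hwb, hwe⟩ := LapL.exists_w L hL cf cg hcf hcg hd T G hT hG
  obtain ⟨u, c, huc⟩ := hrec d hd w hw
  refine ⟨fun k => -((d : ℝ) ^ (k + 1) * c (2 * k - 1) / (2 * k)), ?_, ?_⟩
  · intro k hk1 hk2
    have hc := (huc (2 * k - 1) (by omega)).2.1
    have hk : (1 : ℝ) ≤ k := by exact_mod_cast hk1
    rw [abs_neg, abs_div, abs_mul, abs_of_nonneg (by positivity : (0 : ℝ) ≤ (d : ℝ) ^ (k + 1)),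
      abs_of_pos (by linarith : (0 : ℝ) < 2 * k), div_le_iff₀ (by linarith)]
    have hdk : (0 : ℝ) < (d : ℝ) ^ (k + 1) := by positivity
    have hCK : |c (2 * k - 1)| ≤ (129 * C1 + 2 + cf + cg + K) * (2 * k) := by nlinarith
    calc (d : ℝ) ^ (k + 1) * |c (2 * k - 1)|
        ≤ (d : ℝ) ^ (k + 1) * ((129 * C1 + 2 + cf + cg + K) * (2 * k)) := by gcongr
      _ = _ := by ring
  intro lam R hlam hRlow hRup
  set S := Real.sqrt ((d : ℝ) / lam) with hSdef
  have hS : 0 < S := Real.sqrt_pos.2 (by positivity)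
  have hS2 : S ^ 2 = d / lam := Real.sq_sqrt (by positivity)
  have hlS : lam * S ^ 2 = d := by rw [hS2]; field_simp
  set mx := max 1 (Real.log lam / d) with hmx
  have hmx1 : 1 ≤ mx := le_max_left _ _
  have hmx2 : Real.log lam / d ≤ mx := le_max_right _ _
  have hsq1 : 1 ≤ Real.sqrt mx := Real.one_le_sqrt.2 hmx1
  have hsq2 : Real.sqrt mx ^ 2 = mx := Real.sq_sqrt (by linarith)
  have hR8 : 8 ≤ R := by nlinarith
  have hlog : 128 * L * Real.log lam ≤ d * R ^ 2 := by
    have h1 : ((8 + 128 * L) * Real.sqrt mx) ^ 2 ≤ R ^ 2 := by gcongr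
    rw [mul_pow, hsq2] at h1
    have h2 : 128 * (L : ℝ) ≤ (8 + 128 * L) ^ 2 := by nlinarith
    have h3 : 128 * (L : ℝ) * mx ≤ R ^ 2 := le_trans (by gcongr) h1
    have h4 : 128 * (L : ℝ) * (Real.log lam / d) ≤ R ^ 2 := le_trans (by gcongr) h3
    calc 128 * L * Real.log lam = d * (128 * (L : ℝ) * (Real.log lam / d)) := by field_simp
      _ ≤ _ := by gcongr
  have hRr : R * S ≤ r₀ := hRup.trans (min_le_left _ _)
  have hRcp : R * S ≤ 1 / (16 * L * cf) := hRup.trans (min_le_right _ _)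
  have hcp : ((2 * L - 1 : ℕ) : ℝ) * cf * (R * S) ≤ 1 / 8 := by
    calc ((2 * L - 1 : ℕ) : ℝ) * cf * (R * S) ≤ (2 * L) * cf * (1 / (16 * L * cf)) := by gcongr
      _ = 1 / 8 := by field_simp; norm_num
  have hRS1 : R * S ≤ 1 := by
    refine hRcp.trans ?_
    rw [div_le_one (by positivity)]; nlinarith
  have hSR1 : S * R ≤ 1 := by rw [mul_comm]; exact hRS1
  have hVb : ∀ s, 0 ≤ s → s ≤ S → ∀ z : LapL.E d, ‖z‖ ≤ R →
      |LapL.ev z (LapL.Vp (2 * L - 1) w s) - ‖z‖ ^ 2 / 2| ≤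
        ‖z‖ ^ 2 / 8 + ((2 * L - 1 : ℕ) : ℝ) * cg / d := by
    intro s hs0 hsS z hz
    have hsz : s * ‖z‖ ≤ R * S := by
      rw [mul_comm R S]; gcongr
    refine hwb s z hs0 (hsz.trans hRS1) (le_trans ?_ hcp)
    gcongr
  obtain ⟨hZS, hZ0, hmain⟩ := hcore d hd w u c hw (fun j hj => (huc j hj).1) (fun j hj => (huc j hj).2.1)
    (fun j hj => (huc j hj).2.2.2) S R hS.le hR8 hSR1 hVb
  set Err := (R ^ 2 * d) ^ (L + 1) / lam ^ L with hErr
  have hRd : 1 ≤ R ^ 2 * d := by nlinarith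
  have hErr0 : 0 ≤ Err := by positivity
  obtain ⟨hs1, hs2⟩ := LapL.shell_small (L := L) hd hlam hR8 hSR1 hlog
  have hpw : S ^ (2 * L) = d ^ L / lam ^ L := by rw [pow_mul, hS2, div_pow]
  have hT1 : d * (S ^ (2 * L - 1 + 1) * R ^ (2 * L - 1 + 3)) = Err := by
    rw [show 2 * L - 1 + 1 = 2 * L by omega, show 2 * L - 1 + 3 = 2 * (L + 1) by omega, hpw, pow_mul, hErr,
      mul_pow]
    ring
  have hcmp := LapL.compare (lam := lam) (E1 := (cf + cg) * Err) hS (by linarith : 0 ≤ R) hRr f g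
    hf.continuousOn hg.continuousOn hgp
    (fun z => LapL.ev z (LapL.Vp (2 * L - 1) w S)) (LapL.ev_continuous _) (by
      intro z hz
      have hx : ‖S • z‖ ≤ R * S := by
        rw [norm_smul, Real.norm_eq_abs, abs_of_pos hS, mul_comm]; gcongr
      have a1 := hfT (S • z) (hx.trans hRr)
      have a2 := hgG (S • z) (hx.trans hRr)
      rw [hwe lam S hlS z]
      set PT := ‖S • z‖ ^ 2 / 2 + ∑ k ∈ Finset.Icc 3 (2 * L + 1),
              (1 / (Nat.factorial k) : ℝ) * T k fun _ => S • z
      set PG := ∑ k ∈ Finset.Icc 1 (2 * L - 1), (1 / (Nat.factorial k) : ℝ) * G k fun _ => S • z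
      have b1 : lam * (cf * ‖S • z‖ ^ (2 * (L + 1))) ≤ cf * Err := by
        calc lam * (cf * ‖S • z‖ ^ (2 * (L + 1))) ≤ lam * (cf * (R * S) ^ (2 * (L + 1))) := by gcongr
          _ = cf * ((R ^ 2) ^ (L + 1) * (S ^ (2 * L) * (lam * S ^ 2))) := by ring
          _ = cf * Err := by rw [hpw, hlS, hErr, mul_pow]; ring
      have b2 : cg * ‖S • z‖ ^ (2 * L) ≤ cg * Err := by
        have : (R * S) ^ (2 * L) = (R ^ 2 * d) ^ L / lam ^ L := by
          rw [mul_pow, hpw, mul_pow, pow_mul]; ring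
        calc cg * ‖S • z‖ ^ (2 * L) ≤ cg * (R * S) ^ (2 * L) := by gcongr
          _ ≤ cg * Err := by
            rw [this, hErr]
            gcongr
            first | exact hRd | omega
      have e : Real.log (g (S • z)) - lam * f (S • z) + (lam * PT - PG) =
          (Real.log (g (S • z)) - PG) - lam * (f (S • z) - PT) := by ring
      rw [e]
      refine (abs_sub _ _).trans ?_
      rw [abs_mul, abs_of_pos hlam]
      have := mul_le_mul_of_nonneg_left a1 hlam.le
      linarith) hZS
  obtain ⟨J, hJ, hJe, hJl⟩ := hcmp
  rw [hJe]
  have hpi := Real.pi_pos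
  set q := ((d : ℝ) / (2 * π)) ^ ((d : ℝ) / 2) with hq
  have hqp : 0 < q := by positivity
  have hqe : (lam / (2 * π)) ^ ((d : ℝ) / 2) * (S ^ d * J) = q * J := by
    have h1 : S ^ d = ((d : ℝ) / lam) ^ ((d : ℝ) / 2) := by
      rw [hSdef, Real.sqrt_eq_rpow, ← Real.rpow_natCast, ← Real.rpow_mul (by positivity)]
      congr 1; ring
    rw [h1, ← mul_assoc, ← Real.mul_rpow (by positivity) (by positivity), hq]
    congr 2
    field_simp
  rw [hqe]
  refine ⟨by positivity, ?_⟩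
  have hgl := LapL.gauss_log hd hR8
  have hZ0e : ∫ z in Metric.closedBall (0 : LapL.E d) R, Real.exp (-(d * (‖z‖ ^ 2 / 2))) =
      LapL.ZZ (2 * L - 1) w R 0 := by
    unfold LapL.ZZ
    simp [LapL.ev_Vp]
  rw [hZ0e, Real.log_mul hqp.ne' hZ0.ne'] at hgl
  have hgl2 : |Real.log q + Real.log (LapL.ZZ (2 * L - 1) w R 0)| ≤ 2 * Err := by
    refine hgl.trans ?_
    have : Real.exp (-(d * R ^ 2 / 8)) ≤ Real.exp (-(d * R ^ 2 / 128)) := by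
      apply Real.exp_le_exp.2
      have : 0 ≤ d * R ^ 2 := by positivity
      linarith
    linarith
  have hsum : d * ∑ j ∈ Finset.range (2 * L - 1), c j * S ^ (j + 1) / ((j : ℝ) + 1) =
      -∑ k ∈ Finset.Icc 1 (L - 1), -((d : ℝ) ^ (k + 1) * c (2 * k - 1) / (2 * k)) / lam ^ k := by
    have hLe : 2 * L - 1 = 2 * (L - 1) + 1 := by omega
    rw [hLe, LapL.odd_sum _ _ (fun j hj he => by
      rw [(huc j (by omega)).2.2.1 he]; simp), Finset.mul_sum, ← Finset.sum_neg_distrib]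
    refine Finset.sum_congr rfl fun k hk => ?_
    have hk1 := (Finset.mem_Icc.1 hk).1
    have hcast : ((2 * k - 1 : ℕ) : ℝ) + 1 = 2 * k := by
      have : 2 * k - 1 + 1 = 2 * k := by omega
      exact_mod_cast this
    rw [hcast, show 2 * k - 1 + 1 = 2 * k by omega, pow_mul, hS2, div_pow]
    have hk0 : (k : ℝ) ≠ 0 := by
      have : k ≠ 0 := by omega
      exact_mod_cast this
    rw [neg_div, neg_neg]
    field_simp
    ring
  rw [hT1, hsum] at hmain
  rw [Real.log_mul hqp.ne' hJ.ne', mul_div_assoc, ← hErr]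
  set Sg := ∑ k ∈ Finset.Icc 1 (L - 1), -((d : ℝ) ^ (k + 1) * c (2 * k - 1) / (2 * k)) / lam ^ k with hSg
  change |Real.log J - Real.log (LapL.ZZ (2 * L - 1) w R S)| ≤ _ at hJl
  have hm2 : |Real.log (LapL.ZZ (2 * L - 1) w R S) - Real.log (LapL.ZZ (2 * L - 1) w R 0) + -Sg| ≤
      C1 * (129 * Err) := by
    refine hmain.trans ?_
    refine mul_le_mul_of_nonneg_left ?_ (by linarith)
    linarith
  have hKE : 0 ≤ K * Err := by positivity
  have hexp : (129 * C1 + 2 + cf + cg + K) * Err =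
      C1 * (129 * Err) + 2 * Err + (cf + cg) * Err + K * Err := by ring
  rw [hexp]
  clear_value Sg Err q
  rw [abs_le] at hJl hm2 hgl2 ⊢
  obtain ⟨j1, j2⟩ := hJl
  obtain ⟨m1, m2⟩ := hm2
  obtain ⟨g1, g2⟩ := hgl2
  constructor
  · linarith only [j1, m1, g1, hKE]
  · linarith only [j2, m2, g2, hKE]
end
end

section
/- Fix an integer L ≥ 1. Suppose f, g : ℝ^d → ℝ satisfy Assumption A (with constants c_f, c_g ≥ 1, r₀ > 0, κ ∈ (0,1/e]) and d ≥ 2L. Then there exist constants c⁻ ≥ 1 (sufficiently large) and c⁺ ∈ (0,1] (sufficiently small), depending only on c_f, c_g and L, such that whenever R ≥ c⁻·max(1, (1/κ)[√(log(1/κ)) + log R + (log λ)/d]), (R²d)^{L+1}/λ^L ≤ c⁺, and R√(d/λ) ≤ r₀, one has I_in(λ) > 0 and |I_out(λ)| / I_in(λ) ≤ 5·R^{2L}·d^{L+1}/λ^L. -/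
open MeasureTheory Real

noncomputable section

/-- Sum of absolute coordinates versus Euclidean norm. -/
lemma tail_sum_abs_le {d : ℕ} (x : EuclideanSpace ℝ (Fin d)) :
    ∑ i, |x i| ≤ √(d : ℝ) * ‖x‖ := by
  have h := sq_sum_le_card_mul_sum_sq (s := (Finset.univ : Finset (Fin d))) (f := fun i => |x i|)
  have h2 := EuclideanSpace.norm_sq_eq x
  simp only [Real.norm_eq_abs] at h2
  rw [← h2, Finset.card_univ, Fintype.card_fin] at h
  apply le_of_sq_le_sq _ (by positivity)
  rw [mul_pow, Real.sq_sqrt (by positivity)]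
  exact h

lemma tail_integrable_prod (d : ℕ) (b : ℝ) (hb : 0 < b) :
    Integrable (fun x : EuclideanSpace ℝ (Fin d) => ∏ i, (1 + (b * x i) ^ 2)⁻¹) := by
  have h1 : Integrable (fun t : ℝ => (1 + (b * t) ^ 2)⁻¹) :=
    integrable_inv_one_add_sq.comp_mul_left' hb.ne'
  have h2 : Integrable (fun x : Fin d → ℝ => ∏ i, (1 + (b * x i) ^ 2)⁻¹) :=
    Integrable.fintype_prod (f := fun _ t => (1 + (b * t) ^ 2)⁻¹) (fun _ => h1)
  exact ((PiLp.volume_preserving_ofLp (Fin d)).integrable_comp h2.aestronglyMeasurable).2 h2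

lemma tail_integral_prod (d : ℕ) (b : ℝ) (hb : 0 < b) :
    ∫ x : EuclideanSpace ℝ (Fin d), ∏ i, (1 + (b * x i) ^ 2)⁻¹ = (π / b) ^ d := by
  have h0 := (EuclideanSpace.volume_preserving_symm_measurableEquiv_toLp (Fin d)).integral_comp
    (MeasurableEquiv.measurableEmbedding _)
    (fun x : Fin d → ℝ => ∏ i, (1 + (b * x i) ^ 2)⁻¹)
  have h1 : ∫ t : ℝ, (1 + (b * t) ^ 2)⁻¹ = π / b := by
    rw [Measure.integral_comp_mul_left (fun t => (1 + t ^ 2)⁻¹) b, integral_univ_inv_one_add_sq,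
      abs_of_pos (by positivity), smul_eq_mul]
    field_simp
  have h2 := integral_fintype_prod_volume_eq_prod (ι := Fin d) (𝕜 := ℝ) (E := fun _ => ℝ)
    (fun _ t => (1 + (b * t) ^ 2)⁻¹)
  rw [h2] at h0
  rw [← h1]
  simpa using h0

/-- The coordinate cube of half-side `a`. -/
lemma tail_cube (d : ℕ) (a : ℝ) (ha : 0 ≤ a) :
    MeasurableSet {x : EuclideanSpace ℝ (Fin d) | ∀ i, |x i| ≤ a} ∧
    volume {x : EuclideanSpace ℝ (Fin d) | ∀ i, |x i| ≤ a} ≠ ⊤ ∧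
    volume.real {x : EuclideanSpace ℝ (Fin d) | ∀ i, |x i| ≤ a} = (2 * a) ^ d := by
  have h0 : {x : EuclideanSpace ℝ (Fin d) | ∀ i, |x i| ≤ a} =
      WithLp.ofLp ⁻¹' (Set.Icc (fun _ : Fin d => -a) (fun _ => a)) := by
    ext x
    simp only [Set.mem_ofPred_eq, Set.mem_preimage, Set.mem_Icc, Pi.le_def, abs_le]
    exact forall_and
  have hm : MeasurableSet (Set.Icc (fun _ : Fin d => -a) (fun _ => a)) := measurableSet_Icc
  have hp := PiLp.volume_preserving_ofLp (Fin d)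
  have hv := hp.measure_preimage hm.nullMeasurableSet
  rw [h0]
  refine ⟨hp.measurable hm, ?_, ?_⟩
  · rw [hv]; exact isCompact_Icc.measure_lt_top.ne
  · rw [measureReal_def, hv, Real.volume_Icc_pi_toReal (fun i => by simp; linarith)]
    simp; ring

lemma tail_multilinear_bound {d k : ℕ}
    (T : MultilinearMap ℝ (fun _ : Fin k => EuclideanSpace ℝ (Fin d)) ℝ) (c : ℝ)
    (hk : 1 ≤ k)
    (h : ∀ u : EuclideanSpace ℝ (Fin d), ‖u‖ = 1 → |T fun _ => u| ≤ c)
    (hc : 0 ≤ c)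
    (x : EuclideanSpace ℝ (Fin d)) : |T fun _ => x| ≤ c * ‖x‖ ^ k := by
  by_cases hx : x = 0
  · subst hx
    have : (T fun _ => (0 : EuclideanSpace ℝ (Fin d))) = 0 := T.map_coord_zero ⟨0, hk⟩ rfl
    rw [this, abs_zero]; positivity
  · have hn : 0 < ‖x‖ := norm_pos_iff.2 hx
    have hu : ‖(‖x‖⁻¹ • x)‖ = 1 := by
      rw [norm_smul, norm_inv, norm_norm]; field_simp
    have h1 := T.map_smul_univ (fun _ => ‖x‖) (fun _ => ‖x‖⁻¹ • x)
    have h2 : ‖x‖ • ‖x‖⁻¹ • x = x := by rw [smul_smul, mul_inv_cancel₀ hn.ne', one_smul]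
    simp only [h2, Finset.prod_const, Finset.card_univ, Fintype.card_fin, smul_eq_mul] at h1
    rw [h1, abs_mul, abs_of_nonneg (by positivity), mul_comm]
    exact mul_le_mul_of_nonneg_right (h _ hu) (by positivity)

/-- Sum of Taylor terms of order `≥ m` bounded by `n c ‖x‖^m`. -/
lemma tail_sum_bound {d : ℕ}
    (T : (k : ℕ) → MultilinearMap ℝ (fun _ : Fin k => EuclideanSpace ℝ (Fin d)) ℝ) (c : ℝ)
    (m n q : ℕ) (hm : 1 ≤ m) (hq : q ≤ m) (hc : 0 ≤ c)
    (h : ∀ k, m ≤ k → k ≤ n → ∀ u : EuclideanSpace ℝ (Fin d), ‖u‖ = 1 → |T k fun _ => u| ≤ c)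
    (x : EuclideanSpace ℝ (Fin d)) (hx : ‖x‖ ≤ 1) :
    |∑ k ∈ Finset.Icc m n, (1 / (Nat.factorial k) : ℝ) * T k fun _ => x| ≤
      ((n + 1 - m : ℕ) : ℝ) * (c * ‖x‖ ^ q) := by
  refine (Finset.abs_sum_le_sum_abs _ _).trans ?_
  rw [← Nat.card_Icc, ← nsmul_eq_mul]
  apply Finset.sum_le_card_nsmul
  intro k hk
  rw [Finset.mem_Icc] at hk
  have h1 := tail_multilinear_bound (T k) c (by omega) (h k hk.1 hk.2) hc x
  have h2 : ‖x‖ ^ k ≤ ‖x‖ ^ q := pow_le_pow_of_le_one (norm_nonneg _) hx (by omega)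
  have h3 : (1 / (Nat.factorial k) : ℝ) ≤ 1 := by
    rw [div_le_one (by positivity)]
    exact_mod_cast Nat.factorial_pos k
  rw [abs_mul, abs_of_nonneg (by positivity : (0 : ℝ) ≤ 1 / (Nat.factorial k))]
  calc _ ≤ 1 * |T k fun _ => x| := by gcongr
    _ ≤ c * ‖x‖ ^ k := by rw [one_mul]; exact h1
    _ ≤ _ := by gcongr

set_option maxHeartbeats 1000000 in
/-- Pointwise tail bound. Here `s = √λ`, `sd = √d`, `δ = d^{-1/(2L)}`. -/
lemma tail_pointwise {d : ℕ} (s sd δ κ R : ℝ) (hs : 0 < s) (hsd : 0 < sd)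
    (hd : sd = √(d : ℝ)) (hδ : 0 < δ) (hκ : 0 < κ) (hR : 2 ≤ R) (hκR : 4 ≤ κ * R)
    (hK : R * sd ≤ s * δ) (hK2 : R * sd ≤ s)
    (x : EuclideanSpace ℝ (Fin d)) (hx : R * (sd / s) ≤ ‖x‖) :
    κ * R * d / 4 + ∑ i, Real.log (1 + (κ * s / 4 * x i) ^ 2) ≤
      s ^ 2 * κ * min (‖x‖ ^ 2 / 2) (min (sd / s * ‖x‖) (δ * Real.log (1 + ‖x‖))) := by
  have hdd : (d : ℝ) = sd ^ 2 := by rw [hd, Real.sq_sqrt (by positivity)]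
  have hsum := tail_sum_abs_le x
  rw [← hd] at hsum
  set b := κ * s / 4 with hb
  have hbpos : 0 < b := by positivity
  set N := ‖x‖ with hN
  have hρ : 0 < R * (sd / s) := by positivity
  have hNpos : 0 < N := lt_of_lt_of_le hρ hx
  have hlog : ∀ t : ℝ, Real.log (1 + (b * t) ^ 2) ≤ 2 * Real.log (1 + b * |t|) := by
    intro t
    have h1 : 0 ≤ b * |t| := by positivity
    have : 2 * Real.log (1 + b * |t|) = Real.log ((1 + b * |t|) ^ 2) := by
      rw [Real.log_pow]; norm_num
    rw [this]
    apply Real.log_le_log (by positivity)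
    have : (b * t) ^ 2 = (b * |t|) ^ 2 := by rw [mul_pow, mul_pow, sq_abs]
    rw [this]; nlinarith
  have caseA : κ * R * d / 4 + ∑ i, Real.log (1 + (b * x i) ^ 2) ≤
      s ^ 2 * κ * (sd / s * N) := by
    have e : s ^ 2 * κ * (sd / s * N) = κ * s * sd * N := by field_simp
    have h1 : ∑ i, Real.log (1 + (b * x i) ^ 2) ≤ 2 * b * (sd * N) := by
      calc _ ≤ ∑ i, 2 * b * |x i| := by
            apply Finset.sum_le_sum
            intro i _
            have := Real.log_le_sub_one_of_pos (show 0 < 1 + b * |x i| by positivity)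
            linarith [hlog (x i)]
        _ = 2 * b * ∑ i, |x i| := by rw [Finset.mul_sum]
        _ ≤ _ := by gcongr
    have h2 : R * sd ≤ s * N := by
      have : s * (R * (sd / s)) = R * sd := by field_simp
      rw [← this]; gcongr
    have h3 : κ * sd * (R * sd) ≤ κ * sd * (s * N) := by gcongr
    rw [e, hdd]
    have h4 : 0 < κ * sd * (R * sd) := by positivity
    rw [hb] at h1
    nlinarith
  have caseB : κ * R * d / 4 + ∑ i, Real.log (1 + (b * x i) ^ 2) ≤
      s ^ 2 * κ * (δ * Real.log (1 + N)) := by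
    set p := s ^ 2 * κ * δ with hp
    have hppos : 0 < p := by positivity
    have hlogN : 0 ≤ Real.log (1 + N) := Real.log_nonneg (by linarith)
    -- first half
    have h1 : κ * R * d / 4 ≤ p / 2 * Real.log (1 + N) := by
      set ρ := R * (sd / s) with hρd
      have hρ1 : ρ ≤ 1 := by
        rw [hρd, ← mul_div_assoc, div_le_one hs]; exact hK2
      have h11 : ρ / 2 ≤ Real.log (1 + ρ) := by
        refine le_trans ?_ (Real.le_log_one_add_of_nonneg hρ.le)
        rw [div_le_div_iff₀ (by norm_num) (by positivity)]
        nlinarith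
      have h12 : Real.log (1 + ρ) ≤ Real.log (1 + N) :=
        Real.log_le_log (by positivity) (by linarith)
      have h13 : p * ρ = κ * R * sd * (s * δ) := by rw [hp, hρd]; field_simp
      have h14 : κ * R * sd * (R * sd) ≤ p * ρ := by rw [h13]; gcongr
      have h15 : κ * R * sd ^ 2 ≤ κ * R * sd * (R * sd) := by
        have : 0 < κ * R * sd ^ 2 := by positivity
        nlinarith
      have h16 : p * (ρ / 2) ≤ p * Real.log (1 + N) := by gcongr; linarith
      rw [hdd]; linarith
    have h2 : ∑ i, Real.log (1 + (b * x i) ^ 2) ≤ p / 2 * Real.log (1 + N) := by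
      have hpd : κ * R ^ 2 * sd ^ 2 ≤ p := by
        have : (R * sd) * (R * sd) ≤ s * (s * δ) := by gcongr
        have : κ * ((R * sd) * (R * sd)) ≤ κ * (s * (s * δ)) := by gcongr
        rw [hp]; nlinarith
      set q := p / (4 * sd ^ 2) with hq
      have hq1 : 1 ≤ q := by
        rw [hq, le_div_iff₀ (by positivity)]
        have h : 4 * 1 ≤ κ * R * R := by nlinarith
        have : 4 * 1 * sd ^ 2 ≤ κ * R * R * sd ^ 2 := by gcongr
        nlinarith
      have hB : Real.log (1 + q * N) ≤ q * Real.log (1 + N) := by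
        rw [← Real.log_rpow (by positivity)]
        exact Real.log_le_log (by positivity)
          (one_add_mul_self_le_rpow_one_add (by linarith) hq1)
      have hqb : b / sd ≤ q := by
        rw [hq, hb, div_le_div_iff₀ hsd (by positivity), hp]
        have : κ * s * sd * (sd * 2) ≤ κ * s * sd * (s * δ) := by
          apply mul_le_mul_of_nonneg_left _ (by positivity)
          nlinarith
        have : 0 < κ * s * sd * sd := by positivity
        nlinarith
      set m := 1 + b / sd * N with hm
      have hmpos : 0 < m := by positivity
      have hB2 : Real.log m ≤ Real.log (1 + q * N) :=
        Real.log_le_log hmpos (by rw [hm]; gcongr)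
      have hsl : ∑ i, Real.log (1 + b * |x i|) ≤ sd ^ 2 * Real.log m := by
        have hi : ∀ i, Real.log (1 + b * |x i|) ≤ Real.log m + ((1 + b * |x i|) / m - 1) := by
          intro i
          have hpos : 0 < 1 + b * |x i| := by positivity
          have := Real.log_le_sub_one_of_pos (div_pos hpos hmpos)
          rw [Real.log_div hpos.ne' hmpos.ne'] at this
          linarith
        calc _ ≤ ∑ i, (Real.log m + ((1 + b * |x i|) / m - 1)) :=
              Finset.sum_le_sum fun i _ => hi i
          _ = sd ^ 2 * Real.log m + ((sd ^ 2 + b * ∑ i, |x i|) / m - sd ^ 2) := by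
              rw [Finset.sum_add_distrib, Finset.sum_sub_distrib, ← Finset.sum_div,
                Finset.sum_add_distrib, ← Finset.mul_sum]
              simp [← hdd]
          _ ≤ _ := by
              have : (sd ^ 2 + b * ∑ i, |x i|) / m ≤ sd ^ 2 := by
                rw [div_le_iff₀ hmpos]
                have e : sd ^ 2 * m = sd ^ 2 + b * (sd * N) := by rw [hm]; field_simp
                rw [e]; gcongr
              linarith
      calc _ ≤ ∑ i, 2 * Real.log (1 + b * |x i|) := Finset.sum_le_sum fun i _ => hlog (x i)
        _ = 2 * ∑ i, Real.log (1 + b * |x i|) := by rw [Finset.mul_sum]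
        _ ≤ 2 * (sd ^ 2 * (q * Real.log (1 + N))) := by
            have : sd ^ 2 * Real.log m ≤ sd ^ 2 * (q * Real.log (1 + N)) := by
              gcongr; linarith
            linarith
        _ = _ := by rw [hq]; field_simp; ring
    have e : s ^ 2 * κ * (δ * Real.log (1 + N)) = p * Real.log (1 + N) := by rw [hp]; ring
    rw [e]; clear_value p; linarith
  have hfirst : sd / s * N ≤ N ^ 2 / 2 := by
    have h0 : 0 < sd / s := by positivity
    have : 2 * (sd / s) ≤ N := le_trans (by gcongr) hx
    nlinarith
  have hsk : 0 < s ^ 2 * κ := by positivity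
  rcases min_choice (N ^ 2 / 2) (min (sd / s * N) (δ * Real.log (1 + N))) with h | h
  · rw [h]; exact caseA.trans (by gcongr)
  · rw [h]
    rcases min_choice (sd / s * N) (δ * Real.log (1 + N)) with hmn | hmn
    · rw [hmn]; exact caseA
    · rw [hmn]; exact caseB

/-- Final numeric comparison. -/
lemma tail_numeric (L d : ℕ) (hd : 1 ≤ d) (cg C1 κ R lam s : ℝ) (hC1 : 0 ≤ C1)
    (hcg : 1 ≤ cg) (hκ : 0 < κ) (hs : 0 < s) (hlam : 1 ≤ lam)
    (hlogκ : 0 ≤ Real.log (1 / κ))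
    (h : 4 * (C1 + cg + 2 + L) * (d + d * Real.log (1 / κ) + Real.log lam) ≤ κ * R * d) :
    cg * (Real.exp (-(κ * R * d / 4)) * (π / (κ * s / 4)) ^ d) ≤
      Real.exp (-(C1 * d)) * (2 * (1 / s)) ^ d * (1 / lam ^ L) := by
  have hlam0 : 0 < lam := by linarith
  have hll : 0 ≤ Real.log lam := Real.log_nonneg hlam
  have hd1 : (1 : ℝ) ≤ d := by exact_mod_cast hd
  have e1 : π / (κ * s / 4) = (2 * π * (1 / κ)) * (2 * (1 / s)) := by field_simp; ring
  have e2 : 2 * π * (1 / κ) ≤ Real.exp (2 + Real.log (1 / κ)) := by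
    rw [Real.exp_add, Real.exp_log (by positivity)]
    gcongr
    have h1 := Real.exp_one_gt_d9
    have h2 : Real.exp 2 = Real.exp 1 * Real.exp 1 := by rw [← Real.exp_add]; norm_num
    have := Real.pi_lt_d2
    rw [h2]; nlinarith
  have e3 : (2 * π * (1 / κ)) ^ d ≤ Real.exp (d * (2 + Real.log (1 / κ))) := by
    rw [Real.exp_nat_mul]; gcongr
  have e4 : cg ≤ Real.exp (cg * d) := by
    have := Real.add_one_le_exp (cg * d); nlinarith
  have e5 : 1 / lam ^ L = Real.exp (-(L * Real.log lam)) := by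
    rw [Real.exp_neg, Real.exp_nat_mul, Real.exp_log hlam0, one_div]
  have hL0 : (0 : ℝ) ≤ L := by positivity
  have e6 : cg * d + -(κ * R * d / 4) + d * (2 + Real.log (1 / κ)) ≤
      -(C1 * d) + -(L * Real.log lam) := by
    have a1 : 0 ≤ (d : ℝ) * Real.log (1 / κ) := by positivity
    have a2 : 0 ≤ (C1 + cg + L) * ((d : ℝ) * Real.log (1 / κ)) := by positivity
    have a3 : 0 ≤ (C1 + cg + 2) * Real.log lam := by positivity
    have a4 : 0 ≤ (L : ℝ) * d := by positivity
    nlinarith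
  rw [e1, mul_pow, e5]
  calc _ ≤ Real.exp (cg * d) * (Real.exp (-(κ * R * d / 4)) *
        (Real.exp (d * (2 + Real.log (1 / κ))) * (2 * (1 / s)) ^ d)) := by gcongr
    _ = Real.exp (cg * d + -(κ * R * d / 4) + d * (2 + Real.log (1 / κ))) *
        (2 * (1 / s)) ^ d := by rw [Real.exp_add, Real.exp_add]; ring
    _ ≤ Real.exp (-(C1 * d) + -(L * Real.log lam)) * (2 * (1 / s)) ^ d := by gcongr
    _ = _ := by rw [Real.exp_add]; ring

/-- Scale facts. -/
lemma tail_scale (L d : ℕ) (hL : 1 ≤ L) (hd : 1 ≤ d) (R lam : ℝ) (hlam : 0 < lam) (hR : 1 ≤ R)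
    (h : (R ^ 2 * d) ^ (L + 1) / lam ^ L ≤ 1) :
    R * √(d : ℝ) ≤ √lam * (d : ℝ) ^ (-1 / (2 * (L : ℝ))) ∧ R * √(d : ℝ) ≤ √lam := by
  have hd1 : (1 : ℝ) ≤ d := by exact_mod_cast hd
  rw [div_le_one (by positivity)] at h
  have hRd : 1 ≤ R ^ 2 * d := by nlinarith
  have hsq : (√lam) ^ 2 = lam := Real.sq_sqrt hlam.le
  have hsd : (√(d : ℝ)) ^ 2 = d := Real.sq_sqrt (by positivity)
  have hL0 : (L : ℝ) ≠ 0 := by positivity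
  have hδ : ((d : ℝ) ^ (-1 / (2 * (L : ℝ)))) ^ (2 * L) = 1 / d := by
    rw [← Real.rpow_natCast, ← Real.rpow_mul (by positivity)]
    push_cast
    rw [div_mul_cancel₀ _ (by positivity), Real.rpow_neg_one, one_div]
  have h1 : R * √(d : ℝ) ≤ √lam * (d : ℝ) ^ (-1 / (2 * (L : ℝ))) := by
    apply le_of_pow_le_pow_left₀ (show 2 * L ≠ 0 by omega) (by positivity)
    rw [mul_pow (√lam), hδ, pow_mul (√lam), hsq, pow_mul, mul_pow R, hsd, mul_one_div,
      le_div_iff₀ (by positivity)]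
    calc (R ^ 2 * d) ^ L * d ≤ (R ^ 2 * d) ^ L * (R ^ 2 * d) := by
          apply mul_le_mul_of_nonneg_left _ (by positivity)
          exact le_mul_of_one_le_left (by positivity) (one_le_pow₀ hR)
      _ ≤ _ := by rw [← pow_succ]; exact h
  refine ⟨h1, h1.trans ?_⟩
  apply mul_le_of_le_one_right (by positivity)
  apply Real.rpow_le_one_of_one_le_of_nonpos hd1
  apply div_nonpos_of_nonpos_of_nonneg <;> [norm_num; positivity]

set_option maxHeartbeats 2000000 in
/-- **Tail bound (Lemma on `I_out/I_in`).** Under Assumption A — where `T k` plays the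
role of `∇^k f(0)` and `G k` that of `∇^k (log g)(0)` — and `d ≥ 2L`, there exist
constants `c⁻ ≥ 1`, `c⁺ ∈ (0,1]` depending only on `c_f, c_g, L` such that whenever
`R ≥ c⁻ max(1, κ⁻¹[√(log(1/κ)) + log R + (log λ)/d])`, `(R²d)^{L+1}/λ^L ≤ c⁺` and
`R√(d/λ) ≤ r₀`, one has `I_in(λ) > 0` and `|I_out(λ)|/I_in(λ) ≤ 5 R^{2L} d^{L+1}/λ^L`. -/
theorem laplace_tail_ratio_bound (L : ℕ) (hL : 1 ≤ L) (cf cg : ℝ)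
    (hcf : 1 ≤ cf) (hcg : 1 ≤ cg) :
    ∃ cm cp : ℝ, 1 ≤ cm ∧ 0 < cp ∧ cp ≤ 1 ∧
      ∀ (d : ℕ), 2 * L ≤ d →
      ∀ (r₀ κ : ℝ), 0 < r₀ → 0 < κ → κ ≤ 1 / Real.exp 1 →
      ∀ (f g : EuclideanSpace ℝ (Fin d) → ℝ)
        (T G : (k : ℕ) → MultilinearMap ℝ (fun _ : Fin k => EuclideanSpace ℝ (Fin d)) ℝ),
        -- smoothness
        ContDiffOn ℝ ((2 * L + 2 : ℕ) : ℕ∞) f (Metric.closedBall 0 r₀) →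
        ContDiffOn ℝ ((2 * L : ℕ) : ℕ∞) g (Metric.closedBall 0 r₀) →
        -- (A1)
        (∀ k, 3 ≤ k → k ≤ 2 * L + 1 →
          ∀ (σ : Equiv.Perm (Fin k)) (m : Fin k → EuclideanSpace ℝ (Fin d)),
            T k (m ∘ σ) = T k m) →
        (∀ k, 3 ≤ k → k ≤ 2 * L + 1 → ∀ u : EuclideanSpace ℝ (Fin d), ‖u‖ = 1 →
          |T k fun _ => u| ≤ cf) →
        (∀ x : EuclideanSpace ℝ (Fin d), ‖x‖ ≤ r₀ →
          |f x - (‖x‖ ^ 2 / 2 + ∑ k ∈ Finset.Icc 3 (2 * L + 1),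
              (1 / (Nat.factorial k) : ℝ) * T k fun _ => x)| ≤
            cf * ‖x‖ ^ (2 * (L + 1))) →
        -- (A2)
        g 0 = 1 →
        (∀ x : EuclideanSpace ℝ (Fin d), ‖x‖ ≤ r₀ → 0 < g x) →
        (∀ k, 1 ≤ k → k ≤ 2 * L - 1 →
          ∀ (σ : Equiv.Perm (Fin k)) (m : Fin k → EuclideanSpace ℝ (Fin d)),
            G k (m ∘ σ) = G k m) →
        (∀ k, 1 ≤ k → k ≤ 2 * L - 1 → ∀ u : EuclideanSpace ℝ (Fin d), ‖u‖ = 1 →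
          |G k fun _ => u| ≤ cg) →
        (∀ x : EuclideanSpace ℝ (Fin d), ‖x‖ ≤ r₀ →
          |Real.log (g x) - ∑ k ∈ Finset.Icc 1 (2 * L - 1),
              (1 / (Nat.factorial k) : ℝ) * G k fun _ => x| ≤ cg * ‖x‖ ^ (2 * L)) →
        ∀ lam R : ℝ, 0 < lam →
          -- (A3)
          (∀ x : EuclideanSpace ℝ (Fin d),
            |g x| * Real.exp (-(lam * f x)) ≤
              cg * Real.exp (-(lam * κ *
                min (‖x‖ ^ 2 / 2)
                  (min (Real.sqrt ((d : ℝ) / lam) * ‖x‖)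
                    ((d : ℝ) ^ (-1 / (2 * (L : ℝ))) * Real.log (1 + ‖x‖)))))) →
          cm * max 1
              (κ⁻¹ * (Real.sqrt (Real.log (1 / κ)) + Real.log R + Real.log lam / d)) ≤ R →
          (R ^ 2 * d) ^ (L + 1) / lam ^ L ≤ cp →
          R * Real.sqrt ((d : ℝ) / lam) ≤ r₀ →
          0 < (lam / (2 * π)) ^ ((d : ℝ) / 2) *
              ∫ x in Metric.closedBall (0 : EuclideanSpace ℝ (Fin d))
                  (R * Real.sqrt ((d : ℝ) / lam)),
                g x * Real.exp (-(lam * f x)) ∧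
          |(lam / (2 * π)) ^ ((d : ℝ) / 2) *
                ∫ x in (Metric.closedBall (0 : EuclideanSpace ℝ (Fin d))
                    (R * Real.sqrt ((d : ℝ) / lam)))ᶜ,
                  g x * Real.exp (-(lam * f x))| /
              ((lam / (2 * π)) ^ ((d : ℝ) / 2) *
                ∫ x in Metric.closedBall (0 : EuclideanSpace ℝ (Fin d))
                    (R * Real.sqrt ((d : ℝ) / lam)),
                  g x * Real.exp (-(lam * f x))) ≤
            5 * R ^ (2 * L) * (d : ℝ) ^ (L + 1) / lam ^ L := by
  refine ⟨4 * (((2 * L + 1) * cf + 2 * L * cg) + cg + 2 + L), 1, ?_, one_pos, le_rfl, ?_⟩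
  · have hL0 : (0 : ℝ) ≤ L := by positivity
    have : 0 ≤ (2 * (L : ℝ) + 1) * cf := by positivity
    have : 0 ≤ 2 * (L : ℝ) * cg := by positivity
    linarith
  intro d hd r₀ κ hr₀ hκ hκe f g T G hfc hgc _ hT hTf hg0 hgpos _ hG hGg lam R hlam hA3 hRbig hsc hRr
  set C1 := ((2 * L + 1) * cf + 2 * L * cg) with hC1
  set cm := 4 * (C1 + cg + 2 + L) with hcm
  have hL1 : (1 : ℝ) ≤ L := by exact_mod_cast hL
  have hC1pos : 0 ≤ C1 := by positivity
  have hcm4 : 4 ≤ cm := by rw [hcm]; linarith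
  have hd1 : 1 ≤ d := by omega
  have hdge : (1 : ℝ) ≤ d := by exact_mod_cast hd1
  -- bounds on R
  have hRcm : cm ≤ R := by
    refine le_trans ?_ hRbig
    have := le_max_left 1 (κ⁻¹ * (√(Real.log (1 / κ)) + Real.log R + Real.log lam / d))
    exact le_mul_of_one_le_right (by linarith) this
  have hR4 : 4 ≤ R := hcm4.trans hRcm
  obtain ⟨hK, hK2⟩ := tail_scale L d hL hd1 R lam hlam (by linarith) hsc
  set s := √lam with hs
  set sd := √(d : ℝ) with hsd
  have hspos : 0 < s := Real.sqrt_pos.2 hlam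
  have hsdpos : 0 < sd := Real.sqrt_pos.2 (by linarith)
  have hsd1 : 1 ≤ sd := by rw [hsd, Real.one_le_sqrt]; exact hdge
  have hs1 : 1 ≤ s :=
    le_trans (one_le_mul_of_one_le_of_one_le (by linarith) hsd1) hK2
  have hs2 : s ^ 2 = lam := Real.sq_sqrt hlam.le
  have hsd2 : sd ^ 2 = d := Real.sq_sqrt (by linarith)
  have hlam1 : 1 ≤ lam := by rw [← hs2]; exact one_le_pow₀ hs1
  have hsq : √((d : ℝ) / lam) = sd / s := Real.sqrt_div (by linarith) _
  have hlogκ : 1 ≤ Real.log (1 / κ) := by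
    rw [Real.le_log_iff_exp_le (by positivity), le_one_div (Real.exp_pos _) hκ]; exact hκe
  have hsqrtκ : 1 ≤ √(Real.log (1 / κ)) := by rw [Real.one_le_sqrt]; exact hlogκ
  have hllam : 0 ≤ Real.log lam := Real.log_nonneg hlam1
  have hκRcm : cm * (√(Real.log (1 / κ)) + Real.log R + Real.log lam / d) ≤ κ * R := by
    have h1 : cm * (κ⁻¹ * (√(Real.log (1 / κ)) + Real.log R + Real.log lam / d)) ≤ R := by
      refine le_trans ?_ hRbig
      gcongr
      exact le_max_right _ _
    have h2 := mul_le_mul_of_nonneg_left h1 hκ.le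
    refine le_trans (le_of_eq ?_) h2
    field_simp
  have hlogR0 : 0 ≤ Real.log R := Real.log_nonneg (by linarith)
  have hldd : 0 ≤ Real.log lam / d := by positivity
  have hκR4 : cm ≤ κ * R :=
    (le_mul_of_one_le_right (by linarith) (by linarith)).trans hκRcm
  have hlogR : Real.log (1 / κ) ≤ Real.log R := by
    apply Real.log_le_log (by positivity)
    rw [div_le_iff₀ hκ, mul_comm]; linarith
  have hmain : cm * (d + d * Real.log (1 / κ) + Real.log lam) ≤ κ * R * d := by
    have h1 : cm * (1 + Real.log (1 / κ) + Real.log lam / d) ≤ κ * R :=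
      le_trans (by gcongr) hκRcm
    have h2 := mul_le_mul_of_nonneg_right h1 (by linarith : (0 : ℝ) ≤ d)
    refine le_trans (le_of_eq ?_) h2
    field_simp
  have hnum := tail_numeric L d hd1 cg C1 κ R lam s hC1pos hcg hκ hspos hlam1 (by linarith) hmain
  rw [hsq] at hRr ⊢
  set ρ := R * (sd / s) with hρ
  have hρ1 : ρ ≤ 1 := by rw [hρ, ← mul_div_assoc, div_le_one hspos]; exact hK2
  set F : EuclideanSpace ℝ (Fin d) → ℝ := fun x => g x * Real.exp (-(lam * f x)) with hF
  set B := Metric.closedBall (0 : EuclideanSpace ℝ (Fin d)) ρ with hB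
  set Q := {x : EuclideanSpace ℝ (Fin d) | ∀ i, |x i| ≤ 1 / s} with hQ
  have hBr : B ⊆ Metric.closedBall 0 r₀ := Metric.closedBall_subset_closedBall hRr
  have hFint : IntegrableOn F B := by
    apply ContinuousOn.integrableOn_compact (isCompact_closedBall _ _)
    exact (hgc.continuousOn.mono hBr).mul
      (((hfc.continuousOn.mono hBr).const_smul lam).neg.rexp)
  have hFpos : ∀ x ∈ B, 0 < F x := fun x hx =>
    mul_pos (hgpos x (by simpa using hBr hx)) (Real.exp_pos _)
  obtain ⟨hQm, hQf, hQv⟩ := tail_cube d (1 / s) (by positivity)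
  have hQn : ∀ x ∈ Q, ‖x‖ ≤ sd / s := by
    intro x hx
    apply le_of_sq_le_sq _ (by positivity)
    rw [EuclideanSpace.norm_sq_eq, div_pow, hsd2]
    calc ∑ i, ‖x i‖ ^ 2 ≤ ∑ i : Fin d, (1 / s) ^ 2 := by
          apply Finset.sum_le_sum
          intro i _
          have := hx i
          rw [Real.norm_eq_abs]
          gcongr
      _ = _ := by simp; field_simp
  have hsds : 0 < sd / s := by positivity
  have hQB : Q ⊆ B := by
    intro x hx
    rw [hB, mem_closedBall_zero_iff, hρ]
    exact (hQn x hx).trans (le_mul_of_one_le_left hsds.le (by linarith))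
  -- lower bound for the local integral
  have hlow : ∀ x ∈ Q, Real.exp (-(C1 * d)) ≤ F x := by
    intro x hx
    have hxn := hQn x hx
    have hxB := hQB hx
    have hxρ : ‖x‖ ≤ ρ := by simpa [hB] using hxB
    have hx1 : ‖x‖ ≤ 1 := hxρ.trans hρ1
    have hxr : ‖x‖ ≤ r₀ := hxρ.trans hRr
    have hxsq : lam * ‖x‖ ^ 2 ≤ d := by
      have : ‖x‖ ^ 2 ≤ (sd / s) ^ 2 := by gcongr
      rw [div_pow, hsd2, hs2, le_div_iff₀ hlam] at this
      linarith
    have hf1 := (abs_le.1 (hTf x hxr)).2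
    have hf2 := (abs_le.1 (tail_sum_bound T cf 3 (2 * L + 1) 2 (by norm_num) (by norm_num)
      (by linarith) hT x hx1)).2
    have hcast : ((2 * L + 1 + 1 - 3 : ℕ) : ℝ) = 2 * L - 1 := by
      rw [show 2 * L + 1 + 1 - 3 = 2 * L - 1 by omega, Nat.cast_sub (by omega)]; push_cast; ring
    rw [hcast] at hf2
    have hp1 : ‖x‖ ^ (2 * (L + 1)) ≤ ‖x‖ ^ 2 :=
      pow_le_pow_of_le_one (norm_nonneg _) hx1 (by omega)
    have hf3 : f x ≤ (2 * L + 1) * cf * ‖x‖ ^ 2 := by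
      have : cf * ‖x‖ ^ (2 * (L + 1)) ≤ cf * ‖x‖ ^ 2 := by gcongr
      have h2 : 1 * ‖x‖ ^ 2 ≤ cf * ‖x‖ ^ 2 := by gcongr
      have h3 := sq_nonneg ‖x‖
      linarith
    have hf4 : lam * f x ≤ (2 * L + 1) * cf * d := by
      calc lam * f x ≤ lam * ((2 * L + 1) * cf * ‖x‖ ^ 2) := by gcongr
        _ = (2 * L + 1) * cf * (lam * ‖x‖ ^ 2) := by ring
        _ ≤ _ := by gcongr
    have hg1 := (abs_le.1 (hGg x hxr)).1
    have hg2 := (abs_le.1 (tail_sum_bound G cg 1 (2 * L - 1) 0 (by norm_num) (by norm_num)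
      (by linarith) hG x hx1)).1
    have hcast2 : ((2 * L - 1 + 1 - 1 : ℕ) : ℝ) = 2 * L - 1 := by
      rw [show 2 * L - 1 + 1 - 1 = 2 * L - 1 by omega, Nat.cast_sub (by omega)]; push_cast; ring
    rw [hcast2, pow_zero] at hg2
    have hp2 : ‖x‖ ^ (2 * L) ≤ 1 := pow_le_one₀ (norm_nonneg _) hx1
    have hg3 : -(2 * L * cg) ≤ Real.log (g x) := by
      have : cg * ‖x‖ ^ (2 * L) ≤ cg * 1 := by gcongr
      linarith
    have hg4 : 2 * L * cg ≤ 2 * L * cg * d := by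
      exact le_mul_of_one_le_right (by positivity) hdge
    have hgx := hgpos x hxr
    calc Real.exp (-(C1 * d)) ≤ Real.exp (Real.log (g x) + -(lam * f x)) := by
          apply Real.exp_le_exp.2
          rw [hC1]; linarith
      _ = F x := by rw [Real.exp_add, Real.exp_log hgx]
  have hJin : Real.exp (-(C1 * d)) * (2 * (1 / s)) ^ d ≤ ∫ x in B, F x := by
    rw [← hQv]
    refine (setIntegral_ge_of_const_le_real hQm hQf hlow (hFint.mono_set hQB)).trans ?_
    apply setIntegral_mono_set hFint _ (LE.le.eventuallyLE hQB)
    filter_upwards [ae_restrict_mem measurableSet_closedBall] with x hx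
    exact (hFpos x hx).le
  -- upper bound for the tail integral
  have hb : 0 < κ * s / 4 := by positivity
  have hJout : |∫ x in Bᶜ, F x| ≤
      cg * (Real.exp (-(κ * R * d / 4)) * (π / (κ * s / 4)) ^ d) := by
    have hint := tail_integrable_prod d (κ * s / 4) hb
    have hint2 := (hint.const_mul (Real.exp (-(κ * R * d / 4)))).const_mul cg
    rw [← tail_integral_prod d _ hb, ← integral_const_mul, ← integral_const_mul, ← Real.norm_eq_abs]
    refine le_trans (norm_integral_le_of_norm_le hint2.integrableOn ?_)
      (setIntegral_le_integral hint2 ?_)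
    · filter_upwards [ae_restrict_mem measurableSet_closedBall.compl] with x hx
      have hxn : ρ ≤ ‖x‖ := by
        have : ¬ ‖x‖ ≤ ρ := by simpa [hB] using hx
        linarith
      have hpw := tail_pointwise s sd ((d : ℝ) ^ (-1 / (2 * (L : ℝ)))) κ R hspos hsdpos hsd
        (by positivity) hκ (by linarith) (by linarith) hK hK2 x hxn
      have h3 := hA3 x
      rw [hsq, ← hs2] at h3
      have h4 : ‖F x‖ = |g x| * Real.exp (-(s ^ 2 * f x)) := by
        rw [hF, Real.norm_eq_abs, abs_mul, abs_of_pos (Real.exp_pos _), hs2]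
      rw [h4]
      refine h3.trans ?_
      gcongr
      refine (Real.exp_le_exp.2 (neg_le_neg hpw)).trans (le_of_eq ?_)
      rw [neg_add, Real.exp_add, ← Finset.sum_neg_distrib, Real.exp_sum]
      congr 1
      apply Finset.prod_congr rfl
      intro i _
      rw [Real.exp_neg, Real.exp_log (by positivity)]
    · filter_upwards with x
      have : 0 ≤ ∏ i, (1 + (κ * s / 4 * x i) ^ 2)⁻¹ :=
        Finset.prod_nonneg fun i _ => by positivity
      simp only [Pi.zero_apply]
      positivity
  have hJpos : 0 < ∫ x in B, F x := lt_of_lt_of_le (by positivity) hJin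
  have hc : 0 < (lam / (2 * π)) ^ ((d : ℝ) / 2) := by positivity
  refine ⟨mul_pos hc hJpos, ?_⟩
  rw [abs_mul, abs_of_pos hc, mul_div_mul_left _ _ hc.ne', div_le_iff₀ hJpos]
  have hlL : 0 < 1 / lam ^ L := by positivity
  calc |∫ x in Bᶜ, F x| ≤ (∫ x in B, F x) * (1 / lam ^ L) :=
        hJout.trans (hnum.trans (by gcongr))
    _ ≤ (∫ x in B, F x) * (5 * R ^ (2 * L) * (d : ℝ) ^ (L + 1) / lam ^ L) := by
        gcongr
        have h1 : 1 ≤ R ^ (2 * L) := one_le_pow₀ (by linarith)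
        have h2 : 1 ≤ (d : ℝ) ^ (L + 1) := one_le_pow₀ hdge
        have h3 := one_le_mul_of_one_le_of_one_le h1 h2
        rw [mul_assoc]; linarith
    _ = _ := by ring
end
end

section
/- Fix an integer L ≥ 1 and a constant c ≥ 1. Let T_k : (ℝ^d)^k → ℝ be symmetric k-linear forms for 3 ≤ k ≤ 2L+1 with ‖T_k‖_op ≤ c, and set f(x) = ‖x‖²/2 + Σ_{k=3}^{2L+1} T_k[x^{⊗k}]. Then there exist an integer N ≥ 2, symmetric q-linear maps Φ_q : (ℝ^d)^q → ℝ^d for 2 ≤ q ≤ N whose operator norms are bounded by a constant depending only on c and L, and a constant C' depending only on c and L, such that, defining φ(t) = Σ_{q=2}^{N} Φ_q[t^{⊗q}], one has |f(t + φ(t)) − ‖t‖²/2| ≤ C'·‖t‖^{2L+2} for all ‖t‖ ≤ 1. -/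
noncomputable section

open scoped BigOperators

namespace Quadratize

section Polarization

variable {V : Type*} [NormedAddCommGroup V] [NormedSpace ℝ V]

/-- Character sums over sign vectors vanish for non-surjective maps. -/
lemma sign_sum_zero {k : ℕ} (f : Fin k → Fin k) (hf : ¬ Function.Surjective f) :
    ∑ ε : Fin k → ℤˣ, ((∏ j, ε j) * ∏ i, ε (f i) : ℤˣ).val = 0 := by
  classical
  obtain ⟨j, hj⟩ : ∃ j, ∀ i, f i ≠ j := by
    simpa [Function.Surjective] using hf
  have h := Equiv.sum_comp (Equiv.mulRight (Pi.mulSingle j (-1) : Fin k → ℤˣ))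
    (fun ε : Fin k → ℤˣ => ((∏ j, ε j) * ∏ i, ε (f i) : ℤˣ).val)
  have h2 : ∀ ε : Fin k → ℤˣ,
      (((∏ l, (ε * Pi.mulSingle j (-1) : Fin k → ℤˣ) l) *
        ∏ i, (ε * Pi.mulSingle j (-1) : Fin k → ℤˣ) (f i) : ℤˣ)).val
      = - ((∏ j, ε j) * ∏ i, ε (f i) : ℤˣ).val := by
    intro ε
    have h3 : ∀ i, (Pi.mulSingle j (-1) : Fin k → ℤˣ) (f i) = 1 := fun i =>
      Pi.mulSingle_eq_of_ne (hj i) _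
    simp only [Pi.mul_apply, Finset.prod_mul_distrib, h3, Finset.prod_const_one, mul_one]
    rw [Finset.prod_pi_mulSingle']
    simp
  simp only [Equiv.coe_mulRight] at h
  rw [Finset.sum_congr rfl (fun ε _ => h2 ε), Finset.sum_neg_distrib] at h
  linarith

lemma sign_sum_perm {k : ℕ} (σ : Equiv.Perm (Fin k)) :
    ∑ ε : Fin k → ℤˣ, ((∏ j, ε j) * ∏ i, ε (σ i) : ℤˣ).val = 2 ^ k := by
  have : ∀ ε : Fin k → ℤˣ, ((∏ j, ε j) * ∏ i, ε (σ i) : ℤˣ).val = 1 := by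
    intro ε
    rw [Equiv.prod_comp σ ε, ← Finset.prod_mul_distrib]
    simp
  rw [Finset.sum_congr rfl (fun ε _ => this ε)]
  simp

lemma polarization {k : ℕ} (T : MultilinearMap ℝ (fun _ : Fin k => V) ℝ)
    (hT : ∀ (σ : Equiv.Perm (Fin k)) (m : Fin k → V), T (m ∘ σ) = T m) (m : Fin k → V) :
    ∑ ε : Fin k → ℤˣ, (((∏ j, ε j : ℤˣ) : ℤ) : ℝ) * T (fun _ => ∑ j, ((ε j : ℤ) : ℝ) • m j)
      = 2 ^ k * (k.factorial : ℝ) * T m := by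
  classical
  have h1 : ∀ ε : Fin k → ℤˣ, T (fun _ => ∑ j, ((ε j : ℤ) : ℝ) • m j)
      = ∑ f : Fin k → Fin k, (((∏ i, ε (f i) : ℤˣ) : ℤ) : ℝ) * T (m ∘ f) := by
    intro ε
    rw [MultilinearMap.map_sum]
    refine Finset.sum_congr rfl fun f _ => ?_
    rw [MultilinearMap.map_smul_univ]
    simp [Function.comp_def]
  simp only [h1, Finset.mul_sum]
  rw [Finset.sum_comm]
  have h2 : ∀ f : Fin k → Fin k,
      ∑ ε : Fin k → ℤˣ, (((∏ j, ε j : ℤˣ) : ℤ) : ℝ) *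
        ((((∏ i, ε (f i) : ℤˣ) : ℤ) : ℝ) * T (m ∘ f))
      = ((∑ ε : Fin k → ℤˣ, ((∏ j, ε j) * ∏ i, ε (f i) : ℤˣ).val : ℤ) : ℝ) * T (m ∘ f) := by
    intro f
    push_cast
    rw [Finset.sum_mul]
    refine Finset.sum_congr rfl fun ε _ => ?_
    ring
  simp only [h2]
  have h3 : ∑ f : Fin k → Fin k,
      ((∑ ε : Fin k → ℤˣ, ((∏ j, ε j) * ∏ i, ε (f i) : ℤˣ).val : ℤ) : ℝ) * T (m ∘ f)
      = ∑ σ : Equiv.Perm (Fin k), (2 ^ k : ℝ) * T m := by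
    symm
    refine Finset.sum_of_injOn (fun σ : Equiv.Perm (Fin k) => (σ : Fin k → Fin k)) ?_ ?_ ?_ ?_
    · intro a _ b _ hab
      exact DFunLike.coe_injective hab
    · intro a _; simp
    · intro f _ hf
      rw [sign_sum_zero f]
      · simp
      · intro hs
        apply hf
        have hb : Function.Bijective f := Finite.injective_iff_surjective.mpr hs |>.bijective_of_finite
        exact ⟨Equiv.ofBijective f hb, by simp, rfl⟩
    · intro σ _
      rw [sign_sum_perm, hT]
      simp
  rw [h3]
  simp [Fintype.card_perm]
  ring

lemma diag_bound {k : ℕ} (hk : 1 ≤ k) (T : MultilinearMap ℝ (fun _ : Fin k => V) ℝ) {c : ℝ}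
    (hb : ∀ u : V, ‖u‖ = 1 → |T fun _ => u| ≤ c) (v : V) :
    |T fun _ => v| ≤ c * ‖v‖ ^ k := by
  by_cases hv : v = 0
  · subst hv
    have : (T fun _ => (0 : V)) = 0 := T.map_coord_zero (⟨0, hk⟩ : Fin k) rfl
    rw [this]
    simp [show k ≠ 0 by omega]
  · have hn : ‖v‖ ≠ 0 := norm_ne_zero_iff.mpr hv
    have h1 : (fun _ : Fin k => v) = fun _ : Fin k => ‖v‖ • (‖v‖⁻¹ • v) := by
      funext _; rw [smul_smul, mul_inv_cancel₀ hn, one_smul]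
    rw [h1, T.map_smul_univ (fun _ => ‖v‖) (fun _ => ‖v‖⁻¹ • v)]
    simp only [Finset.prod_const, Finset.card_univ, Fintype.card_fin, smul_eq_mul, abs_mul,
      abs_pow, abs_norm]
    rw [mul_comm]
    gcongr
    apply hb
    rw [norm_smul, norm_inv, norm_norm, inv_mul_cancel₀ hn]

lemma full_bound {k : ℕ} (hk : 1 ≤ k) (T : MultilinearMap ℝ (fun _ : Fin k => V) ℝ) {c : ℝ}
    (hc : 0 ≤ c)
    (hT : ∀ (σ : Equiv.Perm (Fin k)) (m : Fin k → V), T (m ∘ σ) = T m)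
    (hb : ∀ u : V, ‖u‖ = 1 → |T fun _ => u| ≤ c) (m : Fin k → V) :
    ‖T m‖ ≤ (c * (k : ℝ) ^ k) * ∏ i, ‖m i‖ := by
  have key : ∀ u : Fin k → V, (∀ i, ‖u i‖ = 1) → |T u| ≤ c * (k : ℝ) ^ k := by
    intro u hu
    have hp := polarization T hT u
    have h1 : |2 ^ k * (k.factorial : ℝ) * T u| ≤ 2 ^ k * (c * (k : ℝ) ^ k) := by
      rw [← hp]
      refine (Finset.abs_sum_le_sum_abs _ _).trans ?_
      have : ∀ ε ∈ (Finset.univ : Finset (Fin k → ℤˣ)),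
          |(((∏ j, ε j : ℤˣ) : ℤ) : ℝ) * T (fun _ => ∑ j, ((ε j : ℤ) : ℝ) • u j)|
            ≤ c * (k : ℝ) ^ k := by
        intro ε _
        have hs : ∀ s : ℤˣ, |((s : ℤ) : ℝ)| = 1 := by
          intro s
          rcases Int.units_eq_one_or s with h | h <;> simp [h]
        rw [abs_mul, hs, one_mul]
        refine (diag_bound hk T hb _).trans ?_
        gcongr
        refine (norm_sum_le _ _).trans ?_
        simp [norm_smul, hu, hs]
      refine (Finset.sum_le_sum this).trans ?_
      simp
    rw [abs_mul, abs_of_pos (by positivity), mul_assoc] at h1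
    have h2 := le_of_mul_le_mul_left h1 (by positivity)
    have h3 : (1 : ℝ) ≤ k.factorial := by exact_mod_cast Nat.factorial_pos k
    nlinarith [abs_nonneg (T u)]
  by_cases hz : ∃ i, m i = 0
  · obtain ⟨i, hi⟩ := hz
    rw [T.map_coord_zero i hi, norm_zero]
    positivity
  · push Not at hz
    have h1 : m = fun i => ‖m i‖ • (‖m i‖⁻¹ • m i) := by
      funext i; rw [smul_smul, mul_inv_cancel₀ (norm_ne_zero_iff.mpr (hz i)), one_smul]
    have h2 : T m = (∏ i, ‖m i‖) * T (fun i => ‖m i‖⁻¹ • m i) := by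
      conv_lhs => rw [h1]
      rw [T.map_smul_univ, smul_eq_mul]
    rw [h2, Real.norm_eq_abs, abs_mul, abs_of_nonneg (by positivity), mul_comm]
    gcongr
    apply key
    intro i
    rw [norm_smul, norm_inv, norm_norm, inv_mul_cancel₀ (norm_ne_zero_iff.mpr (hz i))]

end Polarization

section Graded

variable {ι : Type} {E : ι → Type} [∀ i, NormedAddCommGroup (E i)] [∀ i, NormedSpace ℝ (E i)]
  {F : ι → Type} [∀ i, NormedAddCommGroup (F i)] [∀ i, NormedSpace ℝ (F i)]
  {F' : ι → Type} [∀ i, NormedAddCommGroup (F' i)] [∀ i, NormedSpace ℝ (F' i)]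
  {G : ι → Type} [∀ i, NormedAddCommGroup (G i)] [∀ i, NormedSpace ℝ (G i)]

/-- Uniformly bounded families of homogeneous polynomial maps of degree `n`. -/
def UH (n : ℕ) (g : ∀ i, E i → F i) : Prop :=
  ∃ C : ℝ, ∀ i, ∃ A : ContinuousMultilinearMap ℝ (fun _ : Fin n => E i) (F i),
    ‖A‖ ≤ C ∧ ∀ t, g i t = A fun _ => t

/-- Finite sums of uniformly bounded homogeneous families of degree at least `m`. -/
inductive UP (m : ℕ) : (∀ i, E i → F i) → Prop
  | zero : UP m (fun _ _ => 0)
  | step {j : ℕ} {h g : ∀ i, E i → F i} : m ≤ j → UH j h → UP m g →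
      UP m (fun i t => h i t + g i t)

lemma UH.up {n m : ℕ} {g : ∀ i, E i → F i} (hg : UH n g) (h : m ≤ n) : UP m g := by
  have := UP.step h hg UP.zero
  simpa using this

lemma UP.mono {m n : ℕ} {g : ∀ i, E i → F i} (hg : UP n g) (h : m ≤ n) : UP m g := by
  induction hg with
  | zero => exact .zero
  | step hj hh _ ih => exact .step (h.trans hj) hh ih

lemma UP.add {m : ℕ} {g g' : ∀ i, E i → F i} (hg : UP m g) (hg' : UP m g') :
    UP m (fun i t => g i t + g' i t) := by
  induction hg with
  | zero => simpa using hg'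
  | step hj hh _ ih =>
    simp only [add_assoc]
    exact .step hj hh ih

lemma UP.sum {m : ℕ} {α : Type*} (s : Finset α) {g : α → ∀ i, E i → F i}
    (hg : ∀ a ∈ s, UP m (g a)) : UP m (fun i t => ∑ a ∈ s, g a i t) := by
  classical
  induction s using Finset.induction_on with
  | empty => simpa using UP.zero
  | insert a s ha ih =>
    simp only [Finset.sum_insert ha]
    exact (hg a (by simp)).add (ih fun b hb => hg b (by simp [hb]))

lemma UH.zero (n : ℕ) : UH n (fun (i : ι) (_ : E i) => (0 : F i)) :=
  ⟨0, fun i => ⟨0, by simp, fun t => by simp⟩⟩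

lemma UH.add {n : ℕ} {g g' : ∀ i, E i → F i} (hg : UH n g) (hg' : UH n g') :
    UH n (fun i t => g i t + g' i t) := by
  obtain ⟨C, hC⟩ := hg
  obtain ⟨C', hC'⟩ := hg'
  refine ⟨C + C', fun i => ?_⟩
  obtain ⟨A, hA, hA'⟩ := hC i
  obtain ⟨B, hB, hB'⟩ := hC' i
  exact ⟨A + B, (norm_add_le _ _).trans (add_le_add hA hB), fun t => by simp [hA', hB']⟩

lemma UH.lin {n : ℕ} {g : ∀ i, E i → F i} (hg : UH n g) (B : ∀ i, F i →L[ℝ] G i) {b : ℝ}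
    (hB : ∀ i, ‖B i‖ ≤ b) : UH n (fun i t => B i (g i t)) := by
  obtain ⟨C, hC⟩ := hg
  refine ⟨b * C, fun i => ?_⟩
  obtain ⟨A, hA, hA'⟩ := hC i
  refine ⟨(B i).compContinuousMultilinearMap A, ?_, fun t => by simp [hA']⟩
  refine (ContinuousLinearMap.norm_compContinuousMultilinearMap_le _ _).trans ?_
  have := (norm_nonneg (B i)).trans (hB i)
  gcongr
  exact hB i

lemma UH.bilin {n n' : ℕ} {g : ∀ i, E i → F i} {g' : ∀ i, E i → F' i} (hg : UH n g)
    (hg' : UH n' g') (B : ∀ i, F i →L[ℝ] F' i →L[ℝ] G i) {b : ℝ} (hB : ∀ i, ‖B i‖ ≤ b) :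
    UH (n + n') (fun i t => B i (g i t) (g' i t)) := by
  obtain ⟨C, hC⟩ := hg
  obtain ⟨C', hC'⟩ := hg'
  refine ⟨b * C * C', fun i => ?_⟩
  obtain ⟨A, hA, hA1⟩ := hC i
  obtain ⟨A', hA', hA1'⟩ := hC' i
  have hb := (norm_nonneg (B i)).trans (hB i)
  have hc := (norm_nonneg A).trans hA
  have hc' := (norm_nonneg A').trans hA'
  let M := ((ContinuousLinearMap.compContinuousMultilinearMapL ℝ
    (fun _ : Fin n' => E i) (F' i) (G i)).flip A').compContinuousMultilinearMap
      ((B i).compContinuousMultilinearMap A)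
  let M2 := M.uncurrySum.domDomCongr finSumFinEquiv
  have hM2 : ∀ m, M2 m = B i (A fun j => m (Fin.castAdd n' j)) (A' fun j => m (Fin.natAdd n j)) := by
    intro m
    simp [M2, M, Function.comp_def]
  refine ⟨M2, ?_, fun t => by rw [hM2]; simp only [hA1, hA1']⟩
  refine ContinuousMultilinearMap.opNorm_le_bound (by positivity) fun m => ?_
  rw [hM2, Fin.prod_univ_add]
  have h1 := A.le_opNorm (fun j => m (Fin.castAdd n' j))
  have h2 := A'.le_opNorm (fun j => m (Fin.natAdd n j))
  refine ((B i).le_opNorm₂ _ _).trans ?_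
  calc _ ≤ b * (C * ∏ j, ‖m (Fin.castAdd n' j)‖) * (C' * ∏ j, ‖m (Fin.natAdd n j)‖) := by
        gcongr
        · exact hB i
        · exact h1.trans (by gcongr)
        · exact h2.trans (by gcongr)
    _ = _ := by ring

lemma UP.lin {n : ℕ} {g : ∀ i, E i → F i} (hg : UP n g) (B : ∀ i, F i →L[ℝ] G i) {b : ℝ}
    (hB : ∀ i, ‖B i‖ ≤ b) : UP n (fun i t => B i (g i t)) := by
  induction hg with
  | zero => simpa using UP.zero
  | step hj hh _ ih =>
    simp only [map_add]
    exact .step hj (hh.lin B hB) ih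

lemma UP.bilin {n n' : ℕ} {g : ∀ i, E i → F i} {g' : ∀ i, E i → F' i} (hg : UP n g)
    (hg' : UP n' g') (B : ∀ i, F i →L[ℝ] F' i →L[ℝ] G i) {b : ℝ} (hB : ∀ i, ‖B i‖ ≤ b) :
    UP (n + n') (fun i t => B i (g i t) (g' i t)) := by
  induction hg with
  | zero => simpa using UP.zero
  | @step j h g hj hh _ ih =>
    simp only [map_add, ContinuousLinearMap.add_apply]
    refine UP.add ?_ ih
    clear ih
    induction hg' with
    | zero => simpa using UP.zero
    | step hj' hh' _ ih' =>
      simp only [map_add]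
      exact .step (add_le_add hj hj') (hh.bilin hh' B hB) ih'

lemma UH.const (A : ∀ i, F i) {C : ℝ} (hA : ∀ i, ‖A i‖ ≤ C) : UH 0 (fun i (_ : E i) => A i) :=
  ⟨C, fun i => ⟨ContinuousMultilinearMap.constOfIsEmpty ℝ _ (A i),
    by rw [ContinuousMultilinearMap.norm_constOfIsEmpty]; exact hA i, fun t => by simp⟩⟩

lemma UH.id : UH 1 (fun i (t : E i) => t) := by
  refine ⟨1, fun i => ⟨(continuousMultilinearCurryFin1 ℝ (E i) (E i)).symm
    (ContinuousLinearMap.id ℝ (E i)), ?_, fun t => by simp⟩⟩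
  rw [LinearIsometryEquiv.norm_map]
  exact ContinuousLinearMap.norm_id_le

lemma UP.bound {m : ℕ} {g : ∀ i, E i → F i} (hg : UP m g) :
    ∃ C : ℝ, 0 ≤ C ∧ ∀ i t, ‖t‖ ≤ 1 → ‖g i t‖ ≤ C * ‖t‖ ^ m := by
  induction hg with
  | zero => exact ⟨0, le_rfl, by simp⟩
  | @step j h g hj hh _ ih =>
    obtain ⟨C, hC⟩ := hh
    obtain ⟨C', h0, hC'⟩ := ih
    refine ⟨|C| + C', by positivity, fun i t ht => ?_⟩
    obtain ⟨A, hA, hA'⟩ := hC i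
    refine (norm_add_le _ _).trans ?_
    rw [add_mul]
    refine add_le_add ?_ (hC' i t ht)
    rw [hA']
    refine (A.le_opNorm _).trans ?_
    simp only [Finset.prod_const, Finset.card_univ, Fintype.card_fin]
    have : ‖t‖ ^ j ≤ ‖t‖ ^ m := pow_le_pow_of_le_one (norm_nonneg _) ht hj
    have := hA.trans (le_abs_self C)
    gcongr

lemma UP.extract {m : ℕ} {g : ∀ i, E i → F i} (hg : UP m g) :
    ∃ h r : ∀ i, E i → F i, UH m h ∧ UP (m + 1) r ∧ ∀ i t, g i t = h i t + r i t := by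
  induction hg with
  | zero => exact ⟨_, _, UH.zero m, UP.zero, by simp⟩
  | @step j h g hj hh _ ih =>
    obtain ⟨h', r', h1, h2, h3⟩ := ih
    rcases hj.eq_or_lt with rfl | hlt
    · exact ⟨_, _, hh.add h1, h2, fun i t => by simp only [h3, add_assoc]⟩
    · exact ⟨_, _, h1, UP.step hlt hh h2, fun i t => by simp only [h3]; abel⟩

/-- Substituting polynomial families into a family of multilinear maps. -/
lemma UP.multi : ∀ (k : ℕ) {m : ℕ}
    {a : ∀ i, E i → ContinuousMultilinearMap ℝ (fun _ : Fin k => F i) (G i)} (_ : UP m a)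
    {r : Fin k → ℕ} {y : Fin k → ∀ i, E i → F i} (_ : ∀ j, UP (r j) (y j)),
    UP (m + ∑ j, r j) (fun i t => a i t (fun j => y j i t)) := by
  intro k
  induction k with
  | zero =>
    intro m a ha r y hy
    have := ha.lin (fun i => ((continuousMultilinearCurryFin0 ℝ (F i) (G i)).toContinuousLinearEquiv
      : _ →L[ℝ] (G i))) (b := 1) (fun i => by
        refine ContinuousLinearMap.opNorm_le_bound _ zero_le_one fun x => ?_
        simp)
    simp only [Finset.univ_eq_empty, Finset.sum_empty, add_zero]
    convert this using 4
    rename_i i t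
    simp
    congr 1
    exact Subsingleton.elim _ _
  | succ k ih =>
    intro m a ha r y hy
    have h1 := ha.lin
      (G := fun i => F i →L[ℝ] ContinuousMultilinearMap ℝ (fun _ : Fin k => F i) (G i)) (fun i =>
      ((continuousMultilinearCurryLeftEquiv ℝ (fun _ : Fin (k+1) => F i) (G i)).toContinuousLinearEquiv
      : _ →L[ℝ] _)) (b := 1) (fun i => by
        refine ContinuousLinearMap.opNorm_le_bound _ zero_le_one fun x => ?_
        rw [one_mul]
        exact ((continuousMultilinearCurryLeftEquiv ℝ (fun _ : Fin (k+1) => F i) (G i)).norm_map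
          x).le)
    have h2 := h1.bilin (hy 0) (fun i => ContinuousLinearMap.id ℝ _) (b := 1)
      (fun i => ContinuousLinearMap.norm_id_le)
    have h3 := ih h2 (r := fun j => r j.succ) (y := fun j => y j.succ) (fun j => hy _)
    rw [Fin.sum_univ_succ, ← add_assoc]
    convert h3 using 4
    rename_i i t
    simp
    congr 1
    funext j
    refine Fin.cases ?_ (fun j => ?_) j <;> simp

lemma UP.multi_diff {k : ℕ} {r : ℕ} (hr : 1 ≤ r)
    (A : ∀ i, ContinuousMultilinearMap ℝ (fun _ : Fin k => F i) (G i)) {C : ℝ}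
    (hA : ∀ i, ‖A i‖ ≤ C) {y z : ∀ i, E i → F i} (hy : UP 1 y) (hz : UP r z) :
    UP (r + k - 1) (fun i t => A i (fun _ => y i t + z i t) - A i (fun _ => y i t)) := by
  classical
  have h : ∀ i t, A i (fun _ => y i t + z i t) - A i (fun _ => y i t)
      = ∑ s ∈ (Finset.univ : Finset (Finset (Fin k))).erase Finset.univ,
        A i (fun j => (if j ∈ s then y else z) i t) := by
    intro i t
    have h1 := (A i).map_add_univ (fun _ => y i t) (fun _ => z i t)
    have h2 : ((fun _ => y i t) + fun _ => z i t : Fin k → F i) = fun _ => y i t + z i t := rfl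
    rw [h2] at h1
    rw [h1, ← Finset.add_sum_erase _ _ (Finset.mem_univ Finset.univ)]
    simp only [Finset.piecewise_univ, add_sub_cancel_left]
    refine Finset.sum_congr rfl fun s _ => ?_
    congr 1
    funext j
    simp only [Finset.piecewise]
    split_ifs <;> rfl
  simp only [h]
  refine UP.sum _ (g := fun s i t => A i (fun j => (if j ∈ s then y else z) i t)) fun s hs => ?_
  have hs' : s ≠ Finset.univ := (Finset.mem_erase.mp hs).1
  obtain ⟨j0, hj0⟩ : ∃ j, j ∉ s := by
    by_contra hcon
    push Not at hcon
    exact hs' (Finset.eq_univ_iff_forall.mpr hcon)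
  have h3 := UP.multi k ((UH.const (E := E) A hA).up le_rfl) (r := fun j => if j ∈ s then 1 else r)
    (y := fun j => if j ∈ s then y else z) (fun j => by
      by_cases hj : j ∈ s <;> simp [hj, hy, hz])
  refine h3.mono ?_
  rw [zero_add, ← Finset.add_sum_erase _ _ (Finset.mem_univ j0)]
  simp only [hj0, if_false]
  have h4 : ∑ j ∈ Finset.univ.erase j0, 1 ≤ ∑ j ∈ Finset.univ.erase j0, (if j ∈ s then 1 else r) :=
    Finset.sum_le_sum fun j _ => by split_ifs <;> omega
  simp only [Finset.sum_const, smul_eq_mul, mul_one, Finset.card_erase_of_mem (Finset.mem_univ j0),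
    Finset.card_univ, Fintype.card_fin] at h4
  omega

end Graded

section Main

variable {ι : Type} {E : ι → Type} [∀ i, NormedAddCommGroup (E i)]
  [∀ i, InnerProductSpace ℝ (E i)] [∀ i, CompleteSpace (E i)]

lemma UP.inner {F : ι → Type} [∀ i, NormedAddCommGroup (F i)] [∀ i, NormedSpace ℝ (F i)]
    {n n' : ℕ} {g g' : ∀ i, F i → E i} (hg : UP n g) (hg' : UP n' g') :
    UP (n + n') (fun i t => (inner ℝ (g i t) (g' i t) : ℝ)) := by
  have := hg.bilin hg' (fun i => innerSL ℝ) (b := 1) (fun i => norm_innerSL_le ℝ)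
  exact this

/-- Inverse of the Riesz isomorphism as a real linear map. -/
def dualInv (V : Type) [NormedAddCommGroup V] [InnerProductSpace ℝ V] [CompleteSpace V] :
    (V →L[ℝ] ℝ) →L[ℝ] V :=
  LinearMap.mkContinuous
    { toFun := fun x => (InnerProductSpace.toDual ℝ V).symm x
      map_add' := fun x y => by simp
      map_smul' := fun a x => by simp } 1 (fun x => by simp)

/-- Division of a homogeneous family of forms by `t`. -/
lemma UH.divide {n : ℕ} {g : ∀ i, E i → ℝ} (hg : UH (F := fun _ => ℝ) (n + 1) g) :
    ∃ Ψ : ∀ i, E i → E i, UH n Ψ ∧ ∀ i t, inner ℝ t (Ψ i t) = - g i t := by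
  obtain ⟨C, hC⟩ := hg
  choose A hA hA' using hC
  have h1 : UH n (fun i (t : E i) => (A i).curryRight fun _ => t) :=
    ⟨C, fun i => ⟨(A i).curryRight, by rw [ContinuousMultilinearMap.curryRight_norm]; exact hA i,
      fun t => rfl⟩⟩
  have h2 := h1.lin (fun i => -dualInv (E i)) (b := 1) (fun i => by
        rw [norm_neg]
        exact LinearMap.mkContinuous_norm_le _ zero_le_one _)
  refine ⟨_, h2, fun i t => ?_⟩
  rw [real_inner_comm, hA']
  simp [dualInv]
  congr 1
  funext j
  refine Fin.lastCases ?_ (fun j => ?_) j <;> simp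

lemma main_induction (K : ℕ) (T : ∀ k i, ContinuousMultilinearMap ℝ (fun _ : Fin k => E i) ℝ)
    (hT : ∀ k ∈ Finset.Icc 3 K, ∃ C, ∀ i, ‖T k i‖ ≤ C) (n : ℕ) :
    ∃ Φ : ℕ → ∀ i, E i → E i, (∀ q, UH q (Φ q)) ∧
      UP (F := fun _ => ℝ) (n + 3) (fun i (t : E i) =>
        ‖t + ∑ q ∈ Finset.Icc 2 (n + 1), Φ q i t‖ ^ 2 / 2 +
          ∑ k ∈ Finset.Icc 3 K, T k i (fun _ => t + ∑ q ∈ Finset.Icc 2 (n + 1), Φ q i t)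
            - ‖t‖ ^ 2 / 2) := by
  induction n with
  | zero =>
    refine ⟨fun q i t => 0, fun q => UH.zero q, ?_⟩
    simp only [Finset.sum_const_zero, add_zero, add_sub_cancel_left]
    refine UP.sum _ (F := fun _ => ℝ) (g := fun k i t => T k i (fun _ => t)) fun k hk => ?_
    obtain ⟨C, hC⟩ := hT k hk
    exact UH.up (n := k) ⟨C, fun i => ⟨T k i, hC i, fun t => rfl⟩⟩ (by simp at hk ⊢; omega)
  | succ n ih =>
    obtain ⟨Φ, hΦ, hU⟩ := ih
    obtain ⟨h, r, hh, hr, hhr⟩ := hU.extract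
    obtain ⟨Ψ, hΨ, hΨ'⟩ := UH.divide hh
    refine ⟨Function.update Φ (n + 2) Ψ, ?_, ?_⟩
    · intro q
      by_cases hq : q = n + 2
      · subst hq; simpa using hΨ
      · simpa [hq] using hΦ q
    have hsum : ∀ i t, ∑ q ∈ Finset.Icc 2 (n + 1 + 1), Function.update Φ (n + 2) Ψ q i t
        = ∑ q ∈ Finset.Icc 2 (n + 1), Φ q i t + Ψ i t := by
      intro i t
      rw [Finset.sum_Icc_succ_top (by omega)]
      simp only [Function.update_self]
      congr 1
      refine Finset.sum_congr rfl fun q hq => ?_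
      rw [Function.update_of_ne]
      simp at hq
      omega
    simp only [hsum]
    have hφ : UP 2 (fun i t => ∑ q ∈ Finset.Icc 2 (n + 1), Φ q i t) :=
      UP.sum _ fun q hq => (hΦ q).up (Finset.mem_Icc.mp hq).1
    have hx : UP 1 (fun i t => t + ∑ q ∈ Finset.Icc 2 (n + 1), Φ q i t) :=
      (UH.id.up le_rfl).add (hφ.mono (by omega))
    have hΨu : UP (n + 2) Ψ := hΨ.up le_rfl
    have hin : UP (F := fun _ => ℝ) (n + 4)
        (fun i t => inner ℝ (∑ q ∈ Finset.Icc 2 (n + 1), Φ q i t) (Ψ i t)) :=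
      (hφ.inner hΨu).mono (by omega)
    have hsq : UP (F := fun _ => ℝ) (n + 4)
        (fun i t => inner ℝ (Ψ i t) ((1 / 2 : ℝ) • Ψ i t)) := by
      have h1 : UP (n + 2) (fun i t => (1 / 2 : ℝ) • Ψ i t) := by
        have := hΨu.lin (fun i => (1 / 2 : ℝ) • ContinuousLinearMap.id ℝ (E i)) (b := 1)
          (fun i => by
            rw [norm_smul]
            have := ContinuousLinearMap.norm_id_le (𝕜 := ℝ) (E := E i)
            norm_num
            linarith)
        simpa using this
      exact (hΨu.inner h1).mono (by omega)
    have hTd : UP (F := fun _ => ℝ) (n + 4) (fun i t => ∑ k ∈ Finset.Icc 3 K,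
        (T k i (fun _ => t + ∑ q ∈ Finset.Icc 2 (n + 1), Φ q i t + Ψ i t) -
          T k i (fun _ => t + ∑ q ∈ Finset.Icc 2 (n + 1), Φ q i t))) := by
      refine UP.sum _ (F := fun _ => ℝ) (g := fun k i t =>
        (T k i (fun _ => t + ∑ q ∈ Finset.Icc 2 (n + 1), Φ q i t + Ψ i t) -
          T k i (fun _ => t + ∑ q ∈ Finset.Icc 2 (n + 1), Φ q i t))) fun k hk => ?_
      obtain ⟨C, hC⟩ := hT k hk
      have := UP.multi_diff (r := n + 2) (by omega) (T k) hC hx hΨu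
      exact this.mono (by simp at hk; omega)
    have hall := ((hr.add hin).add hsq).add hTd
    refine Eq.mp ?_ hall
    congr 1
    funext i t
    have e1 := hhr i t
    have e2 := hΨ' i t
    rw [Finset.sum_sub_distrib]
    rw [← add_assoc, norm_add_sq_real (t + _) (Ψ i t), inner_add_left, inner_smul_right,
      real_inner_self_eq_norm_sq, e2]
    linarith

end Main

/-- Symmetrization of a multilinear map. -/
def symmetrize {V W : Type*} [AddCommGroup V] [Module ℝ V] [AddCommGroup W] [Module ℝ W] {q : ℕ}
    (A : MultilinearMap ℝ (fun _ : Fin q => V) W) : MultilinearMap ℝ (fun _ : Fin q => V) W :=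
  ((q.factorial : ℝ)⁻¹) • ∑ σ : Equiv.Perm (Fin q), A.domDomCongr σ

lemma symmetrize_symm {V W : Type*} [AddCommGroup V] [Module ℝ V] [AddCommGroup W] [Module ℝ W]
    {q : ℕ} (A : MultilinearMap ℝ (fun _ : Fin q => V) W) (τ : Equiv.Perm (Fin q))
    (m : Fin q → V) : symmetrize A (m ∘ τ) = symmetrize A m := by
  simp only [symmetrize, MultilinearMap.smul_apply, MultilinearMap.sum_apply,
    MultilinearMap.domDomCongr_apply]
  congr 1
  exact Equiv.sum_comp (Equiv.mulLeft τ) (fun σ : Equiv.Perm (Fin q) => A fun i => m (σ i))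

lemma symmetrize_diag {V W : Type*} [AddCommGroup V] [Module ℝ V] [AddCommGroup W] [Module ℝ W]
    {q : ℕ} (A : MultilinearMap ℝ (fun _ : Fin q => V) W) (t : V) :
    (symmetrize A fun _ => t) = A fun _ => t := by
  simp only [symmetrize, MultilinearMap.smul_apply, MultilinearMap.sum_apply,
    MultilinearMap.domDomCongr_apply, Finset.sum_const, Finset.card_univ, Fintype.card_perm,
    Fintype.card_fin]
  rw [← Nat.cast_smul_eq_nsmul ℝ, smul_smul, inv_mul_cancel₀ (by positivity), one_smul]

/-- The admissible data: a dimension and a family of forms. -/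
structure Datum (L : ℕ) (c : ℝ) : Type where
  d : ℕ
  T : (k : ℕ) → MultilinearMap ℝ (fun _ : Fin k => EuclideanSpace ℝ (Fin d)) ℝ
  symm : ∀ k, 3 ≤ k → k ≤ 2 * L + 1 →
          ∀ (σ : Equiv.Perm (Fin k)) (m : Fin k → EuclideanSpace ℝ (Fin d)),
            T k (m ∘ σ) = T k m
  bdd : ∀ k, 3 ≤ k → k ≤ 2 * L + 1 → ∀ u : EuclideanSpace ℝ (Fin d), ‖u‖ = 1 →
          |T k fun _ => u| ≤ c

end Quadratize

/-- **Quadratizing change of variables.** Given symmetric `k`-linear forms `T_k`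
(`3 ≤ k ≤ 2L+1`) with operator norms at most `c`, and
`f(x) = ‖x‖²/2 + Σ_{k=3}^{2L+1} T_k[x^{⊗k}]`, there is a polynomial map
`φ(t) = Σ_{q=2}^{N} Φ_q[t^{⊗q}]` built from symmetric `q`-linear maps with operator norms
bounded by a constant depending only on `c` and `L` (not on `d`), such that
`|f(t + φ(t)) − ‖t‖²/2| ≤ C'‖t‖^{2L+2}` for all `‖t‖ ≤ 1`. -/
theorem quadratizing_change_of_variables (L : ℕ) (hL : 1 ≤ L) (c : ℝ) (hc : 1 ≤ c) :
    ∃ (N : ℕ) (Cnorm C' : ℝ), 2 ≤ N ∧ 0 ≤ Cnorm ∧ 0 ≤ C' ∧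
      ∀ (d : ℕ)
        (T : (k : ℕ) → MultilinearMap ℝ (fun _ : Fin k => EuclideanSpace ℝ (Fin d)) ℝ),
        (∀ k, 3 ≤ k → k ≤ 2 * L + 1 →
          ∀ (σ : Equiv.Perm (Fin k)) (m : Fin k → EuclideanSpace ℝ (Fin d)),
            T k (m ∘ σ) = T k m) →
        (∀ k, 3 ≤ k → k ≤ 2 * L + 1 → ∀ u : EuclideanSpace ℝ (Fin d), ‖u‖ = 1 →
          |T k fun _ => u| ≤ c) →
        ∃ Φ : (q : ℕ) →
            MultilinearMap ℝ (fun _ : Fin q => EuclideanSpace ℝ (Fin d))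
              (EuclideanSpace ℝ (Fin d)),
          (∀ q, 2 ≤ q → q ≤ N →
            ∀ (σ : Equiv.Perm (Fin q)) (m : Fin q → EuclideanSpace ℝ (Fin d)),
              Φ q (m ∘ σ) = Φ q m) ∧
          (∀ q, 2 ≤ q → q ≤ N → ∀ u : EuclideanSpace ℝ (Fin d), ‖u‖ = 1 →
            ‖Φ q fun _ => u‖ ≤ Cnorm) ∧
          ∀ t : EuclideanSpace ℝ (Fin d), ‖t‖ ≤ 1 →
            |(‖t + ∑ q ∈ Finset.Icc 2 N, Φ q fun _ => t‖ ^ 2 / 2 +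
                ∑ k ∈ Finset.Icc 3 (2 * L + 1),
                  T k fun _ => t + ∑ q ∈ Finset.Icc 2 N, Φ q fun _ => t) -
              ‖t‖ ^ 2 / 2| ≤ C' * ‖t‖ ^ (2 * L + 2) := by
  classical
  have hTc : ∀ (k : ℕ) (i : Quadratize.Datum L c), ∃ A : ContinuousMultilinearMap ℝ
      (fun _ : Fin k => EuclideanSpace ℝ (Fin i.d)) ℝ, k ∈ Finset.Icc 3 (2 * L + 1) →
        ‖A‖ ≤ c * (k : ℝ) ^ k ∧ ∀ m, A m = i.T k m := by
    intro k i
    by_cases hk : k ∈ Finset.Icc 3 (2 * L + 1)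
    · have hk' := Finset.mem_Icc.mp hk
      have hb := Quadratize.full_bound (by omega) (i.T k) (by linarith) (i.symm k hk'.1 hk'.2)
        (i.bdd k hk'.1 hk'.2)
      refine ⟨(i.T k).mkContinuous _ hb, fun _ => ⟨?_, fun m => rfl⟩⟩
      exact MultilinearMap.mkContinuous_norm_le _ (by positivity) _
    · exact ⟨0, fun h => absurd h hk⟩
  choose Tc hTc using hTc
  obtain ⟨Φ, hΦ, hU⟩ := Quadratize.main_induction (ι := Quadratize.Datum L c)
    (E := fun i => EuclideanSpace ℝ (Fin i.d)) (2 * L + 1) Tc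
    (fun k hk => ⟨_, fun i => (hTc k i hk).1⟩) (2 * L - 1)
  obtain ⟨C', hC'0, hC'⟩ := hU.bound
  choose C A hA hA' using hΦ
  have e1 : 2 * L - 1 + 1 = 2 * L := by omega
  have e2 : 2 * L - 1 + 3 = 2 * L + 2 := by omega
  rw [e1, e2] at hC'
  refine ⟨2 * L, ∑ q ∈ Finset.Icc 2 (2 * L), |C q|, C', by omega,
    Finset.sum_nonneg fun _ _ => abs_nonneg _, hC'0, ?_⟩
  intro d T hsym hbdd
  let i : Quadratize.Datum L c := ⟨d, T, hsym, hbdd⟩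
  refine ⟨fun q => Quadratize.symmetrize (A q i).toMultilinearMap, ?_, ?_, ?_⟩
  · intro q _ _ σ m
    exact Quadratize.symmetrize_symm _ σ m
  · intro q hq1 hq2 u hu
    rw [Quadratize.symmetrize_diag]
    have h1 := (A q i).le_opNorm (fun _ => u)
    simp only [hu, Finset.prod_const, one_pow, mul_one] at h1
    refine h1.trans ((hA q i).trans ((le_abs_self _).trans ?_))
    exact Finset.single_le_sum (f := fun q => |C q|) (fun _ _ => abs_nonneg _)
      (Finset.mem_Icc.mpr ⟨hq1, hq2⟩)
  · intro t ht
    have h1 := hC' i t ht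
    have h2 : ∀ q, (Quadratize.symmetrize (A q i).toMultilinearMap fun _ => t) = Φ q i t := by
      intro q
      rw [Quadratize.symmetrize_diag, hA']
      rfl
    simp only [h2]
    rw [Real.norm_eq_abs] at h1
    have h3 : ∀ x : EuclideanSpace ℝ (Fin d), ∑ k ∈ Finset.Icc 3 (2 * L + 1), Tc k i (fun _ => x)
        = ∑ k ∈ Finset.Icc 3 (2 * L + 1), T k (fun _ => x) :=
      fun x => Finset.sum_congr rfl fun k hk => (hTc k i hk).2 _
    rw [h3] at h1
    exact h1
end
end
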